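/- arXiv:0806.4111 — 3 statements merged into one kernel-verified Lean document; each statement's English description precedes it below -/
import Mathlib

section
/- For n ≥ 2 and m ≥ 2, the configuration space F(ℝᵐ, n) of n distinct ordered points in ℝᵐ is (m−2)-connected. -/
/-- `X` is `m`-connected: nonempty and all homotopy groups `π_i` vanish for `i ≤ m`. -/
def IsNConnected (X : Type*) [TopologicalSpace X] (m : ℕ) : Prop :=
  Nonempty X ∧ ∀ i : ℕ, i ≤ m → ∀ x : X, Subsingleton (HomotopyGroup (Fin i) X x)
/-- The configuration space `F(ℝᵐ, n)` of `n` distinct ordered points in Euclidean `m`-space. -/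
noncomputable def Conf (m n : ℕ) : Type :=
  {x : Fin n → EuclideanSpace ℝ (Fin m) // Function.Injective x}

noncomputable instance (m n : ℕ) : TopologicalSpace (Conf m n) :=
  inferInstanceAs (TopologicalSpace {x : Fin n → EuclideanSpace ℝ (Fin m) // Function.Injective x})

/-- The configuration space `F(ℂ, n)` of `n` distinct ordered points in the plane `ℂ`. -/
def ConfC (n : ℕ) : Type :=
  {x : Fin n → ℂ // Function.Injective x}

instance (n : ℕ) : TopologicalSpace (ConfC n) :=
  inferInstanceAs (TopologicalSpace {x : Fin n → ℂ // Function.Injective x})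

/-!
The configurations of distinct points are the complement, in a finite-dimensional space, of the
diagonals `x a = x b`, whose codimension is the dimension of the ambient vector space. In an open
set `U`, every map of a cube that is constant on the boundary is homotopic to a `C¹` one by a short
straight-line homotopy. If the complement of `U` has codimension at least two more than the
dimension of the cube, then the cone over a `C¹` map, pushed in a generic direction by an amount
that vanishes on its boundary, stays in `U`: the directions to be avoided form a countable union of
`C¹` images of spaces of smaller dimension, so they have dense complement.
-/

open Function Set
open Module (finrank)
open scoped Topology unitInterval

section GeneralPosition

variable {E P κ : Type*} {D : κ → Type*}
  [NormedAddCommGroup E] [NormedSpace ℝ E] [FiniteDimensional ℝ E]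
  [NormedAddCommGroup P] [NormedSpace ℝ P] [FiniteDimensional ℝ P]
  [∀ q, NormedAddCommGroup (D q)] [∀ q, NormedSpace ℝ (D q)] [∀ q, FiniteDimensional ℝ (D q)]

theorem dense_compl_iUnion_image_of_finrank_lt [Countable κ] {ψ : ∀ q, D q → E}
    {s : ∀ q, Set (D q)} (hψ : ∀ q, ContDiffOn ℝ 1 (ψ q) (s q)) (hs : ∀ q, Convex ℝ (s q))
    (hdim : ∀ q, finrank ℝ (D q) < finrank ℝ E) :
    Dense (⋃ q, ψ q '' s q)ᶜ := by
  cases isEmpty_or_nonempty κ with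
  | inl _ => simp
  | inr hκ =>
    have hE : finrank ℝ E - 1 < finrank ℝ E := by
      have := hdim hκ.some
      omega
    refine dense_compl_of_dimH_lt_finrank (lt_of_le_of_lt ?_ (Nat.cast_lt.2 hE))
    rw [dimH_iUnion]
    refine iSup_le fun q => ?_
    calc dimH (ψ q '' s q)
        ≤ dimH (univ : Set (D q)) :=
          ((hψ q).dimH_image_le (hs q) subset_rfl).trans (dimH_mono (subset_univ _))
      _ = finrank ℝ (D q) := Real.dimH_univ_eq_finrank _
      _ ≤ (finrank ℝ E - 1 : ℕ) := Nat.cast_le.2 (Nat.le_sub_one_of_lt (hdim q))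

theorem dense_setOf_forall_add_smul_notMem_range [Countable κ] {φ : ∀ q, D q → E}
    (hφ : ∀ q, ContDiff ℝ 1 (φ q)) {s : Set P} (hs : Convex ℝ s) {h : P → E}
    (hh : ContDiffOn ℝ 1 h s) {w : P → ℝ} (hw : ContDiffOn ℝ 1 w s) (hw₀ : ∀ p ∈ s, w p ≠ 0)
    (hdim : ∀ q, finrank ℝ (D q) + finrank ℝ P < finrank ℝ E) :
    Dense {u : E | ∀ p ∈ s, ∀ q, h p + w p • u ∉ range (φ q)} := by
  -- The direction `u` is bad when `h p + w p • u = φ q y`, that is, when `u = ψ q (y, p)`.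
  let ψ (q : κ) (z : D q × P) : E := (w z.2)⁻¹ • (φ q z.1 - h z.2)
  have hψ (q : κ) : ContDiffOn ℝ 1 (ψ q) (univ ×ˢ s) := by
    have hsnd : MapsTo Prod.snd (univ ×ˢ s : Set (D q × P)) s := fun z hz => hz.2
    exact ((hw.comp contDiffOn_snd hsnd).inv fun z hz => hw₀ z.2 hz.2).smul
      (((hφ q).comp contDiff_fst).contDiffOn.sub (hh.comp contDiffOn_snd hsnd))
  refine (dense_compl_iUnion_image_of_finrank_lt hψ (fun _ => convex_univ.prod hs)
    (by simpa using hdim)).mono fun u hu p hp q => ?_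
  rintro ⟨y, hy⟩
  refine hu (mem_iUnion.2 ⟨q, (y, p), ⟨mem_univ y, hp⟩, ?_⟩)
  simp only [ψ, hy, add_sub_cancel_left, inv_smul_smul₀ (hw₀ p hp)]

end GeneralPosition

section Homotopy

theorem homotopicRel_of_forall_mem {X Y : Type*} [TopologicalSpace X] [TopologicalSpace Y]
    {U : Set Y} {f g : C(X, U)} {S : Set X} {H : I × X → Y} (hH : Continuous H)
    (hU : ∀ p, H p ∈ U) (h₀ : ∀ t, H (0, t) = f t) (h₁ : ∀ t, H (1, t) = g t)
    (hS : ∀ s, ∀ t ∈ S, H (s, t) = f t) :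
    f.HomotopicRel g S :=
  ⟨{ toFun := fun p => ⟨H p, hU p⟩
     continuous_toFun := hH.subtype_mk hU
     map_zero_left := fun t => Subtype.ext (h₀ t)
     map_one_left := fun t => Subtype.ext (h₁ t)
     prop' := fun s t ht => Subtype.ext (hS s t ht) }⟩

variable {E : Type*} [NormedAddCommGroup E] [NormedSpace ℝ E] {U : Set E}

theorem exists_pos_forall_dist_lt_homotopicRel {X : Type*} [TopologicalSpace X] [CompactSpace X]
    (hU : IsOpen U) (f : C(X, U)) (S : Set X) :
    ∃ δ > 0, ∀ g : X → E, Continuous g → (∀ t, dist (g t) (f t) < δ) →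
      (∀ t ∈ S, g t = f t) → ∃ g' : C(X, U), (∀ t, (g' t : E) = g t) ∧ f.HomotopicRel g' S := by
  have hf : Continuous fun t => (f t : E) := continuous_subtype_val.comp f.continuous
  obtain ⟨δ, hδ, hδU⟩ := (isCompact_range hf).exists_thickening_subset_open hU
    (range_subset_iff.2 fun t => (f t).2)
  refine ⟨δ, hδ, fun g hg hgf hS => ?_⟩
  have hball (t : X) : Metric.ball (f t : E) δ ⊆ U :=
    (Metric.ball_subset_thickening (mem_range_self t) δ).trans hδU
  refine ⟨⟨fun t => ⟨g t, hball t (hgf t)⟩, hg.subtype_mk _⟩, fun t => rfl, ?_⟩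
  refine homotopicRel_of_forall_mem
    (H := fun p => AffineMap.lineMap (f p.2 : E) (g p.2) (p.1 : ℝ)) ?_ (fun p => ?_)
    (fun t => by simp) (fun t => by simp) (fun s t ht => by simp [hS t ht])
  · simp only [AffineMap.lineMap_apply_module]
    fun_prop
  · exact hball p.2 ((convex_ball _ _).lineMap_mem (Metric.mem_ball_self hδ) (hgf p.2) p.1.2)

theorem exists_contDiff_genLoop_homotopic {N : Type*} [Fintype N] (hU : IsOpen U) {x : U}
    (f : GenLoop N U x) (r : ℕ∞) :
    ∃ (g : (N → ℝ) → E) (f' : GenLoop N U x), ContDiff ℝ r g ∧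
      (∀ t, (f' t : E) = g fun j => t j) ∧ GenLoop.Homotopic f f' := by
  obtain ⟨δ, hδ, hnear⟩ := exists_pos_forall_dist_lt_homotopicRel hU f.1 (Cube.boundary N)
  let F (t : N → ℝ) : E := f fun j => projIcc 0 1 zero_le_one (t j)
  have hF : Continuous F :=
    continuous_subtype_val.comp (f.1.continuous.comp
      (continuous_pi fun j => continuous_projIcc.comp (continuous_apply j)))
  have hFf (t : N → I) : F (fun j => t j) = f t := by simp [F]
  have hfx (t : N → I) (ht : t ∈ Cube.boundary N) : f t = x := f.2 t ht
  -- Approximating `F - x` without enlarging its support keeps the value `x` on the boundary.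
  have hFx : Continuous fun t => F t - x := hF.sub continuous_const
  obtain ⟨g, hg, hgF, hsupp⟩ := hFx.exists_contDiff_approx r continuous_const fun _ => hδ
  obtain ⟨f', hf', hff'⟩ := hnear (fun t => g (fun j => t j) + x)
    (by have := hg.continuous; fun_prop)
    (fun t => by
      have := hgF fun j => t j
      rwa [hFf, ← dist_add_right _ _ (x : E), sub_add_cancel] at this)
    (fun t ht => by
      have : g (fun j => t j) = 0 :=
        notMem_support.1 fun h => hsupp h (by simp [hFf, hfx t ht])
      simp [this, hfx t ht])
  refine ⟨fun t => g t + x, ⟨f', fun t ht => ?_⟩, hg.add contDiff_const, hf', hff'⟩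
  exact (hff'.fst_eq_snd ht).symm.trans (f.2 t ht)

end Homotopy

section PushedCone

variable {N : Type*}

theorem mem_pi_Ioo_of_notMem_boundary {t : N → I} (ht : t ∉ Cube.boundary N) :
    (fun j => (t j : ℝ)) ∈ univ.pi fun _ => Ioo (0 : ℝ) 1 := fun j _ =>
  ⟨unitInterval.pos_iff_ne_zero.2 fun h => ht ⟨j, .inl h⟩,
    unitInterval.lt_one_iff_ne_one.2 fun h => ht ⟨j, .inr h⟩⟩

variable [Fintype N]

/-- The amount by which the point `(s, t)` of the cone over a cube is pushed: a polynomial that is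
positive in the interior of `[0, 1] × [0, 1]^N` and vanishes on its boundary. -/
def coneWeight (p : ℝ × (N → ℝ)) : ℝ :=
  p.1 * (1 - p.1) * ∏ j, p.2 j * (1 - p.2 j)

theorem contDiff_coneWeight {r : WithTop ℕ∞} : ContDiff ℝ r (coneWeight (N := N)) := by
  unfold coneWeight
  fun_prop

theorem coneWeight_pos {p : ℝ × (N → ℝ)} (hp : p ∈ Ioo (0 : ℝ) 1 ×ˢ univ.pi fun _ => Ioo 0 1) :
    0 < coneWeight p :=
  mul_pos (mul_pos hp.1.1 (sub_pos.2 hp.1.2)) <| Finset.prod_pos fun j _ =>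
    mul_pos (hp.2 j (mem_univ j)).1 (sub_pos.2 (hp.2 j (mem_univ j)).2)

theorem coneWeight_eq_zero_of_mem_boundary (s : ℝ) {t : N → I} (ht : t ∈ Cube.boundary N) :
    coneWeight (s, fun j => (t j : ℝ)) = 0 := by
  obtain ⟨j, hj⟩ := ht
  have : (t j : ℝ) * (1 - t j) = 0 := by rcases hj with hj | hj <;> simp [hj]
  exact mul_eq_zero_of_right _ (Finset.prod_eq_zero (Finset.mem_univ j) this)

variable {E : Type*} [NormedAddCommGroup E] [NormedSpace ℝ E]

/-- The straight-line cone with vertex `x` over the map `g`, pushed in the direction `u`. The first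
coordinate of `p` is the cone parameter, which is `0` on the base and `1` at the vertex. -/
def pushedCone (g : (N → ℝ) → E) (x u : E) (p : ℝ × (N → ℝ)) : E :=
  AffineMap.lineMap (g p.2) x p.1 + coneWeight p • u

theorem continuous_pushedCone {g : (N → ℝ) → E} (hg : Continuous g) (x u : E) :
    Continuous (pushedCone g x u) := by
  have := (contDiff_coneWeight (N := N) (r := 0)).continuous
  unfold pushedCone
  fun_prop

theorem pushedCone_zero (g : (N → ℝ) → E) (x u : E) (t : N → ℝ) :
    pushedCone g x u (0, t) = g t := by
  simp [pushedCone, coneWeight]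

theorem pushedCone_one (g : (N → ℝ) → E) (x u : E) (t : N → ℝ) :
    pushedCone g x u (1, t) = x := by
  simp [pushedCone, coneWeight]

theorem pushedCone_eq_of_mem_boundary {g : (N → ℝ) → E} {x : E} (u : E) (s : ℝ) {t : N → I}
    (ht : t ∈ Cube.boundary N) (hgt : g (fun j => t j) = x) :
    pushedCone g x u (s, fun j => t j) = x := by
  simp [pushedCone, coneWeight_eq_zero_of_mem_boundary s ht, hgt]

end PushedCone

section SmallComplement

variable {E κ N : Type*} {D : κ → Type*} [Countable κ] [Fintype N]
  [NormedAddCommGroup E] [NormedSpace ℝ E] [FiniteDimensional ℝ E]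
  [∀ q, NormedAddCommGroup (D q)] [∀ q, NormedSpace ℝ (D q)] [∀ q, FiniteDimensional ℝ (D q)]
  {U : Set E} {φ : ∀ q, D q → E}

theorem exists_forall_pushedCone_mem (hφ : ∀ q, ContDiff ℝ 1 (φ q))
    (hU : Uᶜ ⊆ ⋃ q, range (φ q))
    (hdim : ∀ q, finrank ℝ (D q) + (Fintype.card N + 1) < finrank ℝ E) {x : E} (hx : x ∈ U)
    {g : (N → ℝ) → E} (hg : ContDiff ℝ 1 g) (hgU : ∀ t : N → I, g (fun j => t j) ∈ U)
    (hgx : ∀ t ∈ Cube.boundary N, g (fun j => t j) = x) :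
    ∃ u, ∀ (s : I) (t : N → I), pushedCone g x u (s, fun j => t j) ∈ U := by
  have hcone : ContDiff ℝ 1 fun p : ℝ × (N → ℝ) => AffineMap.lineMap (g p.2) x p.1 := by
    simp only [AffineMap.lineMap_apply_module]
    fun_prop
  obtain ⟨u, hu⟩ := (dense_setOf_forall_add_smul_notMem_range hφ
    ((convex_Ioo 0 1).prod (convex_pi fun (_ : N) _ => convex_Ioo 0 1)) hcone.contDiffOn
    contDiff_coneWeight.contDiffOn (fun p hp => (coneWeight_pos hp).ne')
    (by simpa [add_comm 1] using hdim)).nonempty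
  refine ⟨u, fun s t => ?_⟩
  by_cases ht : t ∈ Cube.boundary N
  · rwa [pushedCone_eq_of_mem_boundary u s ht (hgx t ht)]
  rcases eq_or_ne s 0 with rfl | hs₀
  · simpa only [Icc.coe_zero, pushedCone_zero] using hgU t
  rcases eq_or_ne s 1 with rfl | hs₁
  · simpa only [Icc.coe_one, pushedCone_one] using hx
  by_contra hmem
  obtain ⟨q, hq⟩ := mem_iUnion.1 (hU hmem)
  exact hu _ ⟨⟨unitInterval.pos_iff_ne_zero.2 hs₀, unitInterval.lt_one_iff_ne_one.2 hs₁⟩,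
    mem_pi_Ioo_of_notMem_boundary ht⟩ q hq

theorem genLoop_homotopic_const_of_contDiff (hφ : ∀ q, ContDiff ℝ 1 (φ q))
    (hU : Uᶜ ⊆ ⋃ q, range (φ q))
    (hdim : ∀ q, finrank ℝ (D q) + (Fintype.card N + 1) < finrank ℝ E) {x : U}
    {f : GenLoop N U x} {g : (N → ℝ) → E} (hg : ContDiff ℝ 1 g)
    (hfg : ∀ t, (f t : E) = g fun j => t j) :
    GenLoop.Homotopic f GenLoop.const := by
  have hfx (t : N → I) (ht : t ∈ Cube.boundary N) : f t = x := f.2 t ht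
  have hgx (t : N → I) (ht : t ∈ Cube.boundary N) : g (fun j => t j) = x := by
    rw [← hfg, hfx t ht]
  obtain ⟨u, hu⟩ := exists_forall_pushedCone_mem hφ hU hdim x.2 hg
    (fun t => hfg t ▸ (f t).2) hgx
  refine homotopicRel_of_forall_mem
    (H := fun p => pushedCone g (x : E) u (p.1, fun j => p.2 j)) ?_ (fun p => hu p.1 p.2)
    (fun t => (pushedCone_zero ..).trans (hfg t).symm) (fun t => pushedCone_one ..)
    fun s t ht => ?_
  · exact (continuous_pushedCone hg.continuous x u).comp (by fun_prop)
  · rw [pushedCone_eq_of_mem_boundary u s ht (hgx t ht), GenLoop.coe_coe, hfx t ht]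

theorem subsingleton_homotopyGroup_of_compl_subset_iUnion_range (hUo : IsOpen U)
    (hφ : ∀ q, ContDiff ℝ 1 (φ q)) (hU : Uᶜ ⊆ ⋃ q, range (φ q))
    (hdim : ∀ q, finrank ℝ (D q) + (Fintype.card N + 1) < finrank ℝ E) (x : U) :
    Subsingleton (HomotopyGroup N U x) := by
  have hconst (f : GenLoop N U x) : GenLoop.Homotopic f GenLoop.const := by
    obtain ⟨g, f', hg, hf'g, hff'⟩ := exists_contDiff_genLoop_homotopic hUo f 1
    exact hff'.trans (genLoop_homotopic_const_of_contDiff hφ hU hdim hg hf'g)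
  refine ⟨fun a b => Quotient.inductionOn₂ a b fun f₁ f₂ => Quotient.sound ?_⟩
  exact (hconst f₁).trans (hconst f₂).symm

end SmallComplement

section Configurations

variable {ι V : Type*}

theorem isOpen_setOf_injective [Finite ι] [TopologicalSpace V] [T2Space V] :
    IsOpen {x : ι → V | Injective x} := by
  have : {x : ι → V | Injective x} = ⋂ (a) (b), {x | x a = x b → a = b} := by
    ext x
    simp [Injective]
  rw [this]
  refine isOpen_iInter_of_finite fun a => isOpen_iInter_of_finite fun b => ?_
  by_cases hab : a = b
  · simp [hab]
  · simpa [hab] using isOpen_ne_fun (continuous_apply a) (continuous_apply b)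

/-- The diagonal `x a = x b` in `ι → V`. -/
def pairDiagonal (K V : Type*) [Ring K] [AddCommGroup V] [Module K V] (a b : ι) :
    Submodule K (ι → V) :=
  LinearMap.ker (LinearMap.proj (R := K) (φ := fun _ : ι => V) a - LinearMap.proj b)

theorem compl_setOf_injective (K : Type*) [Ring K] [AddCommGroup V] [Module K V] :
    {x : ι → V | Injective x}ᶜ =
      ⋃ q : {q : ι × ι // q.1 ≠ q.2}, (pairDiagonal K V q.1.1 q.1.2 : Set (ι → V)) := by
  ext x
  simp [pairDiagonal, not_injective_iff, sub_eq_zero, and_comm]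

theorem finrank_pairDiagonal_add_finrank [Finite ι] (K : Type*) [DivisionRing K] [AddCommGroup V]
    [Module K V] [FiniteDimensional K V] {a b : ι} (hab : a ≠ b) :
    finrank K (pairDiagonal K V a b) + finrank K V = finrank K (ι → V) := by
  classical
  let δ : (ι → V) →ₗ[K] V :=
    LinearMap.proj (R := K) (φ := fun _ : ι => V) a - LinearMap.proj b
  have hδ : LinearMap.range δ = ⊤ :=
    LinearMap.range_eq_top.2 fun v => ⟨Pi.single a v, by simp [δ, hab.symm]⟩
  rw [← finrank_top K V, ← hδ, add_comm]
  exact δ.finrank_range_add_finrank_ker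

theorem conf_is_connected_general [Finite ι] [NormedAddCommGroup V] [NormedSpace ℝ V]
    {k : ℕ} (hk : k + 2 ≤ finrank ℝ V) :
    IsNConnected {x : ι → V // Injective x} k := by
  have : FiniteDimensional ℝ V := .of_finrank_pos (by omega)
  have : Nontrivial V := Module.nontrivial_of_finrank_pos (R := ℝ) (by omega)
  have : Infinite V := Module.Free.infinite ℝ V
  have := Fintype.ofFinite ι
  obtain ⟨e, he⟩ := Countable.exists_injective_nat ι
  refine ⟨⟨Infinite.natEmbedding V ∘ e, (Infinite.natEmbedding V).injective.comp he⟩,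
    fun i hi x => ?_⟩
  refine subsingleton_homotopyGroup_of_compl_subset_iUnion_range
    (φ := fun (q : {q : ι × ι // q.1 ≠ q.2}) (y : pairDiagonal ℝ V q.1.1 q.1.2) => (y : ι → V))
    isOpen_setOf_injective (fun q => (pairDiagonal ℝ V q.1.1 q.1.2).subtypeL.contDiff)
    (by simp [compl_setOf_injective ℝ]) (fun q => ?_) x
  rw [← finrank_pairDiagonal_add_finrank ℝ q.2, Fintype.card_fin]
  omega

end Configurations

/-- for `n ≥ 2` and `m ≥ 2`, the configuration space `F(ℝᵐ, n)` is
`(m - 2)`-connected. -/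
theorem conf_is_connected (m n : ℕ) (hm : 2 ≤ m) (hn : 2 ≤ n) :
    IsNConnected (Conf m n) (m - 2) :=
  conf_is_connected_general (by rw [finrank_euclideanSpace_fin]; omega)
end

section
/- For n ≥ 2, the configuration space F(ℂ, n) of n distinct ordered points in the plane is homotopy equivalent to X × S¹ for some finite polyhedron X of dimension at most n − 2. -/
/-!
Rotating `z i₁ - z i₀` onto the positive real axis splits a circle off the configuration space and
leaves the normalized configurations. These are covered by convex cells, indexed by a finite poset
of combinatorial types: a weak ordering of the points by real part, together with the vertical order
of the points in each column. The number of cuts in the weak ordering is strictly increasing in the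
type and lies between `1` and `n - 1`, so chains of types have at most `n - 1` elements.

The order complex of this poset is the polyhedron. A chain of types is mapped affinely to
configurations through a chosen apex in every cell. In the other direction, a configuration has a
type at every scale `ε`, where gaps between real parts are ignored unless they exceed `ε`, and
coarser scales give smaller types; the barycentric coordinate of a type is the proportion of the
scales at which it is seen. Affine combinations of apices along a chain show only types of that
chain, so both composites are homotopic to the identity along straight lines.
-/

open MeasureTheory Filter Topology unitInterval ContinuousMap

section Realization

variable {V E : Type*} [AddCommGroup E] [Module ℝ E]

open Classical in
/-- The geometric simplicial complex with the combinatorics of `K` whose vertices are the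
vectors of the basis `b`. -/
noncomputable def simplicialComplexOfBasis (K : PreAbstractSimplicialComplex V)
    (b : Module.Basis V ℝ E) : Geometry.SimplicialComplex ℝ E :=
  .ofAffineIndependent (K.map b) <| b.linearIndependent.affineIndependent.range.mono <| by
    simp [PreAbstractSimplicialComplex.map]

open Classical in
theorem mem_faces_simplicialComplexOfBasis {K : PreAbstractSimplicialComplex V}
    {b : Module.Basis V ℝ E} {t : Finset E} :
    t ∈ (simplicialComplexOfBasis K b).faces ↔ ∃ s ∈ K.faces, s.image b = t :=
  Iff.rfl

theorem card_le_of_mem_faces_simplicialComplexOfBasis {K : PreAbstractSimplicialComplex V}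
    {b : Module.Basis V ℝ E} {m : ℕ} (hK : ∀ s ∈ K.faces, s.card ≤ m) {t : Finset E}
    (ht : t ∈ (simplicialComplexOfBasis K b).faces) : t.card ≤ m := by
  classical
  obtain ⟨s, hs, rfl⟩ := mem_faces_simplicialComplexOfBasis.1 ht
  exact Finset.card_image_le.trans (hK s hs)

theorem finite_faces_simplicialComplexOfBasis [Finite V]
    (K : PreAbstractSimplicialComplex V) (b : Module.Basis V ℝ E) :
    (simplicialComplexOfBasis K b).faces.Finite := by
  classical
  refine (K.faces.toFinite.image (Finset.image b)).subset fun t ht => ?_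
  exact mem_faces_simplicialComplexOfBasis.1 ht

variable [Fintype V]

/-- The geometric realization of an abstract simplicial complex on the vertex set `V`, as the set
of barycentric coordinates `V → ℝ` supported on a face. -/
def realization (K : PreAbstractSimplicialComplex V) : Set (V → ℝ) :=
  {w ∈ stdSimplex ℝ V | ∃ s ∈ K.faces, Function.support w ⊆ s}

theorem mem_convexHull_image_basis_iff (b : Module.Basis V ℝ E) (s : Set V) (x : E) :
    x ∈ convexHull ℝ (b '' s) ↔
      b.equivFun x ∈ stdSimplex ℝ V ∧ Function.support (b.equivFun x) ⊆ s := by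
  classical
  constructor
  · have hconvex : Convex ℝ {w ∈ stdSimplex ℝ V | Function.support w ⊆ s} := by
      refine (convex_stdSimplex ℝ V).inter fun v hv w hw a c _ _ _ i hi => ?_
      by_contra his
      have hv0 : v i = 0 := Function.notMem_support.1 fun h => his (hv h)
      have hw0 : w i = 0 := Function.notMem_support.1 fun h => his (hw h)
      simp [hv0, hw0] at hi
    refine fun hx => convexHull_min ?_ (hconvex.linear_preimage b.equivFun.toLinearMap) hx
    rintro _ ⟨i, hi, rfl⟩
    refine ⟨?_, ?_⟩
    · simpa [Finsupp.single_eq_pi_single] using single_mem_stdSimplex ℝ i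
    · intro j hj
      obtain rfl : i = j := by_contra fun hij => hj (by simp [hij])
      exact hi
  · rintro ⟨⟨hnonneg, hsum⟩, hsupp⟩
    have hsum_s : ∑ i with i ∈ s, b.equivFun x i = 1 := by
      rw [← hsum]
      exact Finset.sum_filter_of_ne fun i _ hi => hsupp hi
    have hx : ∑ i with i ∈ s, b.equivFun x i • b i = x := by
      rw [Finset.sum_filter_of_ne fun i _ hi => hsupp (left_ne_zero_of_smul hi),
        b.sum_equivFun]
    rw [← hx]
    exact (convex_convexHull ℝ _).sum_mem (fun i _ => hnonneg i) hsum_s fun i hi =>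
      subset_convexHull ℝ _ ⟨i, (Finset.mem_filter.1 hi).2, rfl⟩

theorem mem_space_simplicialComplexOfBasis {K : PreAbstractSimplicialComplex V}
    {b : Module.Basis V ℝ E} {x : E} :
    x ∈ (simplicialComplexOfBasis K b).space ↔ b.equivFun x ∈ realization K := by
  classical
  simp only [Geometry.SimplicialComplex.mem_space_iff, mem_faces_simplicialComplexOfBasis,
    exists_exists_and_eq_and, Finset.coe_image, mem_convexHull_image_basis_iff, realization,
    Set.mem_ofPred_eq]
  tauto

/-- Passing to barycentric coordinates identifies the space of the geometric complex with the
realization of `K`. -/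
noncomputable def simplicialComplexOfBasisHomeomorph [TopologicalSpace E]
    [IsTopologicalAddGroup E] [ContinuousSMul ℝ E] [T2Space E]
    (K : PreAbstractSimplicialComplex V) (b : Module.Basis V ℝ E) :
    (simplicialComplexOfBasis K b).space ≃ₜ realization K :=
  b.equivFunL.toHomeomorph.subtype fun _ => mem_space_simplicialComplexOfBasis

theorem exists_simplicialComplex_homeomorph_realization (K : PreAbstractSimplicialComplex V)
    {m : ℕ} (hK : ∀ s ∈ K.faces, s.card ≤ m) :
    ∃ (N : ℕ) (L : Geometry.SimplicialComplex ℝ (EuclideanSpace ℝ (Fin N))),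
      L.faces.Finite ∧ (∀ s ∈ L.faces, s.card ≤ m) ∧ Nonempty (L.space ≃ₜ realization K) :=
  let b := (EuclideanSpace.basisFun (Fin (Fintype.card V)) ℝ).toBasis.reindex
    (Fintype.equivFin V).symm
  ⟨_, simplicialComplexOfBasis K b, finite_faces_simplicialComplexOfBasis K b,
    fun _ => card_le_of_mem_faces_simplicialComplexOfBasis hK,
    ⟨simplicialComplexOfBasisHomeomorph K b⟩⟩

end Realization

section StraightLine

variable {E Y : Type*} [AddCommGroup E] [Module ℝ E] [TopologicalSpace E]
  [IsTopologicalAddGroup E] [ContinuousSMul ℝ E] [TopologicalSpace Y]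

theorem homotopic_of_segment_subset {X : Set E} {f g : C(Y, X)}
    (h : ∀ y, segment ℝ (f y : E) (g y) ⊆ X) : f.Homotopic g := by
  let F := ContinuousMap.Homotopy.affine (.comp ⟨_, continuous_subtype_val⟩ f)
    (.comp ⟨_, continuous_subtype_val⟩ g)
  have hF (x : unitInterval × Y) : F x ∈ X := by
    refine h x.2 ?_
    rw [segment_eq_image_lineMap]
    exact ⟨x.1, x.1.2, by simp [F]⟩
  exact ⟨⟨⟨fun x => ⟨F x, hF x⟩, F.continuous.subtype_mk hF⟩,
    fun y => Subtype.ext (F.map_zero_left y), fun y => Subtype.ext (F.map_one_left y)⟩⟩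

end StraightLine

section OrderComplex

variable {P : Type*} [PartialOrder P]

/-- The order complex of a partial order: its faces are the nonempty finite chains. -/
def orderComplex (P : Type*) [PartialOrder P] : PreAbstractSimplicialComplex P where
  faces := {s | s.Nonempty ∧ IsChain (· ≤ ·) (s : Set P)}
  isRelLowerSet_faces := fun _ hs => ⟨hs.1, fun _ hts ht => ⟨ht, hs.2.mono hts⟩⟩

variable [Fintype P] {w : P → ℝ}

theorem mem_realization_orderComplex :
    w ∈ realization (orderComplex P) ↔
      w ∈ stdSimplex ℝ P ∧ IsChain (· ≤ ·) (Function.support w) := by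
  refine and_congr_right fun hw => ⟨fun ⟨s, hs, hws⟩ => hs.2.mono hws, fun hchain => ?_⟩
  have hfin := (Function.support w).toFinite
  refine ⟨hfin.toFinset, ⟨?_, by simpa using hchain⟩, by simp⟩
  obtain ⟨p, -, hp⟩ := Finset.exists_ne_zero_of_sum_ne_zero (hw.2.trans_ne one_ne_zero)
  exact ⟨p, by simpa using hp⟩

theorem segment_subset_realization_orderComplex {v : P → ℝ} (hv : v ∈ stdSimplex ℝ P)
    (hw : w ∈ realization (orderComplex P)) (h : Function.support v ⊆ Function.support w) :
    segment ℝ v w ⊆ realization (orderComplex P) := by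
  rw [mem_realization_orderComplex] at hw
  intro u hu
  refine mem_realization_orderComplex.2
    ⟨(convex_stdSimplex ℝ P).segment_subset hv hw.1 hu, hw.2.mono fun p hp => ?_⟩
  obtain ⟨a, b, -, -, -, rfl⟩ := hu
  by_contra hwp
  have hvp : v p = 0 := Function.notMem_support.1 fun hvp => hwp (h hvp)
  exact hp (by simp [hvp, Function.notMem_support.1 hwp])

theorem exists_isGreatest_support (hw : w ∈ realization (orderComplex P)) :
    ∃ q, IsGreatest (Function.support w) q := by
  obtain ⟨⟨-, hsum⟩, hchain⟩ := mem_realization_orderComplex.1 hw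
  obtain ⟨p, -, hp⟩ := Finset.exists_ne_zero_of_sum_ne_zero (hsum.trans_ne one_ne_zero)
  obtain ⟨q, hq⟩ := (Function.support w).toFinite.exists_maximal ⟨p, hp⟩
  refine ⟨q, hq.1, fun r hr => ?_⟩
  exact (hchain.total hr hq.1).elim id (hq.2 hr)

theorem exists_mem_support_sum_le_sum_Ici [DecidableLE P]
    (hw : w ∈ realization (orderComplex P)) {s : Finset P} (hs : 0 < ∑ p ∈ s, w p) :
    ∃ r ∈ s, r ∈ Function.support w ∧ ∑ p ∈ s, w p ≤ ∑ p with r ≤ p, w p := by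
  obtain ⟨⟨hnonneg, -⟩, hchain⟩ := mem_realization_orderComplex.1 hw
  obtain ⟨p, hps, hp⟩ := Finset.exists_ne_zero_of_sum_ne_zero hs.ne'
  obtain ⟨r, ⟨hrs, hr⟩, hmin⟩ :=
    ((s : Set P) ∩ Function.support w).toFinite.exists_minimal ⟨p, hps, hp⟩
  refine ⟨r, hrs, hr, ?_⟩
  rw [← Finset.sum_filter_ne_zero]
  refine Finset.sum_le_sum_of_subset_of_nonneg (fun p hp => ?_) fun p _ _ => hnonneg p
  obtain ⟨hps, hp⟩ := Finset.mem_filter.1 hp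
  have hrp : r ≤ p := (hchain.total hr hp).elim id (hmin ⟨hps, hp⟩)
  simpa using hrp

theorem exists_mem_support_sum_le_lt [DecidableLE P] [DecidableLT P]
    (hw : w ∈ realization (orderComplex P)) {ε : ℝ} (hε : 0 ≤ ε) (hε1 : ε < 1) :
    ∃ r ∈ Function.support w, ∑ p with r < p, w p ≤ ε ∧ ε < ∑ p with r ≤ p, w p := by
  have hsum : ∑ p, w p = 1 := (mem_realization_orderComplex.1 hw).1.2
  have hne : {r ∈ Function.support w | ε < ∑ p with r ≤ p, w p}.Nonempty := by
    obtain ⟨r, -, hr, hle⟩ :=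
      exists_mem_support_sum_le_sum_Ici hw (hsum.symm ▸ one_pos : 0 < ∑ p, w p)
    exact ⟨r, hr, hε1.trans_le (hsum ▸ hle)⟩
  obtain ⟨r, ⟨hr, hlt⟩, hmax⟩ := Set.Finite.exists_maximal (Set.toFinite _) hne
  refine ⟨r, hr, not_lt.1 fun hgt => ?_, hlt⟩
  obtain ⟨r', hrr', hr', hle⟩ := exists_mem_support_sum_le_sum_Ici hw (hε.trans_lt hgt)
  have hrr' : r < r' := by simpa using hrr'
  exact hrr'.not_ge (hmax ⟨hr', hgt.trans_le hle⟩ hrr'.le)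

end OrderComplex

section ScaleStratification

variable {E : Type*} [AddCommGroup E] [Module ℝ E] [TopologicalSpace E]

theorem sum_smul_mem_of_openSegment_subset {ι E : Type*} [Fintype ι] [AddCommGroup E] [Module ℝ E]
    {s : Set E} (hs : Convex ℝ s) {w : ι → ℝ} (hw : w ∈ stdSimplex ℝ ι) {x : ι → E} {j : ι}
    (hj : w j ≠ 0) (h : ∀ i, w i ≠ 0 → openSegment ℝ (x i) (x j) ⊆ s) :
    ∑ i, w i • x i ∈ s := by
  classical
  -- Half of the weight of `x j` is used to push every other point towards `x j`.
  set θ : ℝ := w j / 2 with hθ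
  have hwj : 0 < w j := (hw.1 j).lt_of_ne' hj
  have hwj1 : w j ≤ 1 := hw.2 ▸ Finset.single_le_sum (fun i _ => hw.1 i) (Finset.mem_univ j)
  have hθ1 : 0 < 1 - θ := by linarith
  let v (i : ι) : ℝ := (1 - θ)⁻¹ * (w i - if i = j then θ else 0)
  have hv (i : ι) : v i * (1 - θ) = w i - if i = j then θ else 0 := by simp [v, hθ1.ne', mul_comm]
  have hv_nonneg (i : ι) : 0 ≤ v i := by
    refine mul_nonneg (inv_nonneg.2 hθ1.le) ?_
    split_ifs with hij
    · rw [hij]; linarith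
    · simpa using hw.1 i
  have hv_sum : ∑ i, v i = 1 := by
    rw [← mul_left_inj' hθ1.ne', Finset.sum_mul]
    simp [hv, hw.2]
  have hv_supp (i : ι) (hi : v i ≠ 0) : w i ≠ 0 := by
    rintro hwi
    have hij : i ≠ j := by rintro rfl; exact hj hwi
    simp [v, hwi, hij] at hi
  have hw_eq : ∑ i, w i • x i = ∑ i, v i • ((1 - θ) • x i + θ • x j) := by
    simp_rw [smul_add, Finset.sum_add_distrib, ← Finset.sum_smul, hv_sum, smul_smul, hv, sub_smul,
      Finset.sum_sub_distrib]
    simp [ite_smul]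
  rw [hw_eq, ← finsum_eq_sum_of_fintype]
  refine hs.finsum_mem hv_nonneg (by rwa [finsum_eq_sum_of_fintype]) fun i hi => ?_
  exact h i (hv_supp i hi) ⟨1 - θ, θ, hθ1, by linarith, by ring, rfl⟩

/-- Data presenting a subset `X` of a vector space as the order complex of `P` up to homotopy:
convex strata covering `X`, an apex for each stratum, and the type in `P` at which a point is seen
at every scale `t : I`; at scale `0` this is the index of a stratum containing the point, and
coarser scales see smaller types. The last field says that if an affine combination of apices along
a chain lies in `X`, then only types of that chain are seen from it. -/
structure ScaleStratification (X : Set E) (P : Type*) [PartialOrder P] [Fintype P] where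
  stratum : P → Set E
  convex_stratum : ∀ p, Convex ℝ (stratum p)
  stratum_subset : ∀ p, stratum p ⊆ X
  apex : P → E
  openSegment_apex_subset : ∀ {p q}, p ≤ q → openSegment ℝ (apex p) (apex q) ⊆ stratum q
  typeAt : I → X → P
  antitone_typeAt : ∀ z, Antitone (typeAt · z)
  mem_stratum_typeAt_zero : ∀ z : X, (z : E) ∈ stratum (typeAt 0 z)
  eventually_typeAt_eq_zero : ∀ z, ∀ᶠ t in 𝓝 0, typeAt t z = typeAt 0 z
  ae_eventually_typeAt_eq : ∀ z, ∀ᵐ t, ∀ᶠ z' in 𝓝 z, typeAt t z' = typeAt t z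
  apply_typeAt_ne_zero : ∀ w ∈ realization (orderComplex P), ∀ (h : ∑ p, w p • apex p ∈ X) (t : I),
    w (typeAt t ⟨_, h⟩) ≠ 0

namespace ScaleStratification

variable {P : Type*} [PartialOrder P] [Fintype P] {X : Set E} (S : ScaleStratification X P)

/-- The proportion of the scales at which a point is seen as being of type `p`. -/
noncomputable def weights (z : X) (p : P) : ℝ := volume.real ((S.typeAt · z) ⁻¹' {p})

theorem measurableSet_typeAt_preimage (z : X) (p : P) :
    MeasurableSet ((S.typeAt · z) ⁻¹' {p}) :=
  (Set.ordConnected_singleton.preimage_anti (S.antitone_typeAt z)).measurableSet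

theorem exists_typeAt_eq_of_mem_support_weights {z : X} {p : P}
    (hp : p ∈ Function.support (S.weights z)) : ∃ t, S.typeAt t z = p := by
  by_contra! h
  have hempty : (S.typeAt · z) ⁻¹' {p} = ∅ := Set.eq_empty_of_forall_notMem h
  exact hp (by simp [weights, hempty])

theorem weights_mem_realization (z : X) : S.weights z ∈ realization (orderComplex P) := by
  refine mem_realization_orderComplex.2 ⟨⟨fun p => measureReal_nonneg, ?_⟩, fun p hp q hq _ => ?_⟩
  · simpa [weights] using sum_measureReal_preimage_singleton (μ := volume) Finset.univ
      fun p _ => S.measurableSet_typeAt_preimage z p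
  · obtain ⟨s, rfl⟩ := S.exists_typeAt_eq_of_mem_support_weights hp
    obtain ⟨t, rfl⟩ := S.exists_typeAt_eq_of_mem_support_weights hq
    exact (le_total t s).imp (S.antitone_typeAt z ·) (S.antitone_typeAt z ·)

theorem isGreatest_support_weights (z : X) :
    IsGreatest (Function.support (S.weights z)) (S.typeAt 0 z) := by
  refine ⟨?_, fun p hp => ?_⟩
  · obtain ⟨t, ht, hIco⟩ := exists_Ico_subset_of_mem_nhds (S.eventually_typeAt_eq_zero z)
      ⟨1, zero_lt_one⟩
    have hpos : 0 < volume (Set.Ico 0 t) := by simpa [volume_Ico] using ht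
    exact (measureReal_ne_zero_iff).2 (hpos.trans_le (measure_mono hIco)).ne'
  · obtain ⟨t, rfl⟩ := S.exists_typeAt_eq_of_mem_support_weights hp
    exact S.antitone_typeAt z t.2.1

theorem continuous_weights [FirstCountableTopology E] : Continuous S.weights := by
  refine continuous_pi fun p => continuous_iff_continuousAt.2 fun z => ?_
  refine (ENNReal.tendsto_toReal (measure_ne_top _ _)).comp ?_
  refine tendsto_measure_of_ae_tendsto_indicator_of_isFiniteMeasure _
    (S.measurableSet_typeAt_preimage z p) (fun z' => S.measurableSet_typeAt_preimage z' p) ?_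
  filter_upwards [S.ae_eventually_typeAt_eq z] with t ht
  filter_upwards [ht] with z' hz'
  simp [hz']

theorem sum_smul_apex_mem_stratum {w : P → ℝ} (hw : w ∈ stdSimplex ℝ P) {q : P}
    (hq : IsGreatest (Function.support w) q) : ∑ p, w p • S.apex p ∈ S.stratum q :=
  sum_smul_mem_of_openSegment_subset (S.convex_stratum q) hw hq.1 fun _ hp =>
    S.openSegment_apex_subset (hq.2 hp)

theorem sum_smul_apex_mem {w : P → ℝ} (hw : w ∈ realization (orderComplex P)) :
    ∑ p, w p • S.apex p ∈ X := by
  obtain ⟨q, hq⟩ := exists_isGreatest_support hw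
  exact S.stratum_subset q
    (S.sum_smul_apex_mem_stratum (mem_realization_orderComplex.1 hw).1 hq)

variable [FirstCountableTopology E] [IsTopologicalAddGroup E] [ContinuousSMul ℝ E]

/-- The map from `X` to the order complex recording how the scales are shared among the types. -/
noncomputable def toOrderComplex : C(X, realization (orderComplex P)) :=
  ⟨fun z => ⟨S.weights z, S.weights_mem_realization z⟩, S.continuous_weights.subtype_mk _⟩

/-- The map from the order complex to `X` that is affine on simplices and sends each vertex to its
apex. -/
noncomputable def ofOrderComplex : C(realization (orderComplex P), X) :=
  ⟨fun w => ⟨∑ p, (w : P → ℝ) p • S.apex p, S.sum_smul_apex_mem w.2⟩,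
    .subtype_mk (continuous_finsetSum _ fun p _ =>
      ((continuous_apply p).comp continuous_subtype_val).smul continuous_const) _⟩

theorem ofOrderComplex_comp_toOrderComplex_homotopic :
    (S.ofOrderComplex.comp S.toOrderComplex).Homotopic (.id X) := by
  refine homotopic_of_segment_subset fun z => ?_
  have hz := (mem_realization_orderComplex.1 (S.weights_mem_realization z)).1
  exact ((S.convex_stratum _).segment_subset
    (S.sum_smul_apex_mem_stratum hz (S.isGreatest_support_weights z))
    (S.mem_stratum_typeAt_zero z)).trans (S.stratum_subset _)

theorem toOrderComplex_comp_ofOrderComplex_homotopic :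
    (S.toOrderComplex.comp S.ofOrderComplex).Homotopic (.id (realization (orderComplex P))) := by
  refine homotopic_of_segment_subset fun w => ?_
  refine segment_subset_realization_orderComplex
    (mem_realization_orderComplex.1 (S.weights_mem_realization _)).1 w.2 fun p hp => ?_
  obtain ⟨t, rfl⟩ := S.exists_typeAt_eq_of_mem_support_weights hp
  exact S.apply_typeAt_ne_zero w w.2 (S.sum_smul_apex_mem w.2) t

/-- Both homotopies are straight lines: within one stratum of `X`, and within one simplex of the
order complex. -/
noncomputable def homotopyEquivOrderComplex : X ≃ₕ realization (orderComplex P) where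
  toFun := S.toOrderComplex
  invFun := S.ofOrderComplex
  left_inv := S.ofOrderComplex_comp_toOrderComplex_homotopic
  right_inv := S.toOrderComplex_comp_ofOrderComplex_homotopic

end ScaleStratification

end ScaleStratification

section Flags

theorem card_le_sub_one_of_isChain {α : Type*} [PartialOrder α] {c : Finset α}
    (hc : IsChain (· ≤ ·) (c : Set α)) {f : α → ℕ} (hf : StrictMono f) {n : ℕ}
    (h : ∀ a ∈ c, f a ∈ Finset.Ioo 0 n) : c.card ≤ n - 1 := by
  have hinj : Set.InjOn f c := fun a ha b hb hab => by
    rcases hc.total ha hb with hle | hle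
    · exact hle.eq_of_not_lt fun hlt => (hf hlt).ne hab
    · exact (hle.eq_of_not_lt fun hlt => (hf hlt).ne' hab).symm
  simpa using Finset.card_le_card_of_injOn f h hinj

variable {ι : Type*}

/-- `Separated L i j` says that some member of `L` cuts `i` off below `j`. -/
def Separated (L : Finset (Finset ι)) (i j : ι) : Prop :=
  ∃ A ∈ L, i ∈ A ∧ j ∉ A

theorem Separated.mono {L M : Finset (Finset ι)} (h : L ⊆ M) {i j : ι} :
    Separated L i j → Separated M i j :=
  fun ⟨A, hA, hij⟩ => ⟨A, h hA, hij⟩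

open Classical in
/-- The position of `i` when consecutive blocks of the weak ordering given by the flag `L` are
placed at distance `m A` across each `A ∈ L`. -/
noncomputable def flagHeight (L : Finset (Finset ι)) (m : Finset ι → ℝ) (i : ι) : ℝ :=
  ∑ A ∈ L with i ∉ A, m A

theorem flagHeight_le_of_not_separated {L : Finset (Finset ι)} {m : Finset ι → ℝ}
    (hm : ∀ A ∈ L, 0 ≤ m A) {i j : ι} (h : ¬Separated L i j) :
    flagHeight L m j ≤ flagHeight L m i := by
  classical
  refine Finset.sum_le_sum_of_subset_of_nonneg (fun A hA => ?_)
    fun A hA _ => hm A (Finset.mem_filter.1 hA).1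
  obtain ⟨hAL, hj⟩ := Finset.mem_filter.1 hA
  exact Finset.mem_filter.2 ⟨hAL, fun hi => h ⟨A, hAL, hi, hj⟩⟩

open Classical in
theorem sum_mul_flagHeight_one {κ : Type*} [Fintype κ] {w : κ → ℝ} {F : κ → Finset (Finset ι)}
    {L : Finset (Finset ι)} (h : ∀ k, w k ≠ 0 → F k ⊆ L) (i : ι) :
    ∑ k, w k * flagHeight (F k) 1 i = flagHeight L (fun A => ∑ k with A ∈ F k, w k) i := by
  have hheight (k : κ) :
      w k * flagHeight (F k) 1 i = ∑ A ∈ L with i ∉ A, if A ∈ F k then w k else 0 := by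
    by_cases hk : w k = 0
    · simp [hk]
    have hF : {A ∈ L | i ∉ A ∧ A ∈ F k} = {A ∈ F k | i ∉ A} := by grind
    rw [← Finset.sum_filter, Finset.filter_filter, hF, flagHeight, Finset.mul_sum]
    simp
  simp only [hheight]
  rw [Finset.sum_comm]
  exact Finset.sum_congr rfl fun A _ => (Finset.sum_filter _ _).symm

variable [Fintype ι]

/-- A flag of nonempty proper subsets of `ι`, the combinatorial form of a weak ordering of `ι`:
its members are the initial segments. -/
structure IsFlag (L : Finset (Finset ι)) : Prop where
  isChain : IsChain (· ⊆ ·) (L : Set (Finset ι))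
  nonempty : ∀ A ∈ L, A.Nonempty
  ne_univ : ∀ A ∈ L, A ≠ Finset.univ

theorem IsFlag.not_separated {L : Finset (Finset ι)} (hL : IsFlag L) {i j : ι}
    (h : Separated L i j) : ¬Separated L j i := by
  obtain ⟨A, hA, hiA, hjA⟩ := h
  rintro ⟨B, hB, hjB, hiB⟩
  exact (hL.isChain.total hA hB).elim (fun hAB => hiB (hAB hiA)) fun hBA => hjA (hBA hjB)

theorem IsFlag.card_le {L : Finset (Finset ι)} (hL : IsFlag L) : L.card ≤ Fintype.card ι - 1 := by
  refine card_le_sub_one_of_isChain hL.isChain Finset.card_strictMono fun A hA => ?_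
  exact Finset.mem_Ioo.2 ⟨(hL.nonempty A hA).card_pos,
    (Finset.card_lt_iff_ne_univ A).2 (hL.ne_univ A hA)⟩

open Classical in
/-- The initial segments of `ι` that `x` places more than `ε` below their complements. -/
noncomputable def cuts (ε : ℝ) (x : ι → ℝ) : Finset (Finset ι) :=
  {A | A.Nonempty ∧ A ≠ Finset.univ ∧ ∀ a ∈ A, ∀ b ∉ A, x a + ε < x b}

variable {ε : ℝ} {x : ι → ℝ}

theorem mem_cuts {A : Finset ι} :
    A ∈ cuts ε x ↔ A.Nonempty ∧ A ≠ Finset.univ ∧ ∀ a ∈ A, ∀ b ∉ A, x a + ε < x b := by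
  simp [cuts]

theorem cuts_antitone (x : ι → ℝ) : Antitone (cuts · x) := by
  intro ε ε' hε A hA
  rw [mem_cuts] at hA ⊢
  exact ⟨hA.1, hA.2.1, fun a ha b hb => by linarith [hA.2.2 a ha b hb]⟩

theorem cuts_congr {ε' : ℝ} {x' : ι → ℝ}
    (h : ∀ a b, x a + ε < x b ↔ x' a + ε' < x' b) : cuts ε x = cuts ε' x' := by
  ext A
  simp only [mem_cuts, h]

theorem isFlag_cuts (hε : 0 ≤ ε) (x : ι → ℝ) : IsFlag (cuts ε x) where
  isChain A hA B hB _ := by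
    by_contra! h
    obtain ⟨⟨a, haA, haB⟩, b, hbB, hbA⟩ := h.imp Finset.not_subset.1 Finset.not_subset.1
    linarith [(mem_cuts.1 hA).2.2 a haA b hbA, (mem_cuts.1 hB).2.2 b hbB a haB]
  nonempty A hA := (mem_cuts.1 hA).1
  ne_univ A hA := (mem_cuts.1 hA).2.1

theorem Separated.add_lt {i j : ι} (h : Separated (cuts ε x) i j) : x i + ε < x j := by
  obtain ⟨A, hA, hi, hj⟩ := h
  exact (mem_cuts.1 hA).2.2 i hi j hj

-- Otherwise the sublevel sets at the heights `x i + k * ε` are not cuts, so each of these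
-- `card ι + 1` sets contains a point that is not in the previous one.
theorem sub_le_of_not_separated_cuts (hε : 0 ≤ ε) {i j : ι} (h : ¬Separated (cuts ε x) i j) :
    x j - x i ≤ Fintype.card ι * ε := by
  by_contra! hlt
  let S (k : ℕ) : Finset ι := {a | x a ≤ x i + k * ε}
  have mem_S {k : ℕ} {a : ι} : a ∈ S k ↔ x a ≤ x i + k * ε := by simp [S]
  have hiS (k : ℕ) : i ∈ S k := mem_S.2 (le_add_of_nonneg_right (by positivity))
  have hjS {k : ℕ} (hk : k ≤ Fintype.card ι) : j ∉ S k := by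
    have hkε : k * ε ≤ Fintype.card ι * ε := by gcongr
    rw [mem_S]
    linarith
  have hgrow {k : ℕ} (hk : k ≤ Fintype.card ι) : S k ⊂ S (k + 1) := by
    have hnot : S k ∉ cuts ε x := fun hS => h ⟨S k, hS, hiS k, hjS hk⟩
    have hne : S k ≠ Finset.univ := fun hS => hjS hk (hS ▸ Finset.mem_univ j)
    simp only [mem_cuts, not_and, not_forall, not_lt] at hnot
    obtain ⟨a, ha, b, hb, hba⟩ := hnot ⟨i, hiS k⟩ hne
    have hstep (c : ι) (hc : x c ≤ x i + k * ε + ε) : c ∈ S (k + 1) :=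
      mem_S.2 (by push_cast; linarith)
    refine Finset.ssubset_iff_subset_ne.2 ⟨fun c hc => hstep c ?_, fun hS => hb (hS ▸ hstep b ?_)⟩
    · linarith [mem_S.1 hc]
    · linarith [mem_S.1 ha]
  have hcard (k : ℕ) (hk : k ≤ Fintype.card ι) : k < (S k).card := by
    induction k with
    | zero => exact Finset.card_pos.2 ⟨i, hiS 0⟩
    | succ k ih =>
      have hk' : k ≤ Fintype.card ι := k.le_succ.trans hk
      exact (Nat.succ_le_of_lt (ih hk')).trans_lt (Finset.card_lt_card (hgrow hk'))
  exact (hcard _ le_rfl).not_ge (Finset.card_le_univ _)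

theorem separated_cuts_zero_iff {i j : ι} : Separated (cuts 0 x) i j ↔ x i < x j := by
  refine ⟨fun h => by simpa using h.add_lt, fun h => ?_⟩
  by_contra hsep
  linarith [sub_le_of_not_separated_cuts le_rfl hsep]

open Classical in
theorem IsFlag.flagHeight_sub_flagHeight {L : Finset (Finset ι)} (hL : IsFlag L)
    (m : Finset ι → ℝ) {i j : ι} (h : Separated L i j) :
    flagHeight L m j - flagHeight L m i = ∑ A ∈ L with i ∈ A ∧ j ∉ A, m A := by
  simp only [flagHeight, Finset.sum_filter, ← Finset.sum_sub_distrib]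
  refine Finset.sum_congr rfl fun A hA => ?_
  have hji : j ∈ A → i ∈ A := fun hj => by_contra fun hi => hL.not_separated h ⟨A, hA, hj, hi⟩
  by_cases hi : i ∈ A <;> by_cases hj : j ∈ A <;> simp_all

theorem IsFlag.flagHeight_add_le {L : Finset (Finset ι)} (hL : IsFlag L) {m : Finset ι → ℝ}
    (hm : ∀ A ∈ L, 0 ≤ m A) {A : Finset ι} (hA : A ∈ L) {i j : ι} (hi : i ∈ A) (hj : j ∉ A) :
    flagHeight L m i + m A ≤ flagHeight L m j := by
  classical
  rw [← le_sub_iff_add_le', hL.flagHeight_sub_flagHeight m ⟨A, hA, hi, hj⟩]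
  exact Finset.single_le_sum (fun B hB => hm B (Finset.mem_filter.1 hB).1)
    (Finset.mem_filter.2 ⟨hA, hi, hj⟩)

theorem cuts_flagHeight {L : Finset (Finset ι)} (hL : IsFlag L) {m : Finset ι → ℝ}
    (hm : ∀ A ∈ L, 0 ≤ m A) (hε : 0 ≤ ε) :
    cuts ε (flagHeight L m) = {A ∈ L | ε < m A} := by
  classical
  ext A
  rw [mem_cuts, Finset.mem_filter]
  constructor
  · rintro ⟨hne, huniv, hA⟩
    obtain ⟨a, ha, hmax⟩ := A.exists_max_image (flagHeight L m) hne
    obtain ⟨b, hb, hmin⟩ := Aᶜ.exists_min_image (flagHeight L m)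
      (by rwa [← Finset.compl_ne_univ_iff_nonempty, compl_compl])
    rw [Finset.mem_compl] at hb
    have hgap : ε < flagHeight L m b - flagHeight L m a := by linarith [hA a ha b hb]
    have hsep : Separated L a b := by
      by_contra hsep
      linarith [flagHeight_le_of_not_separated hm hsep]
    rw [hL.flagHeight_sub_flagHeight m hsep] at hgap
    have eq_of_ne_zero {B : Finset ι} (hB : B ∈ L) (hmB : m B ≠ 0) (haB : a ∈ B) (hbB : b ∉ B) :
        B = A := by
      have hpos : 0 < m B := (hm B hB).lt_of_ne' hmB
      ext c
      refine ⟨fun hcB => by_contra fun hcA => ?_, fun hcA => by_contra fun hcB => ?_⟩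
      · linarith [hL.flagHeight_add_le hm hB hcB hbB, hmin c (Finset.mem_compl.2 hcA)]
      · linarith [hL.flagHeight_add_le hm hB haB hcB, hmax c hcA]
    obtain ⟨B, hB, hmB⟩ := Finset.exists_ne_zero_of_sum_ne_zero (hε.trans_lt hgap).ne'
    obtain ⟨hBL, haB, hbB⟩ := Finset.mem_filter.1 hB
    obtain rfl := eq_of_ne_zero hBL hmB haB hbB
    refine ⟨hBL, hgap.trans_eq (Finset.sum_eq_single B (fun C hC hCB => ?_) (absurd hB))⟩
    obtain ⟨hCL, haC, hbC⟩ := Finset.mem_filter.1 hC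
    exact by_contra fun hmC => hCB (eq_of_ne_zero hCL hmC haC hbC)
  · rintro ⟨hA, hlt⟩
    refine ⟨hL.nonempty A hA, hL.ne_univ A hA, fun a ha b hb => ?_⟩
    linarith [hL.flagHeight_add_le hm hA ha hb]

end Flags

section CellType

variable {ι : Type*}

/-- Combinatorial types of planar configurations: a flag recording which points are seen to the
left of which others, and the pairs `(i, j)` seen in one column with `i` below `j`. The order
reversal on the second component makes a finer column structure larger. -/
abbrev CellType (ι : Type*) := Finset (Finset ι) × (Finset (ι × ι))ᵒᵈ

/-- `i` and `j` lie in one column of `p`, with `i` below `j`. -/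
def CellType.Below (p : CellType ι) (i j : ι) : Prop := (i, j) ∈ OrderDual.ofDual p.2

namespace CellType

variable {p q : CellType ι}

theorem Below.anti (hpq : p ≤ q) {i j : ι} (h : q.Below i j) : p.Below i j := hpq.2 h

theorem le_iff : p ≤ q ↔ p.1 ⊆ q.1 ∧ ∀ i j, q.Below i j → p.Below i j :=
  and_congr_right fun _ => ⟨fun h _ _ hij => h hij, fun h _ hij => h _ _ hij⟩

theorem ext (hflag : p.1 = q.1) (hbelow : ∀ i j, p.Below i j ↔ q.Below i j) : p = q :=
  Prod.ext hflag (Finset.ext fun _ => hbelow _ _)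

end CellType

/-- Configurations of distinct points, indexed by `ι`, for which `z i₁ - z i₀` is a positive
real number. -/
def normalizedConf (i₀ i₁ : ι) : Set (ι → ℂ) :=
  {z | Function.Injective z ∧ (z i₀).re < (z i₁).re ∧ (z i₀).im = (z i₁).im}

/-- The configurations having at least the inequalities of type `p`. -/
def cell (i₀ i₁ : ι) (p : CellType ι) : Set (ι → ℂ) :=
  {z | (∀ i j, Separated p.1 i j → (z i).re < (z j).re) ∧
    (∀ i j, p.Below i j → (z i).re = (z j).re ∧ (z i).im < (z j).im) ∧ (z i₀).im = (z i₁).im}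

variable {i₀ i₁ : ι} {z : ι → ℂ}

theorem openSegment_subset_cell {p : CellType ι} {w : ι → ℂ}
    (hre : ∀ i j, Separated p.1 i j → (z i).re ≤ (z j).re)
    (hbelow : ∀ i j, p.Below i j → (z i).re = (z j).re ∧ (z i).im < (z j).im)
    (him : (z i₀).im = (z i₁).im) (hw : w ∈ cell i₀ i₁ p) : openSegment ℝ z w ⊆ cell i₀ i₁ p := by
  rintro _ ⟨a, b, ha, hb, -, rfl⟩
  refine ⟨fun i j hij => ?_, fun i j hij => ⟨?_, ?_⟩, ?_⟩
  · simpa using add_lt_add_of_le_of_lt (mul_le_mul_of_nonneg_left (hre i j hij) ha.le)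
      (mul_lt_mul_of_pos_left (hw.1 i j hij) hb)
  · simp [(hbelow i j hij).1, (hw.2.1 i j hij).1]
  · simpa using add_lt_add (mul_lt_mul_of_pos_left (hbelow i j hij).2 ha)
      (mul_lt_mul_of_pos_left (hw.2.1 i j hij).2 hb)
  · simp [him, hw.2.2]

theorem convex_cell (p : CellType ι) : Convex ℝ (cell i₀ i₁ p) :=
  convex_iff_openSegment_subset.2 fun _ hz _ hw =>
    openSegment_subset_cell (fun i j hij => (hz.1 i j hij).le) hz.2.1 hz.2.2 hw

variable [Fintype ι]

open Classical in
/-- The combinatorial type of a configuration at resolution `ε`: gaps between real parts are seen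
if they are larger than `ε`. -/
noncomputable def cellType (ε : ℝ) (z : ι → ℂ) : CellType ι :=
  let L := cuts ε fun i => (z i).re
  (L, OrderDual.toDual <| Finset.univ.filter fun x : ι × ι =>
    ¬Separated L x.1 x.2 ∧ ¬Separated L x.2 x.1 ∧ (z x.1).im < (z x.2).im)

variable {ε : ℝ}

theorem below_cellType {i j : ι} :
    (cellType ε z).Below i j ↔ ¬Separated (cellType ε z).1 i j ∧ ¬Separated (cellType ε z).1 j i ∧
      (z i).im < (z j).im := by
  simp [CellType.Below, cellType]

theorem isFlag_cellType (hε : 0 ≤ ε) (z : ι → ℂ) : IsFlag (cellType ε z).1 := isFlag_cuts hε _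

theorem cellType_antitone (z : ι → ℂ) : Antitone (cellType · z) := by
  intro ε ε' hε
  have hcuts : (cellType ε' z).1 ⊆ (cellType ε z).1 := cuts_antitone (fun i => (z i).re) hε
  refine CellType.le_iff.2 ⟨hcuts, fun i j => ?_⟩
  simp only [below_cellType]
  exact And.imp (mt (.mono hcuts)) (And.imp_left (mt (.mono hcuts)))

theorem cellType_congr {ε' : ℝ} {z' : ι → ℂ}
    (hre : ∀ i j, (z i).re + ε < (z j).re ↔ (z' i).re + ε' < (z' j).re)
    (him : ∀ i j, ¬Separated (cellType ε z).1 i j → ¬Separated (cellType ε z).1 j i →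
      ((z i).im < (z j).im ↔ (z' i).im < (z' j).im)) : cellType ε z = cellType ε' z' := by
  have hcuts : (cellType ε z).1 = (cellType ε' z').1 := cuts_congr hre
  refine CellType.ext hcuts fun i j => ?_
  simp only [below_cellType, ← hcuts]
  exact and_congr_right fun hij => and_congr_right fun hji => him i j hij hji

/-- At resolution `ε` the type of `z` is fine enough to tell all the points apart: points in one
column are separated vertically by more than `ε`. -/
def IsFine (ε : ℝ) (z : ι → ℂ) : Prop :=
  ∀ i j, i ≠ j → ¬Separated (cellType ε z).1 i j → ¬Separated (cellType ε z).1 j i →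
    ε < |(z i).im - (z j).im|

theorem separated_cellType_zero_iff {i j : ι} :
    Separated (cellType 0 z).1 i j ↔ (z i).re < (z j).re :=
  separated_cuts_zero_iff

theorem below_cellType_zero_iff {i j : ι} :
    (cellType 0 z).Below i j ↔ (z i).re = (z j).re ∧ (z i).im < (z j).im := by
  simp only [below_cellType, separated_cellType_zero_iff, not_lt, ← and_assoc, le_antisymm_iff]
  tauto

theorem mem_cell_cellType_zero (hz : z ∈ normalizedConf i₀ i₁) : z ∈ cell i₀ i₁ (cellType 0 z) :=
  ⟨fun _ _ => separated_cellType_zero_iff.1, fun _ _ => below_cellType_zero_iff.1, hz.2.2⟩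

theorem separated_of_isFine (hε : 0 ≤ ε) (hfine : IsFine ε z) (hz : z ∈ normalizedConf i₀ i₁) :
    Separated (cellType ε z).1 i₀ i₁ := by
  obtain ⟨-, hre, him⟩ := hz
  by_contra h
  refine (hfine i₀ i₁ (fun h => hre.ne (h ▸ rfl)) h fun hsep => ?_).not_ge (by simp [him, hε])
  linarith [hsep.add_lt]

/-- The types that occur in `normalizedConf i₀ i₁`; each occurs for a configuration in a standard
position, whose columns are one unit apart and which lies in a horizontal strip of width `1`. -/
def IsRealizable (i₀ i₁ : ι) (p : CellType ι) : Prop :=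
  ∃ z ∈ normalizedConf i₀ i₁, cellType 0 z = p ∧ (∀ i, (z i).re = flagHeight p.1 1 i) ∧
    ∀ i, (z i).im ∈ unitInterval

theorem isRealizable_cellType (hε : 0 ≤ ε) (hfine : IsFine ε z) (hz : z ∈ normalizedConf i₀ i₁) :
    IsRealizable i₀ i₁ (cellType ε z) := by
  set p := cellType ε z with hp
  let y (i : ι) : ℂ := ⟨flagHeight p.1 1 i, Real.sigmoid (z i).im⟩
  have hcuts : (cellType 0 y).1 = p.1 := by
    refine (cuts_flagHeight (isFlag_cellType hε z) (fun _ _ => zero_le_one) le_rfl).trans ?_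
    simp [hp]
  have hre {i j : ι} : Separated p.1 i j ↔ (y i).re < (y j).re := by
    rw [← hcuts, separated_cellType_zero_iff]
  have hy : Function.Injective y := by
    intro i j hij
    by_contra hne
    have hsep := hfine i j hne (by simp [← hp, hre, hij]) (by simp [← hp, hre, hij])
    have him : (z i).im = (z j).im := Real.sigmoid_injective (congr_arg Complex.im hij)
    rw [him, sub_self, abs_zero] at hsep
    exact hε.not_gt hsep
  refine ⟨y, ⟨hy, hre.1 (separated_of_isFine hε hfine hz), congr_arg Real.sigmoid hz.2.2⟩, ?_,
    fun _ => rfl, fun i => ⟨Real.sigmoid_nonneg _, Real.sigmoid_le_one _⟩⟩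
  refine CellType.ext hcuts fun i j => ?_
  rw [below_cellType, hcuts, hp, below_cellType]
  simp [y, Real.sigmoid_lt_iff]

end CellType

section RealizableType

variable {ι : Type*} [Fintype ι] {i₀ i₁ : ι}

/-- The poset of types of configurations in `normalizedConf i₀ i₁`. -/
abbrev RealizableType (i₀ i₁ : ι) := {p : CellType ι // IsRealizable i₀ i₁ p}

noncomputable instance : Fintype (RealizableType i₀ i₁) := Fintype.ofFinite _

namespace RealizableType

variable {p q : RealizableType i₀ i₁} {i j : ι}

/-- A configuration of type `p` in standard position. -/
noncomputable def apex (p : RealizableType i₀ i₁) : ι → ℂ := p.2.choose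

theorem apex_mem (p : RealizableType i₀ i₁) : p.apex ∈ normalizedConf i₀ i₁ := p.2.choose_spec.1

theorem cellType_apex (p : RealizableType i₀ i₁) : cellType 0 p.apex = p.1 :=
  p.2.choose_spec.2.1

theorem re_apex (p : RealizableType i₀ i₁) (i : ι) : (p.apex i).re = flagHeight p.1.1 1 i :=
  p.2.choose_spec.2.2.1 i

theorem im_apex_mem (p : RealizableType i₀ i₁) (i : ι) : (p.apex i).im ∈ unitInterval :=
  p.2.choose_spec.2.2.2 i

theorem separated_iff : Separated p.1.1 i j ↔ (p.apex i).re < (p.apex j).re := by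
  rw [← separated_cellType_zero_iff, cellType_apex]

theorem below_iff :
    p.1.Below i j ↔ (p.apex i).re = (p.apex j).re ∧ (p.apex i).im < (p.apex j).im := by
  rw [← below_cellType_zero_iff, cellType_apex]

theorem isFlag (p : RealizableType i₀ i₁) : IsFlag p.1.1 :=
  p.cellType_apex ▸ isFlag_cellType le_rfl _

theorem separated_left_right (p : RealizableType i₀ i₁) : Separated p.1.1 i₀ i₁ :=
  separated_iff.2 p.apex_mem.2.1

theorem below_or_below (hij : i ≠ j) (h₁ : ¬Separated p.1.1 i j) (h₂ : ¬Separated p.1.1 j i) :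
    p.1.Below i j ∨ p.1.Below j i := by
  rw [separated_iff, not_lt] at h₁ h₂
  have hre := h₂.antisymm h₁
  have him : (p.apex i).im ≠ (p.apex j).im := fun him => hij (p.apex_mem.1 (Complex.ext hre him))
  exact him.lt_or_gt.imp (fun h => below_iff.2 ⟨hre, h⟩) fun h => below_iff.2 ⟨hre.symm, h⟩

theorem cell_subset_normalizedConf (p : RealizableType i₀ i₁) :
    cell i₀ i₁ p.1 ⊆ normalizedConf i₀ i₁ := by
  rintro z ⟨hsep, hbelow, him⟩
  refine ⟨fun i j hij => ?_, hsep _ _ p.separated_left_right, him⟩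
  by_contra hne
  rcases below_or_below hne (fun h => (hsep i j h).ne (hij ▸ rfl))
    (fun h => (hsep j i h).ne (hij ▸ rfl)) with h | h
  · exact (hbelow i j h).2.ne (hij ▸ rfl)
  · exact (hbelow j i h).2.ne (hij ▸ rfl)

theorem openSegment_apex_subset_cell (hpq : p ≤ q) :
    openSegment ℝ p.apex q.apex ⊆ cell i₀ i₁ q.1 := by
  refine openSegment_subset_cell (fun i j hij => ?_) (fun i j hij => ?_) p.apex_mem.2.2
    (q.cellType_apex ▸ mem_cell_cellType_zero q.apex_mem)
  · exact not_lt.1 fun hlt =>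
      q.isFlag.not_separated hij ((separated_iff.2 hlt).mono (CellType.le_iff.1 hpq).1)
  · exact below_iff.1 (hij.anti hpq)

theorem eq_of_le_of_fst_eq (hpq : p ≤ q) (h : p.1.1 = q.1.1) : p = q := by
  refine Subtype.ext (CellType.ext h fun i j => ⟨fun hij => ?_, .anti hpq⟩)
  obtain ⟨hre, him⟩ := below_iff.1 hij
  have hne : i ≠ j := fun hij => him.ne (hij ▸ rfl)
  refine (below_or_below hne ?_ ?_).resolve_right fun hji => ?_
  · simp [← h, separated_iff, hre]
  · simp [← h, separated_iff, hre]
  · exact him.not_gt (below_iff.1 (hji.anti hpq)).2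

theorem strictMono_card : StrictMono fun p : RealizableType i₀ i₁ => p.1.1.card := by
  intro p q hpq
  refine Finset.card_lt_card (Finset.ssubset_iff_subset_ne.2 ⟨hpq.le.1, fun h => ?_⟩)
  exact hpq.ne (eq_of_le_of_fst_eq hpq.le h)

theorem card_le_of_mem_faces_orderComplex {c : Finset (RealizableType i₀ i₁)}
    (hc : c ∈ (orderComplex (RealizableType i₀ i₁)).faces) : c.card ≤ Fintype.card ι - 1 := by
  refine card_le_sub_one_of_isChain hc.2 strictMono_card fun p _ => ?_
  obtain ⟨A, hA, -⟩ := p.separated_left_right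
  have : Nontrivial ι := ⟨i₀, i₁, ne_of_apply_ne (fun i => (p.apex i).re) p.apex_mem.2.1.ne⟩
  have := Fintype.one_lt_card (α := ι)
  have := p.isFlag.card_le
  exact Finset.mem_Ioo.2 ⟨Finset.card_pos.2 ⟨A, hA⟩, by omega⟩

end RealizableType

end RealizableType

section Combination

variable {ι : Type*} [Fintype ι] {i₀ i₁ : ι}

namespace RealizableType

variable {w : RealizableType i₀ i₁ → ℝ} {q r : RealizableType i₀ i₁} {ε : ℝ}

open Classical in
theorem re_sum_smul_apex (hq : IsGreatest (Function.support w) q) (i : ι) :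
    ((∑ p, w p • p.apex) i).re = flagHeight q.1.1 (fun A => ∑ p with A ∈ p.1.1, w p) i := by
  simpa [re_apex] using
    sum_mul_flagHeight_one (fun p hp => (CellType.le_iff.1 (hq.2 hp)).1) i

theorem fst_cellType_sum_smul_apex [DecidableLE (RealizableType i₀ i₁)]
    [DecidableLT (RealizableType i₀ i₁)]
    (hw : w ∈ realization (orderComplex (RealizableType i₀ i₁))) (hr : r ∈ Function.support w)
    (hε : 0 ≤ ε) (hgt : ∑ p with r < p, w p ≤ ε) (hge : ε < ∑ p with r ≤ p, w p) :
    (cellType ε (∑ p, w p • p.apex)).1 = r.1.1 := by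
  classical
  obtain ⟨⟨hnonneg, -⟩, hchain⟩ := mem_realization_orderComplex.1 hw
  obtain ⟨q, hq⟩ := exists_isGreatest_support hw
  have hre := funext (re_sum_smul_apex hq)
  rw [cellType, hre,
    cuts_flagHeight q.isFlag (fun A _ => Finset.sum_nonneg fun p _ => hnonneg p) hε]
  ext A
  rw [Finset.mem_filter]
  refine ⟨fun ⟨_, hA⟩ => ?_, fun hA => ⟨(CellType.le_iff.1 (hq.2 hr)).1 hA, ?_⟩⟩
  · by_contra hAr
    refine (hgt.trans_lt hA).not_ge ?_
    rw [← Finset.sum_filter_ne_zero]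
    refine Finset.sum_le_sum_of_subset_of_nonneg (fun p hp => ?_) fun p _ _ => hnonneg p
    simp only [Finset.mem_filter, Finset.mem_univ, true_and] at hp ⊢
    have hpr : ¬p ≤ r := fun hpr => hAr ((CellType.le_iff.1 hpr).1 hp.1)
    exact lt_of_le_not_ge ((hchain.total hp.2 hr).resolve_left hpr) hpr
  · refine hge.trans_le ?_
    refine Finset.sum_le_sum_of_subset_of_nonneg (fun p hp => ?_) fun p _ _ => hnonneg p
    simp only [Finset.mem_filter, Finset.mem_univ, true_and] at hp ⊢
    exact (CellType.le_iff.1 hp).1 hA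

theorem neg_le_im_sum_smul_apex [DecidableLT (RealizableType i₀ i₁)]
    (hw : w ∈ realization (orderComplex (RealizableType i₀ i₁))) (hr : r ∈ Function.support w)
    {i j : ι} (hij : r.1.Below i j) :
    -∑ p with r < p, w p ≤ ((∑ p, w p • p.apex) j).im - ((∑ p, w p • p.apex) i).im := by
  obtain ⟨⟨hnonneg, -⟩, hchain⟩ := mem_realization_orderComplex.1 hw
  rw [← Finset.sum_neg_distrib, Finset.sum_filter]
  simp only [Finset.sum_apply, Pi.smul_apply, Complex.im_sum, Complex.smul_im, smul_eq_mul,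
    ← Finset.sum_sub_distrib, ← mul_sub]
  refine Finset.sum_le_sum fun p _ => ?_
  by_cases hp : w p = 0
  · simp [hp]
  split_ifs with hrp
  · nlinarith [hnonneg p, (p.im_apex_mem i).2, (p.im_apex_mem j).1]
  · have hpr : p ≤ r := (hchain.total hp hr).elim id fun h => (h.eq_of_not_lt hrp).ge
    exact mul_nonneg (hnonneg p) (sub_nonneg.2 (below_iff.1 (hij.anti hpr)).2.le)

theorem exists_cellType_sum_smul_apex_eq
    (hw : w ∈ realization (orderComplex (RealizableType i₀ i₁))) (hε : 0 ≤ ε) (hε1 : ε < 1)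
    (hfine : IsFine ε (∑ p, w p • p.apex)) :
    ∃ r ∈ Function.support w, cellType ε (∑ p, w p • p.apex) = r.1 := by
  classical
  obtain ⟨r, hr, hgt, hge⟩ := exists_mem_support_sum_le_lt hw hε hε1
  have hfst := fst_cellType_sum_smul_apex hw hr hε hgt hge
  have below_imp {i j : ι} (hij : r.1.Below i j) :
      ((cellType ε (∑ p, w p • p.apex)).Below i j) := by
    obtain ⟨h₁, h₂⟩ : ¬Separated r.1.1 i j ∧ ¬Separated r.1.1 j i := by
      simp [separated_iff, (below_iff.1 hij).1]
    have hne : i ≠ j := ne_of_apply_ne (fun i => (r.apex i).im) (below_iff.1 hij).2.ne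
    rw [below_cellType, hfst]
    refine ⟨h₁, h₂, ?_⟩
    have hgap := neg_le_im_sum_smul_apex hw hr hij
    rcases lt_abs.1 (hfine i j hne (hfst ▸ h₁) (hfst ▸ h₂)) with h | h <;> linarith
  refine ⟨r, hr, CellType.ext hfst fun i j => ⟨fun hij => ?_, below_imp⟩⟩
  obtain ⟨h₁, h₂, him⟩ := below_cellType.1 hij
  rw [hfst] at h₁ h₂
  have hne : i ≠ j := ne_of_apply_ne (fun i => ((∑ p, w p • p.apex) i).im) him.ne
  refine (below_or_below hne h₁ h₂).resolve_right fun hji => ?_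
  exact him.not_gt (below_cellType.1 (below_imp hji)).2.2

end RealizableType

end Combination

section Resolution

theorem eventually_lt_iff_of_ne {X α : Type*} [TopologicalSpace X] [LinearOrder α]
    [TopologicalSpace α] [OrderClosedTopology α] {f g : X → α} {x : X} (hf : ContinuousAt f x)
    (hg : ContinuousAt g x) (h : f x ≠ g x) : ∀ᶠ y in 𝓝 x, f y < g y ↔ f x < g x := by
  rcases h.lt_or_gt with h | h
  · filter_upwards [hf.eventually_lt hg h] with y hy using iff_of_true hy h
  · filter_upwards [hg.eventually_lt hf h] with y hy using iff_of_false hy.not_gt h.not_gt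

variable {ι : Type*} [Fintype ι] {z : ι → ℂ} {ε : ℝ}

open Classical in
/-- A scale at which, and below which, the type of a configuration tells all its points apart. It is
compared with `|Δre| / card ι` because the real parts in one column at scale `ε` can differ by as
much as `card ι * ε`. -/
noncomputable def resolution (z : ι → ℂ) : ℝ :=
  (∏ x ∈ Finset.univ.offDiag,
    min 1 (max (|(z x.1).re - (z x.2).re| / Fintype.card ι) |(z x.1).im - (z x.2).im|)) / 2

theorem continuous_resolution : Continuous (resolution : (ι → ℂ) → ℝ) := by
  unfold resolution
  fun_prop

theorem resolution_pos (hz : Function.Injective z) : 0 < resolution z := by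
  classical
  refine half_pos (Finset.prod_pos fun x hx => lt_min one_pos (lt_max_iff.2 ?_))
  obtain ⟨-, -, hne⟩ := Finset.mem_offDiag.1 hx
  have : Nonempty ι := ⟨x.1⟩
  have hcard : (0 : ℝ) < Fintype.card ι := Nat.cast_pos.2 Fintype.card_pos
  by_contra! h
  simp only [div_le_iff₀ hcard, zero_mul, abs_nonpos_iff, sub_eq_zero] at h
  exact hne (hz (Complex.ext h.1 h.2))

theorem resolution_lt_one (z : ι → ℂ) : resolution z < 1 := by
  classical
  refine (div_lt_one two_pos).2 ((Finset.prod_le_one (fun x _ => ?_) fun x _ => ?_).trans_lt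
    one_lt_two)
  · positivity
  · exact min_le_left _ _

theorem two_mul_resolution_le {i j : ι} (hij : i ≠ j) :
    2 * resolution z ≤ max (|(z i).re - (z j).re| / Fintype.card ι) |(z i).im - (z j).im| := by
  classical
  have hmem : (i, j) ∈ (Finset.univ : Finset ι).offDiag := by simpa using hij
  rw [resolution, mul_div_cancel₀ _ two_ne_zero, ← Finset.mul_prod_erase _ _ hmem]
  refine (mul_le_of_le_one_right (by positivity) (Finset.prod_le_one (fun x _ => ?_)
    fun x _ => min_le_left _ _)).trans (min_le_right _ _)
  positivity

theorem isFine_of_le_resolution (hz : Function.Injective z) (hε : 0 ≤ ε) (h : ε ≤ resolution z) :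
    IsFine ε z := by
  intro i j hij h₁ h₂
  have hre : |(z i).re - (z j).re| / Fintype.card ι ≤ ε := by
    have : Nonempty ι := ⟨i⟩
    rw [div_le_iff₀' (Nat.cast_pos.2 Fintype.card_pos)]
    exact abs_sub_le_iff.2 ⟨sub_le_of_not_separated_cuts hε h₂, sub_le_of_not_separated_cuts hε h₁⟩
  have hlt : ε < 2 * resolution z := by linarith [resolution_pos hz]
  exact (lt_max_iff.1 (hlt.trans_le (two_mul_resolution_le hij))).resolve_left hre.not_gt

end Resolution

section Stratification

variable {ι : Type*} [Fintype ι] {i₀ i₁ : ι}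

theorem eventually_cellType_mul_eq_cellType_zero (z : ι → ℂ) {c : ℝ} (hc : 0 ≤ c) :
    ∀ᶠ t : I in 𝓝 0, cellType (t * c) z = cellType 0 z := by
  have hre (i j : ι) :
      ∀ᶠ t : I in 𝓝 0, (z i).re + t * c < (z j).re ↔ (z i).re + 0 < (z j).re := by
    rcases lt_or_ge (z i).re (z j).re with h | h
    · have hcont : Continuous fun t : I => (z i).re + t * c := by fun_prop
      filter_upwards [hcont.continuousAt.eventually_lt continuousAt_const (by simpa using h)]
        with t ht using iff_of_true ht (by simpa using h)
    · refine .of_forall fun t => iff_of_false ?_ (by simpa using h)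
      linarith [mul_nonneg t.2.1 hc]
  filter_upwards [eventually_all.2 fun i => eventually_all.2 (hre i)] with t ht
  exact cellType_congr ht fun _ _ _ _ => Iff.rfl

theorem eventually_cellType_eq {X : Type*} [TopologicalSpace X] {ε : X → ℝ} {f : X → ι → ℂ} {x : X}
    (hε : ContinuousAt ε x) (hf : ContinuousAt f x) (hfine : IsFine (ε x) (f x)) (hεx : 0 ≤ ε x)
    (hne : ∀ i j, (f x i).re + ε x ≠ (f x j).re) :
    ∀ᶠ y in 𝓝 x, cellType (ε y) (f y) = cellType (ε x) (f x) := by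
  have hcoord (i : ι) : ContinuousAt (f · i) x := continuousAt_pi.1 hf i
  have hre (i : ι) : ContinuousAt (fun y => (f y i).re) x :=
    Complex.continuous_re.continuousAt.comp (hcoord i)
  have him (i : ι) : ContinuousAt (fun y => (f y i).im) x :=
    Complex.continuous_im.continuousAt.comp (hcoord i)
  have hre_iff := eventually_all.2 fun i => eventually_all.2 fun j =>
    eventually_lt_iff_of_ne ((hre i).add hε) (hre j) (hne i j)
  have him_iff : ∀ᶠ y in 𝓝 x, ∀ i j, (f x i).im ≠ (f x j).im →
      ((f y i).im < (f y j).im ↔ (f x i).im < (f x j).im) :=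
    eventually_all.2 fun i => eventually_all.2 fun j => eventually_imp_distrib_left.2 <|
      eventually_lt_iff_of_ne (him i) (him j)
  filter_upwards [hre_iff, him_iff] with y hy_re hy_im
  refine (cellType_congr (fun i j => (hy_re i j).symm) fun i j h₁ h₂ => ?_).symm
  rcases eq_or_ne i j with rfl | hij
  · simp
  · exact (hy_im i j (sub_ne_zero.1 (abs_pos.1 (hεx.trans_lt (hfine i j hij h₁ h₂))))).symm

theorem ae_add_mul_ne {a b c : ℝ} (hc : c ≠ 0) : ∀ᵐ t : I, a + t * c ≠ b := by
  refine Set.Subsingleton.measure_zero (fun s hs t ht => ?_) volume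
  have heq : a + s * c = a + t * c := (not_not.1 hs).trans (not_not.1 ht).symm
  exact Subtype.ext (mul_right_cancel₀ hc (add_left_cancel heq))

/-- The stratification of `normalizedConf i₀ i₁` by cells; scales are relative to the resolution of
the configuration. -/
noncomputable def normalizedConfStratification (i₀ i₁ : ι) :
    ScaleStratification (normalizedConf i₀ i₁) (RealizableType i₀ i₁) :=
  have scale_nonneg (t : I) (z : normalizedConf i₀ i₁) : 0 ≤ t * resolution z.1 :=
    mul_nonneg t.2.1 (resolution_pos z.2.1).le
  have isFine (t : I) (z : normalizedConf i₀ i₁) : IsFine (t * resolution z.1) z.1 :=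
    isFine_of_le_resolution z.2.1 (scale_nonneg t z)
      (mul_le_of_le_one_left (resolution_pos z.2.1).le t.2.2)
  { stratum p := cell i₀ i₁ p.1
    convex_stratum p := convex_cell p.1
    stratum_subset p := p.cell_subset_normalizedConf
    apex p := p.apex
    openSegment_apex_subset := RealizableType.openSegment_apex_subset_cell
    typeAt t z :=
      ⟨cellType (t * resolution z.1) z.1, isRealizable_cellType (scale_nonneg t z) (isFine t z) z.2⟩
    antitone_typeAt z _ _ hst :=
      cellType_antitone z.1 (mul_le_mul_of_nonneg_right hst (resolution_pos z.2.1).le)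
    mem_stratum_typeAt_zero z := by simpa using mem_cell_cellType_zero z.2
    eventually_typeAt_eq_zero z := by
      simpa using eventually_cellType_mul_eq_cellType_zero z.1 (resolution_pos z.2.1).le
    ae_eventually_typeAt_eq z := by
      filter_upwards [ae_all_iff.2 fun i => ae_all_iff.2 fun j =>
        ae_add_mul_ne (a := (z.1 i).re) (b := (z.1 j).re) (resolution_pos z.2.1).ne'] with t ht
      have hscale : Continuous fun y : normalizedConf i₀ i₁ => t * resolution y.1 :=
        continuous_const.mul (continuous_resolution.comp continuous_subtype_val)
      simpa only [Subtype.mk.injEq] using eventually_cellType_eq hscale.continuousAt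
        continuous_subtype_val.continuousAt (isFine t z) (scale_nonneg t z) ht
    apply_typeAt_ne_zero w hw h t := by
      have hlt : t * resolution (∑ p, w p • p.apex) < 1 :=
        (mul_le_of_le_one_left (resolution_pos h.1).le t.2.2).trans_lt (resolution_lt_one _)
      obtain ⟨r, hr, heq⟩ := RealizableType.exists_cellType_sum_smul_apex_eq hw
        (scale_nonneg t ⟨_, h⟩) hlt (isFine t ⟨_, h⟩)
      simpa only [heq, Subtype.coe_eta, ← Function.mem_support] using hr }

end Stratification

section Slice

variable {G E : Type*} [Group G] [TopologicalSpace G] [ContinuousInv G] [TopologicalSpace E]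
  [MulAction G E] [ContinuousSMul G E] {Y : Set E} {u : E → G}

/-- An equivariant map to the group trivializes an action: `Y` is the product of the group with the
fibre over `1`. -/
def homeomorphSliceProd (hY : ∀ (g : G), ∀ y ∈ Y, g • y ∈ Y) (hu : ContinuousOn u Y)
    (hsmul : ∀ (g : G), ∀ y ∈ Y, u (g • y) = g * u y) : Y ≃ₜ {y ∈ Y | u y = 1} × G where
  toFun y := (⟨(u y)⁻¹ • y.1, hY _ _ y.2, by simp [hsmul _ _ y.2]⟩, u y)
  invFun x := ⟨x.2 • x.1.1, hY _ _ x.1.2.1⟩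
  left_inv y := by simp
  right_inv x := by
    have hx : u (x.2 • x.1.1) = x.2 := by rw [hsmul _ _ x.1.2.1, x.1.2.2, mul_one]
    ext <;> simp [hx]
  continuous_toFun := by
    have hu' : Continuous fun y : Y => u y := continuousOn_iff_continuous_domRestrict.1 hu
    exact ((hu'.inv.smul continuous_subtype_val).subtype_mk _).prodMk hu'
  continuous_invFun := by fun_prop

end Slice

section Circle

theorem coe_circleExp_arg {w : ℂ} (hw : w ≠ 0) : (Circle.exp w.arg : ℂ) = w / ‖w‖ := by
  rw [Circle.coe_exp, eq_div_iff (by simpa using hw), mul_comm, Complex.norm_mul_exp_arg_mul_I]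

theorem continuousOn_circleExp_arg : ContinuousOn (fun w : ℂ => Circle.exp w.arg) {0}ᶜ := by
  refine Topology.IsInducing.subtypeVal.continuousOn_iff.2 (.congr ?_ fun w hw =>
    coe_circleExp_arg hw)
  exact continuousOn_id.div (by fun_prop) fun w hw => by simpa using hw

theorem circleExp_arg_mul (c : Circle) {w : ℂ} (hw : w ≠ 0) :
    Circle.exp (c * w : ℂ).arg = c * Circle.exp w.arg := by
  refine Circle.ext ?_
  rw [Circle.coe_mul, coe_circleExp_arg hw, coe_circleExp_arg (mul_ne_zero c.coe_ne_zero hw),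
    norm_mul, Circle.norm_coe, one_mul, mul_div_assoc]

theorem circleExp_arg_eq_one_iff {w : ℂ} (hw : w ≠ 0) :
    Circle.exp w.arg = 1 ↔ 0 < w.re ∧ w.im = 0 := by
  have harg : Complex.arg (Circle.exp w.arg) = w.arg :=
    Circle.arg_exp w.neg_pi_lt_arg w.arg_le_pi
  have hre (him : w.im = 0) : 0 ≠ w.re := fun hre => hw (Complex.ext hre.symm him)
  rw [← Circle.injective_arg.eq_iff, harg, Circle.coe_one, Complex.arg_one,
    Complex.arg_eq_zero_iff]
  exact and_congr_left fun him => (hre him).le_iff_lt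

variable {ι : Type*} {i₀ i₁ : ι}

/-- The circle factor is the direction in which `z i₁` is seen from `z i₀`. -/
noncomputable def injectiveHomeomorphNormalizedConfProd (h : i₀ ≠ i₁) :
    {z : ι → ℂ | Function.Injective z} ≃ₜ normalizedConf i₀ i₁ × Circle :=
  have sub_ne {z : ι → ℂ} (hz : Function.Injective z) : z i₁ - z i₀ ≠ 0 :=
    sub_ne_zero.2 fun heq => h (hz heq).symm
  have slice_eq : {z ∈ {z : ι → ℂ | Function.Injective z} | Circle.exp (z i₁ - z i₀).arg = 1} =
      normalizedConf i₀ i₁ := by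
    ext z
    refine and_congr_right fun hz => (circleExp_arg_eq_one_iff (sub_ne hz)).trans ?_
    rw [Complex.sub_re, Complex.sub_im, sub_pos, sub_eq_zero, eq_comm (a := (z i₁).im)]
  (homeomorphSliceProd (G := Circle) (u := fun z : ι → ℂ => Circle.exp (z i₁ - z i₀).arg)
    (fun c z (hz : Function.Injective z) => (MulAction.injective c).comp hz)
    (continuousOn_circleExp_arg.comp (by fun_prop) fun z hz => sub_ne hz)
    fun c z hz => by simpa [Circle.smul_def, mul_sub] using circleExp_arg_mul c (sub_ne hz)).trans
    ((Homeomorph.setCongr slice_eq).prodCongr (.refl Circle))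

end Circle

open ContinuousMap in
/-- for `n ≥ 2`, `F(ℂ, n)` is homotopy equivalent to `X × S¹` for some finite
polyhedron `X` of dimension at most `n - 2` (realized as the space of a finite simplicial
complex all of whose faces have at most `n - 1` vertices). -/
theorem confC_homotopy_equiv (n : ℕ) (hn : 2 ≤ n) :
    ∃ (N : ℕ) (K : Geometry.SimplicialComplex ℝ (EuclideanSpace ℝ (Fin N))),
      K.faces.Finite ∧ (∀ s ∈ K.faces, s.card ≤ n - 1) ∧
      Nonempty (ConfC n ≃ₕ (K.space × Circle)) := by
  let i₀ : Fin n := ⟨0, by omega⟩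
  let i₁ : Fin n := ⟨1, by omega⟩
  have hne : i₀ ≠ i₁ := by simp [i₀, i₁]
  obtain ⟨N, K, hfin, hcard, ⟨e⟩⟩ := exists_simplicialComplex_homeomorph_realization
    (orderComplex (RealizableType i₀ i₁)) fun _ => RealizableType.card_le_of_mem_faces_orderComplex
  rw [Fintype.card_fin] at hcard
  let conf_equiv := (injectiveHomeomorphNormalizedConfProd hne).toHomotopyEquiv
  let normalized_equiv : normalizedConf i₀ i₁ ≃ₕ K.space :=
    (normalizedConfStratification i₀ i₁).homotopyEquivOrderComplex.trans e.symm.toHomotopyEquiv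
  exact ⟨N, K, hfin, hcard, ⟨conf_equiv.trans (normalized_equiv.prodCongr (.refl Circle))⟩⟩
end

section
/- For all n ≥ 2 and m ≥ 2, TC(F(ℝᵐ, n)) = 2n − 1 if m is odd and TC(F(ℝᵐ, n)) = 2n − 2 if m is even. -/
/-!
A motion planner over `U ⊆ X × X` is a homotopy over `U` between the two projections to `X`.

*Upper bound.* Project a configuration orthogonally to a line and count the distinct heights of its
points. Among the pairs of configurations with given counts and given order types of the heights,
the order type alone determines a deformation, first onto the line itself and then to a standard
configuration on an orthogonal line, so the pairs with a given total count `r` have a motion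
planner, which extends to a neighbourhood. With a fixed line `r` takes the `2n - 1` values
`2, …, 2n`. In even dimension one may project to the direction `e` from the first point of each
configuration to the second, so that each of the counts is at least `2`, and take the orthogonal
direction `J e` for a linear complex structure `J`. The two directions `J e` and `J e'` of a pair
are then joined by a segment, or through an orthogonal direction if they are antipodal, which costs
one more stratum and gives `2n - 2` of them.

*Lower bound.* If `F(ℝᵐ, n)` has a motion planner over each of `k` open sets, then for families of
configurations `x, y : T → F(ℝᵐ, n)` and directions `D i : F(ℝᵐ, n) → S^(m-1)`, `i < k`, the
classes `y* D(i)* - x* D(i)*` of the fundamental class of the sphere vanish on an open cover of `T`,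
so their cup product is zero. For `T` a product of `k` tori of dimension `m - 1` and configurations
whose points turn on concentric spheres, these classes are integer combinations, with a matrix `C`,
of the classes of the factors, and their cup product is the determinant of `C` for `m` even and its
permanent for `m` odd. It is nonzero for suitable families, with `k = 2n - 3` and `k = 2n - 2`
respectively.
-/

open unitInterval ContinuousMap

/-- `HasMotionCover X k`: `X × X` admits a cover by `k` open subsets, on each of which
the path fibration `π : PX → X × X`, `π γ = (γ 0, γ 1)`, admits a continuous section. -/
def HasMotionCover (X : Type*) [TopologicalSpace X] (k : ℕ) : Prop :=
  ∃ U : Fin k → Set (X × X),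
    (∀ i, IsOpen (U i)) ∧ (⋃ i, U i) = Set.univ ∧
    ∀ i, ∃ s : C((U i : Set (X × X)), C(I, X)),
      ∀ p : U i, ((s p) 0, (s p) 1) = (p : X × X)

/-- The topological complexity of `X`: the minimal number `k` such that `X × X` admits a
cover by `k` open subsets over each of which the path fibration admits a continuous
section; `⊤` (infinity) if no such `k` exists. -/
noncomputable def topologicalComplexity (X : Type*) [TopologicalSpace X] : ℕ∞ :=
  sInf ((↑) '' {k : ℕ | HasMotionCover X k})
open Topology Set Function
open scoped InnerProductSpace

section MotionCover

variable {X Y : Type*} [TopologicalSpace X] [TopologicalSpace Y]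

theorem exists_motionSection_iff_homotopic {U : Set (X × X)} :
    (∃ s : C(U, C(I, X)), ∀ p : U, ((s p) 0, (s p) 1) = (p : X × X)) ↔
      ((fst : C(X × X, X)).restrict U).Homotopic ((snd : C(X × X, X)).restrict U) := by
  constructor
  · rintro ⟨s, hs⟩
    exact ⟨⟨s.uncurry.comp ContinuousMap.prodSwap, fun p => congrArg Prod.fst (hs p),
      fun p => congrArg Prod.snd (hs p)⟩⟩
  · rintro ⟨H⟩
    exact ⟨(H.toContinuousMap.comp ContinuousMap.prodSwap).curry,
      fun p => Prod.ext (H.apply_zero p) (H.apply_one p)⟩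

theorem hasMotionCover_iff_homotopic {k : ℕ} :
    HasMotionCover X k ↔ ∃ U : Fin k → Set (X × X), (∀ i, IsOpen (U i)) ∧ ⋃ i, U i = univ ∧
      ∀ i, ((fst : C(X × X, X)).restrict (U i)).Homotopic ((snd : C(X × X, X)).restrict (U i)) := by
  simp only [HasMotionCover, exists_motionSection_iff_homotopic]

theorem HasMotionCover.mono {k l : ℕ} (h : HasMotionCover X k) (hkl : k ≤ l) :
    HasMotionCover X l := by
  obtain ⟨U, hU, hcov, hs⟩ := h
  have hV (i : Fin l) : ∃ V : Set (X × X), (∀ h : (i : ℕ) < k, V = U ⟨i, h⟩) ∧ IsOpen V ∧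
      ∃ s : C(V, C(I, X)), ∀ p : V, ((s p) 0, (s p) 1) = (p : X × X) := by
    by_cases h : (i : ℕ) < k
    · exact ⟨U ⟨i, h⟩, fun _ => rfl, hU _, hs _⟩
    · refine ⟨∅, fun h' => absurd h' h, isOpen_empty, ⟨⟨fun p => p.2.elim, ?_⟩, fun p => p.2.elim⟩⟩
      exact continuous_of_const fun p => p.2.elim
  choose V hVU hVo hVs using hV
  refine ⟨V, hVo, eq_univ_of_univ_subset ?_, hVs⟩
  rw [← hcov]
  exact iUnion_subset fun i => (hVU (i.castLE hkl) i.2).ge.trans (subset_iUnion V _)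

theorem HasMotionCover.of_homeomorph {k : ℕ} (e : X ≃ₜ Y) (h : HasMotionCover X k) :
    HasMotionCover Y k := by
  rw [hasMotionCover_iff_homotopic] at h ⊢
  obtain ⟨U, hU, hcov, hH⟩ := h
  let E : C(Y × Y, X × X) := ContinuousMap.prodMap e.symm e.symm
  refine ⟨fun i => E ⁻¹' U i, fun i => (hU i).preimage E.continuous, ?_, fun i => ?_⟩
  · rw [← preimage_iUnion, hcov, preimage_univ]
  · have := ((Homotopic.refl (e : C(X, Y))).comp (hH i)).comp
      (Homotopic.refl (E.restrictPreimage (U i)))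
    convert this using 1 <;> ext p <;> simp [E]

theorem topologicalComplexity_eq_succ {K : ℕ} (h : HasMotionCover X (K + 1))
    (h' : ¬HasMotionCover X K) : topologicalComplexity X = ((K + 1 : ℕ) : ℕ∞) := by
  refine le_antisymm (sInf_le ⟨K + 1, h, rfl⟩) (le_sInf ?_)
  rintro _ ⟨k, hk, rfl⟩
  exact Nat.cast_le.2 (Nat.lt_of_not_le fun hkK => h' (hk.mono hkK))

theorem HasMotionCover.exists_cover_homotopic {k : ℕ} (h : HasMotionCover X k) (f g : C(Y, X)) :
    ∃ U : Fin k → Set Y, (∀ i, IsOpen (U i)) ∧ ⋃ i, U i = univ ∧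
      ∀ i, (f.restrict (U i)).Homotopic (g.restrict (U i)) := by
  obtain ⟨U, hU, hcov, hH⟩ := hasMotionCover_iff_homotopic.1 h
  refine ⟨fun i => f.prodMk g ⁻¹' U i, fun i => (hU i).preimage (map_continuous _), ?_,
    fun i => (hH i).comp (Homotopic.refl ((f.prodMk g).restrictPreimage (U i)))⟩
  rw [← preimage_iUnion, hcov, preimage_univ]

end MotionCover

section Extension

universe u v

variable {V : Type v} {Y : Type u} [TopologicalSpace V] [AddCommGroup V] [Module ℝ V]
  [ContinuousAdd V] [ContinuousSub V] [ContinuousSMul ℝ V] [TietzeExtension.{u} V]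
  [TopologicalSpace Y] [TopologicalSpace.MetrizableSpace Y] {P : V → Prop}

-- A homotopy over `A` extends, as a map into `V`, by Tietze; after correcting its two ends it
-- stays in the open set `P` near `A`.
theorem exists_isOpen_homotopic_of_isClosed (hP : IsOpen {v | P v})
    (f g : C(Y, {v // P v})) {A : Set Y} (hA : IsClosed A)
    (h : (f.restrict A).Homotopic (g.restrict A)) :
    ∃ U, IsOpen U ∧ A ⊆ U ∧ (f.restrict U).Homotopic (g.restrict U) := by
  obtain ⟨H⟩ := h
  let H' : C(Prod.fst ⁻¹' A, V) :=
    ⟨fun q : Prod.fst ⁻¹' A => (H (q.1.2, ⟨q.1.1, q.2⟩)).1, by fun_prop⟩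
  obtain ⟨G, hG⟩ := H'.exists_restrict_eq (hA.preimage (continuous_fst (X := Y) (Y := I)))
  have hGA (a : A) (t : I) : G (a, t) = (H (t, a)).1 :=
    congrArg (fun φ : C(Prod.fst ⁻¹' A, V) => φ ⟨(a, t), a.2⟩) hG
  let G' : Y × I → V := fun q =>
    G q + (1 - (q.2 : ℝ)) • ((f q.1).1 - G (q.1, 0)) + (q.2 : ℝ) • ((g q.1).1 - G (q.1, 1))
  have hG'c : Continuous G' := by fun_prop
  have hG'A (a : A) (t : I) : G' (a, t) = (H (t, a)).1 := by simp [G', hGA]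
  let U : Set Y := {y | ∀ t, P (G' (y, t))}
  have hU : IsOpen U := by
    have hC : IsClosed (Prod.fst '' (G' ⁻¹' {v | P v})ᶜ) :=
      isClosedMap_fst_of_compactSpace _ (hP.preimage hG'c).isClosed_compl
    convert hC.isOpen_compl using 1
    ext y
    simp [U]
  refine ⟨U, hU, fun a ha t => hG'A ⟨a, ha⟩ t ▸ (H (t, ⟨a, ha⟩)).2, ⟨⟨⟨fun q =>
    ⟨G' (q.2, q.1), q.2.2 q.1⟩, by fun_prop⟩, fun y => Subtype.ext ?_, fun y => Subtype.ext ?_⟩⟩⟩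
  · simp [G']
  · simp [G']

theorem exists_isOpen_homotopic_of_isLocallyClosed (hP : IsOpen {v | P v})
    (f g : C(Y, {v // P v})) {A : Set Y} (hA : IsLocallyClosed A)
    (h : (f.restrict A).Homotopic (g.restrict A)) :
    ∃ U, IsOpen U ∧ A ⊆ U ∧ (f.restrict U).Homotopic (g.restrict U) := by
  obtain ⟨W, Z, hW, hZ, rfl⟩ := hA
  let toA : C((Subtype.val ⁻¹' Z : Set W), (W ∩ Z : Set Y)) :=
    ⟨fun y => ⟨y.1, y.1.2, y.2⟩, by fun_prop⟩
  obtain ⟨U, hU, hZU, hH⟩ := exists_isOpen_homotopic_of_isClosed hP (f.restrict W) (g.restrict W)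
    (hZ.preimage continuous_subtype_val) (h.comp (Homotopic.refl toA))
  have hUW : Subtype.val '' U ⊆ W := by simp
  let toU : C((Subtype.val '' U : Set Y), U) :=
    ⟨fun y => ⟨⟨y, hUW y.2⟩, by obtain ⟨_, u, hu, rfl⟩ := y; exact hu⟩, by fun_prop⟩
  exact ⟨_, hW.isOpenMap_subtype_val U hU, fun y hy => ⟨⟨y, hy.1⟩, hZU hy.2, rfl⟩,
    hH.comp (Homotopic.refl toU)⟩

end Extension

section Stratification

variable {X Y Z T T' : Type*} [TopologicalSpace X] [TopologicalSpace Y] [TopologicalSpace Z]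

/-- A stratification of `Y`, encoded by the rank `r` and the type `τ` of its points: near each
point the rank does not drop, and the type is constant where the rank does not grow. So each set
`{r = c}` is locally closed and the sets `{r = c, τ = t}` are open in it. -/
def IsStratification (r : Y → ℕ) (τ : Y → T) : Prop :=
  ∀ y, ∀ᶠ z in 𝓝 y, r y < r z ∨ r z = r y ∧ τ z = τ y

namespace IsStratification

variable {r r' : Y → ℕ} {τ : Y → T} {τ' : Y → T'}

theorem comp (h : IsStratification r τ) {f : Z → Y} (hf : Continuous f) :
    IsStratification (fun z => r (f z)) (fun z => τ (f z)) :=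
  fun z => (hf.tendsto z).eventually (h (f z))

theorem add (h : IsStratification r τ) (h' : IsStratification r' τ') :
    IsStratification (fun y => r y + r' y) (fun y => (τ y, τ' y)) := by
  intro y
  filter_upwards [h y, h' y] with z hz hz'
  rcases hz with hz | ⟨hz, hτ⟩ <;> rcases hz' with hz' | ⟨hz', hτ'⟩
  · exact .inl (by omega)
  · exact .inl (by omega)
  · exact .inl (by omega)
  · exact .inr ⟨by omega, Prod.ext hτ hτ'⟩

theorem isOpen_le (h : IsStratification r τ) (c : ℕ) : IsOpen {y | c ≤ r y} :=
  isOpen_iff_mem_nhds.2 fun y (hy : c ≤ r y) => (h y).mono fun z hz => by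
    omega

theorem isLocallyClosed_eq (h : IsStratification r τ) (c : ℕ) : IsLocallyClosed {y | r y = c} :=
  ⟨{y | c ≤ r y}, {y | c + 1 ≤ r y}ᶜ, h.isOpen_le c, (h.isOpen_le (c + 1)).isClosed_compl, by
    ext y
    simp only [mem_ofPred_eq, mem_inter_iff, mem_compl_iff]
    omega⟩

theorem isLocallyConstant (h : IsStratification r τ) (c : ℕ) :
    IsLocallyConstant fun y : {y | r y = c} => τ y :=
  (IsLocallyConstant.iff_eventually_eq _).2 fun y => by
    filter_upwards [continuousAt_subtype_val.eventually (h y)] with z hz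
    exact (hz.resolve_left (by rw [z.2, y.2]; exact lt_irrefl c)).2

end IsStratification

open Classical in
theorem isStratification_of_isClosed {A : Set Y} (hA : IsClosed A) :
    IsStratification (fun y => if y ∈ A then 0 else 1) (· ∈ A) := by
  intro y
  by_cases hy : y ∈ A
  · refine .of_forall fun z => ?_
    by_cases hz : z ∈ A <;> simp [hy, hz]
  · filter_upwards [hA.isOpen_compl.mem_nhds hy] with z (hz : z ∉ A)
    simp [hy, hz]

theorem homotopic_of_isLocallyConstant {τ : Y → T} (hτ : IsLocallyConstant τ) {f g : C(Y, X)}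
    (h : ∀ t, (f.restrict (τ ⁻¹' {t})).Homotopic (g.restrict (τ ⁻¹' {t}))) : f.Homotopic g := by
  let H (t : T) := (h t).some
  let S (t : T) : Set (I × Y) := {q | τ q.2 = t}
  let φ (t : T) : C(S t, X) :=
    (H t).toContinuousMap.comp ⟨fun q => (q.1.1, ⟨q.1.2, q.2⟩), by fun_prop⟩
  have hφ (t t' : T) (q : I × Y) (hq : q ∈ S t) (hq' : q ∈ S t') : φ t ⟨q, hq⟩ = φ t' ⟨q, hq'⟩ := by
    obtain rfl : t = t' := hq.symm.trans hq'
    rfl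
  have hS (q : I × Y) : ∃ t, S t ∈ 𝓝 q :=
    ⟨τ q.2, ((hτ {τ q.2}).preimage continuous_snd).mem_nhds rfl⟩
  have hval (s : I) (y : Y) : liftCover S φ hφ hS (s, y) = H (τ y) (s, ⟨y, rfl⟩) :=
    liftCover_coe (⟨(s, y), rfl⟩ : S (τ y))
  exact ⟨⟨liftCover S φ hφ hS, fun y => (hval 0 y).trans ((H (τ y)).apply_zero _),
    fun y => (hval 1 y).trans ((H (τ y)).apply_one _)⟩⟩

end Stratification

section MotionCoverOfStratification

variable {V T : Type*} [TopologicalSpace V] [TopologicalSpace.MetrizableSpace V] [AddCommGroup V]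
  [Module ℝ V] [IsTopologicalAddGroup V] [ContinuousSMul ℝ V] [FiniteDimensional ℝ V]
  {P : V → Prop}

theorem hasMotionCover_of_isStratification (hP : IsOpen {v | P v})
    {r : {v // P v} × {v // P v} → ℕ} {τ : {v // P v} × {v // P v} → T}
    (h : IsStratification r τ) {l k : ℕ} (hr : ∀ p, l ≤ r p ∧ r p < l + k)
    (hH : ∀ c t, ((fst : C({v // P v} × {v // P v}, {v // P v})).restrict
      {p | r p = c ∧ τ p = t}).Homotopic (snd.restrict {p | r p = c ∧ τ p = t})) :
    HasMotionCover {v // P v} k := by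
  have := TietzeExtension.of_tvs ℝ (E := V)
  have : TopologicalSpace.MetrizableSpace {v // P v} := IsEmbedding.subtypeVal.metrizableSpace
  have hlevel (c : ℕ) : ((fst : C({v // P v} × {v // P v}, {v // P v})).restrict
      {p | r p = c}).Homotopic (snd.restrict {p | r p = c}) :=
    homotopic_of_isLocallyConstant (h.isLocallyConstant c) fun t =>
      (hH c t).comp (Homotopic.refl
        (⟨fun p => ⟨p.1.1, p.1.2, p.2⟩, by fun_prop⟩ :
          C((fun p : {p | r p = c} => τ p) ⁻¹' {t}, {p | r p = c ∧ τ p = t})))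
  choose U hU hrU hUH using fun c => exists_isOpen_homotopic_of_isLocallyClosed hP
    fst snd (h.isLocallyClosed_eq c) (hlevel c)
  refine hasMotionCover_iff_homotopic.2
    ⟨fun i => U (l + i), fun i => hU _, eq_univ_of_forall fun p => ?_, fun i => hUH _⟩
  obtain ⟨hl, hk⟩ := hr p
  exact mem_iUnion.2 ⟨⟨r p - l, by omega⟩, hrU _ (by simp only [mem_ofPred_eq]; omega)⟩

end MotionCoverOfStratification

section OrderType

variable {ι α β : Type*} [Finite ι]

theorem ncard_range_le_of_factorsThrough {p q : ι → α} (h : p.FactorsThrough q) :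
    (range p).ncard ≤ (range q).ncard := by
  rcases isEmpty_or_nonempty ι with _ | ⟨⟨i⟩⟩
  · simp only [range_eq_empty, ncard_empty, le_refl]
  have : Nonempty α := ⟨p i⟩
  obtain ⟨f, rfl⟩ := (factorsThrough_iff p).1 h
  exact range_comp f q ▸ ncard_image_le

theorem factorsThrough_of_ncard_range_le {p q : ι → α} (h : p.FactorsThrough q)
    (hle : (range q).ncard ≤ (range p).ncard) : q.FactorsThrough p := by
  intro i j hij
  have : Nonempty α := ⟨p i⟩
  obtain ⟨f, rfl⟩ := (factorsThrough_iff p).1 h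
  have hf : InjOn f (range q) := injOn_of_ncard_image_eq
    (le_antisymm ncard_image_le (hle.trans_eq (congrArg ncard (range_comp f q))))
  exact hf (mem_range_self i) (mem_range_self j) hij

theorem isStratification_ncard_range [LinearOrder α] [TopologicalSpace α] [OrderClosedTopology α] :
    IsStratification (fun p : ι → α => (range p).ncard)
      fun p => {ij : ι × ι | p ij.1 ≤ p ij.2} := by
  intro p
  have hlt : ∀ᶠ q : ι → α in 𝓝 p, ∀ i j, p i < p j → q i < q j := by
    simp only [Filter.eventually_all]
    exact fun i j hij => ((continuous_apply i).tendsto p).eventually_lt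
      ((continuous_apply j).tendsto p) hij
  filter_upwards [hlt] with q hq
  have hpq (i j : ι) (h : q i ≤ q j) : p i ≤ p j := not_lt.1 fun h' => h.not_gt (hq j i h')
  have hfac : p.FactorsThrough q := fun i j h => (hpq i j h.le).antisymm (hpq j i h.ge)
  refine (ncard_range_le_of_factorsThrough hfac).lt_or_eq.imp id fun h => ⟨h.symm, ?_⟩
  ext ⟨i, j⟩
  refine ⟨hpq i j, fun hle : p i ≤ p j => ?_⟩
  rcases hle.lt_or_eq with hlt | heq
  · exact (hq i j hlt).le
  · exact (factorsThrough_of_ncard_range_le hfac h.ge heq).le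

end OrderType

section Configurations

/-- The space `F(E, n)` of configurations of `n` distinct ordered points in `E`; the space
`Conf m n` is `F(E, n)` for `E = EuclideanSpace ℝ (Fin m)`. -/
abbrev OrdConf (n : ℕ) (E : Type*) := {x : Fin n → E // Injective x}

/-- The space of nonzero vectors, homotopy equivalent to the unit sphere. -/
abbrev Punctured (E : Type*) [Zero E] := {v : E // v ≠ 0}

theorem isOpen_injective {ι E : Type*} [Finite ι] [TopologicalSpace E] [T2Space E] :
    IsOpen {x : ι → E | Injective x} := by
  simp only [Injective, ← not_imp_not (a := _ = _), ofPred_forall]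
  exact isOpen_iInter_of_finite fun i => isOpen_iInter_of_finite fun j =>
    isOpen_iInter_of_finite fun _ => isOpen_ne_fun (continuous_apply i) (continuous_apply j)

theorem homotopic_of_segment {A V : Type*} [TopologicalSpace A] [TopologicalSpace V]
    [AddCommGroup V] [Module ℝ V] [ContinuousAdd V] [ContinuousSMul ℝ V] {P : V → Prop}
    (f g : C(A, {v // P v})) (h : ∀ a, ∀ v ∈ segment ℝ (f a).1 (g a).1, P v) : f.Homotopic g := by
  refine ⟨⟨⟨fun q => ⟨(1 - (q.1 : ℝ)) • (f q.2).1 + (q.1 : ℝ) • (g q.2).1, h q.2 _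
    ⟨1 - q.1, q.1, sub_nonneg.2 q.1.2.2, q.1.2.1, sub_add_cancel _ _, rfl⟩⟩, by fun_prop⟩,
    fun a => Subtype.ext ?_, fun a => Subtype.ext ?_⟩⟩ <;> simp

/-- The configurations `i ↦ c i • v` on the line through `v`. -/
def lineConf {n : ℕ} (E : Type*) [TopologicalSpace E] [AddCommGroup E] [Module ℝ E]
    [ContinuousSMul ℝ E] {c : Fin n → ℝ} (hc : Injective c) : C(Punctured E, OrdConf n E) where
  toFun v := ⟨fun i => c i • v.1, (smul_left_injective ℝ v.2).comp hc⟩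
  continuous_toFun := by fun_prop

variable {n : ℕ} {A E : Type*} [TopologicalSpace A] [NormedAddCommGroup E] [InnerProductSpace ℝ E]
  {c c' : Fin n → ℝ}

theorem lineConf_homotopic_of_inner_eq_zero (hc : Injective c) (hc' : Injective c')
    (e v : C(A, Punctured E)) (hev : ∀ a, ⟪(e a).1, (v a).1⟫_ℝ = 0) :
    ((lineConf E hc).comp e).Homotopic ((lineConf E hc').comp v) := by
  refine homotopic_of_segment _ _ fun a => ?_
  rintro _ ⟨s, t, -, -, hst, rfl⟩ i j (hij : s • c i • (e a).1 + t • c' i • (v a).1 =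
    s • c j • (e a).1 + t • c' j • (v a).1)
  have he := congrArg (inner ℝ (e a).1) hij
  have hv := congrArg (inner ℝ (v a).1) hij
  simp only [inner_add_right, inner_smul_right, hev, real_inner_comm (e a).1 (v a).1, mul_zero,
    add_zero, zero_add, mul_eq_mul_left_iff, mul_eq_mul_right_iff, inner_self_eq_zero, (e a).2,
    (v a).2, or_false, hc.eq_iff, hc'.eq_iff] at he hv
  rcases he with hij | rfl
  · exact hij
  · exact hv.resolve_right fun ht => by simp [ht] at hst

theorem homotopic_lineConf_of_monotone (hc : Injective c) (x : C(A, OrdConf n E))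
    (e : C(A, Punctured E))
    (h : ∀ a i j, c i < c j → ⟪(e a).1, (x a).1 i⟫_ℝ ≤ ⟪(e a).1, (x a).1 j⟫_ℝ) :
    x.Homotopic ((lineConf E hc).comp e) := by
  refine homotopic_of_segment _ _ fun a => ?_
  rintro _ ⟨s, t, hs, ht, hst, rfl⟩
  rcases ht.eq_or_lt with rfl | ht
  · obtain rfl : s = 1 := by simpa using hst
    simpa using (x a).2
  have hlt {i j : Fin n} (hij : c i < c j) : ⟪(e a).1, s • (x a).1 i + t • c i • (e a).1⟫_ℝ <
      ⟪(e a).1, s • (x a).1 j + t • c j • (e a).1⟫_ℝ := by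
    have hpos : 0 < ⟪(e a).1, (e a).1⟫_ℝ := real_inner_self_pos.2 (e a).2
    simp only [inner_add_right, inner_smul_right]
    exact add_lt_add_of_le_of_lt (mul_le_mul_of_nonneg_left (h a i j hij) hs) (by gcongr)
  intro i j hij
  by_contra hne
  rcases (hc.ne hne).lt_or_gt with hij' | hij'
  · exact (hlt hij').ne (congrArg _ hij)
  · exact (hlt hij').ne' (congrArg _ hij)

theorem natCast_fin_injective (n : ℕ) : Injective fun i : Fin n => ((i : ℕ) : ℝ) :=
  Nat.cast_injective.comp Fin.val_injective

theorem homotopic_lineConf_of_orderType_eq (x : C(A, OrdConf n E)) (e v : C(A, Punctured E))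
    (hev : ∀ a, ⟪(e a).1, (v a).1⟫_ℝ = 0) {τ : Set (Fin n × Fin n)}
    (hτ : ∀ a, {ij : Fin n × Fin n | ⟪(e a).1, (x a).1 ij.1⟫_ℝ ≤ ⟪(e a).1, (x a).1 ij.2⟫_ℝ} = τ) :
    x.Homotopic ((lineConf E (natCast_fin_injective n)).comp v) := by
  rcases isEmpty_or_nonempty A with _ | ⟨⟨a₀⟩⟩
  · exact (Subsingleton.elim x _) ▸ Homotopic.refl _
  let p (a : A) (i : Fin n) : ℝ := ⟪(e a).1, (x a).1 i⟫_ℝ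
  let π := Tuple.sort (p a₀)
  have hc : Injective fun i => ((π.symm i : ℕ) : ℝ) :=
    (natCast_fin_injective n).comp π.symm.injective
  refine (homotopic_lineConf_of_monotone hc x e fun a i j hij => ?_).trans
    (lineConf_homotopic_of_inner_eq_zero hc _ e v hev)
  have hij' : p a₀ i ≤ p a₀ j := by
    simpa [π] using Tuple.monotone_sort (p a₀) (Nat.cast_le.1 hij.le : π.symm i ≤ π.symm j)
  exact ((Set.ext_iff.1 ((hτ a₀).trans (hτ a).symm)) (i, j)).1 hij'

/-- The heights of the points of a configuration `x` over the hyperplane orthogonal to `e x`. -/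
noncomputable def heights (e : OrdConf n E → Punctured E) (x : OrdConf n E) (i : Fin n) : ℝ :=
  ⟪(e x).1, x.1 i⟫_ℝ

theorem isStratification_heights (e : C(OrdConf n E, Punctured E)) :
    IsStratification (fun x => (range (heights e x)).ncard)
      fun x => {ij : Fin n × Fin n | heights e x ij.1 ≤ heights e x ij.2} := by
  refine isStratification_ncard_range.comp (f := heights e) ?_
  exact continuous_pi fun i => (continuous_subtype_val.comp (map_continuous e)).inner
    ((continuous_apply i).comp continuous_subtype_val)

theorem ncard_range_le (p : Fin n → ℝ) : (range p).ncard ≤ n := by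
  simpa using ncard_image_le (f := p) finite_univ

end Configurations

section UpperBounds

variable {n : ℕ} {E : Type*} [NormedAddCommGroup E] [InnerProductSpace ℝ E]

theorem exists_ne_zero_inner_eq_zero [FiniteDimensional ℝ E] (hE : 2 ≤ Module.finrank ℝ E) :
    ∃ e v : E, e ≠ 0 ∧ v ≠ 0 ∧ ⟪e, v⟫_ℝ = 0 := by
  let b := stdOrthonormalBasis ℝ E
  let i : Fin (Module.finrank ℝ E) := ⟨0, by omega⟩
  let j : Fin (Module.finrank ℝ E) := ⟨1, by omega⟩
  exact ⟨b i, b j, b.orthonormal.ne_zero i, b.orthonormal.ne_zero j,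
    b.orthonormal.inner_eq_zero (by simp [i, j])⟩

theorem isClosed_zero_mem_segment {Y : Type*} [TopologicalSpace Y] {v w : Y → E}
    (hv : Continuous v) (hw : Continuous w) : IsClosed {y | (0 : E) ∈ segment ℝ (v y) (w y)} := by
  simp only [mem_segment_iff_sameRay, sameRay_iff_norm_smul_eq, zero_sub, sub_zero]
  exact isClosed_eq (by fun_prop) (by fun_prop)

theorem inner_eq_zero_of_zero_mem_segment {u v w : E} (hv : v ≠ 0) (huv : ⟪u, v⟫_ℝ = 0)
    (h : (0 : E) ∈ segment ℝ v w) : ⟪u, w⟫_ℝ = 0 := by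
  obtain ⟨s, t, -, -, hst, h⟩ := h
  have htw : t * ⟪u, w⟫_ℝ = 0 := by
    simpa [inner_add_right, inner_smul_right, huv] using congrArg (inner ℝ u) h
  refine (mul_eq_zero.1 htw).resolve_left ?_
  rintro rfl
  simp_all

theorem exists_linearIsometry_inner_eq_zero [FiniteDimensional ℝ E]
    (hE : Even (Module.finrank ℝ E)) : ∃ J : E →ₗᵢ[ℝ] E, ∀ x, ⟪x, J x⟫_ℝ = 0 := by
  obtain ⟨k, hk⟩ := hE
  let F := EuclideanSpace ℂ (Fin k)
  have hfin : Module.finrank ℝ E = Module.finrank ℝ F := by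
    rw [← Module.finrank_mul_finrank ℝ ℂ F, finrank_euclideanSpace_fin,
      Complex.finrank_real_complex, hk, two_mul]
  let φ : E ≃ₗᵢ[ℝ] F := (stdOrthonormalBasis ℝ E).equiv (stdOrthonormalBasis ℝ F) (finCongr hfin)
  let mulI : F →ₗᵢ[ℝ] F :=
    ⟨(Complex.I • (LinearMap.id : F →ₗ[ℂ] F)).restrictScalars ℝ, fun x => by simp [norm_smul]⟩
  have hI (x : F) : ⟪x, mulI x⟫_ℝ = 0 := by
    change ⟪x, Complex.I • x⟫_ℝ = 0
    simp [F, PiLp.inner_apply, Complex.inner, mul_comm]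
  refine ⟨φ.symm.toLinearIsometry.comp (mulI.comp φ.toLinearIsometry), fun x => ?_⟩
  simpa [← φ.inner_map_map x] using hI (φ x)

theorem ncard_range_heights_pos (e : OrdConf n E → Punctured E) (hn : 1 ≤ n) (x : OrdConf n E) :
    0 < (range (heights e x)).ncard :=
  (ncard_pos).2 ⟨_, mem_range_self ⟨0, hn⟩⟩

theorem hasMotionCover_ordConf [FiniteDimensional ℝ E] (hE : 2 ≤ Module.finrank ℝ E)
    (hn : 1 ≤ n) : HasMotionCover (OrdConf n E) (2 * n - 1) := by
  obtain ⟨e₀, v₀, he, hv, hev⟩ := exists_ne_zero_inner_eq_zero hE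
  let e : C(OrdConf n E, Punctured E) := .const _ ⟨e₀, he⟩
  let v : C(OrdConf n E, Punctured E) := .const _ ⟨v₀, hv⟩
  have hS := isStratification_heights e
  refine hasMotionCover_of_isStratification isOpen_injective (l := 2)
    ((hS.comp continuous_fst).add (hS.comp continuous_snd)) (fun p => ?_) fun c t => ?_
  · have := ncard_range_heights_pos e hn p.1
    have := ncard_range_heights_pos e hn p.2
    have := ncard_range_le (heights e p.1)
    have := ncard_range_le (heights e p.2)
    omega
  · exact (homotopic_lineConf_of_orderType_eq _ (e.comp (fst.restrict _)) (v.comp (fst.restrict _))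
      (fun _ => hev) fun p => congrArg Prod.fst p.2.2).trans
      (homotopic_lineConf_of_orderType_eq _ (e.comp (snd.restrict _)) (v.comp (snd.restrict _))
        (fun _ => hev) fun p => congrArg Prod.snd p.2.2).symm

/-- The vector from the point number `i` to the point number `j` of a configuration. -/
def difference {i j : Fin n} (E : Type*) [TopologicalSpace E] [AddGroup E] [ContinuousSub E]
    (hij : i ≠ j) : C(OrdConf n E, Punctured E) where
  toFun x := ⟨x.1 j - x.1 i, sub_ne_zero.2 (x.2.ne hij.symm)⟩
  continuous_toFun := (((continuous_apply j).comp continuous_subtype_val).sub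
    ((continuous_apply i).comp continuous_subtype_val)).subtype_mk _

theorem two_le_ncard_range_heights_difference {i j : Fin n} (hij : i ≠ j) (x : OrdConf n E) :
    2 ≤ (range (heights (difference E hij) x)).ncard := by
  have hlt : heights (difference E hij) x i < heights (difference E hij) x j := by
    have := real_inner_self_pos.2 (difference E hij x).2
    simp only [heights, difference, coe_mk, inner_sub_right] at this ⊢
    linarith
  exact (one_lt_ncard).2 ⟨_, mem_range_self i, _, mem_range_self j, hlt.ne⟩

-- Two antipodal directions `v`, `w` are joined through `J v`, the others by the segment; this is
-- where antipodality has to be part of the type of the stratum.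
theorem lineConf_homotopic_of_antipodal_iff {A : Type*} [TopologicalSpace A] {J : E →ₗᵢ[ℝ] E}
    (hJ : ∀ x, ⟪x, J x⟫_ℝ = 0) {c : Fin n → ℝ} (hc : Injective c) (v w : C(A, Punctured E))
    {P : Prop} (hP : ∀ a, (0 : E) ∈ segment ℝ (v a).1 (w a).1 ↔ P) :
    ((lineConf E hc).comp v).Homotopic ((lineConf E hc).comp w) := by
  by_cases h : P
  · let Jv : C(A, Punctured E) :=
      ⟨fun a => ⟨J (v a).1, (map_ne_zero_iff J J.injective).2 (v a).2⟩, by fun_prop⟩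
    exact (lineConf_homotopic_of_inner_eq_zero hc hc v Jv fun a => hJ _).trans
      (lineConf_homotopic_of_inner_eq_zero hc hc Jv w fun a =>
        inner_eq_zero_of_zero_mem_segment (v a).2 ((real_inner_comm _ _).trans (hJ _))
          ((hP a).2 h))
  · refine (Homotopic.refl _).comp (homotopic_of_segment v w fun a u hu => ?_)
    rintro rfl
    exact h ((hP a).1 hu)

open Classical in
theorem hasMotionCover_ordConf_of_even [FiniteDimensional ℝ E] (hE : Even (Module.finrank ℝ E))
    (hn : 2 ≤ n) : HasMotionCover (OrdConf n E) (2 * n - 2) := by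
  obtain ⟨J, hJ⟩ := exists_linearIsometry_inner_eq_zero hE
  have h01 : (⟨0, by omega⟩ : Fin n) ≠ ⟨1, hn⟩ := by simp
  let e : C(OrdConf n E, Punctured E) := difference E h01
  let v : C(OrdConf n E, Punctured E) :=
    ⟨fun x => ⟨J (e x).1, (map_ne_zero_iff J J.injective).2 (e x).2⟩, by fun_prop⟩
  have hS := isStratification_heights e
  have hA : IsClosed {p : OrdConf n E × OrdConf n E | (0 : E) ∈ segment ℝ (v p.1).1 (v p.2).1} :=
    isClosed_zero_mem_segment (by fun_prop) (by fun_prop)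
  refine hasMotionCover_of_isStratification isOpen_injective (l := 4)
    (((hS.comp continuous_fst).add (hS.comp continuous_snd)).add (isStratification_of_isClosed hA))
    (fun p => ?_) fun c t => ?_
  · have h2 (x : OrdConf n E) : 2 ≤ (range (heights e x)).ncard :=
      two_le_ncard_range_heights_difference h01 x
    have := h2 p.1
    have := h2 p.2
    have := ncard_range_le (heights e p.1)
    have := ncard_range_le (heights e p.2)
    split_ifs <;> omega
  · exact ((homotopic_lineConf_of_orderType_eq _ (e.comp (fst.restrict _))
      (v.comp (fst.restrict _)) (fun _ => hJ _) fun p =>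
        congrArg (fun t => t.1.1) p.2.2).trans (lineConf_homotopic_of_antipodal_iff hJ _ _ _
      fun p => iff_of_eq (congrArg Prod.snd p.2.2))).trans
      (homotopic_lineConf_of_orderType_eq _ (e.comp (snd.restrict _)) (v.comp (snd.restrict _))
        (fun _ => hJ _) fun p => congrArg (fun t => t.1.2) p.2.2).symm

end UpperBounds

section Cochains

/-- The sequence `y, w 0, w 1, …`. -/
def seqCons {Y : Type*} (y : Y) (w : ℕ → Y) : ℕ → Y
  | 0 => y
  | n + 1 => w n

/-- The increasing enumeration of `ℕ \ {i}`. -/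
def skip (i n : ℕ) : ℕ := if n < i then n else n + 1

theorem skip_zero (n : ℕ) : skip 0 n = n + 1 := rfl

theorem skip_of_lt {i n : ℕ} (h : n < i) : skip i n = n := if_pos h

variable {Y R : Type*}

@[simp] theorem seqCons_head_tail (w : ℕ → Y) : seqCons (w 0) (fun n => w (n + 1)) = w := by
  funext n
  cases n <;> rfl

theorem dependsOn_seqCons {n : ℕ} {η : (ℕ → Y) → R} (h : DependsOn η (Iio (n + 1))) (y : Y) :
    DependsOn (fun w => η (seqCons y w)) (Iio n) := by
  intro w w' hw
  refine h fun i hi => ?_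
  cases i with
  | zero => rfl
  | succ i => exact hw i (Nat.lt_of_succ_lt_succ hi)

theorem comp_skip_succ (w : ℕ → Y) (i : ℕ) :
    (fun k => w (skip (i + 1) k)) = seqCons (w 0) fun k => w (skip i k + 1) := by
  funext k
  cases k with
  | zero => simp [skip, seqCons]
  | succ k =>
    simp only [skip, seqCons, Nat.add_lt_add_iff_right]
    split_ifs <;> rfl

variable [CommRing R]

/-- The coboundary of Alexander–Spanier cochains of `Y`. A cochain with `n` arguments is encoded as
a function `η` of infinite sequences with `DependsOn η (Iio n)`; as the coboundary depends on the
number `n` of arguments, not only on `η`, it takes `n` as a parameter. -/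
def coboundary (n : ℕ) : ((ℕ → Y) → R) →ₗ[R] ((ℕ → Y) → R) :=
  ∑ i ∈ Finset.range (n + 1), (-1 : R) ^ i • LinearMap.funLeft R R fun w k => w (skip i k)

theorem coboundary_apply (n : ℕ) (η : (ℕ → Y) → R) (w : ℕ → Y) :
    coboundary n η w = ∑ i ∈ Finset.range (n + 1), (-1) ^ i * η fun k => w (skip i k) := by
  simp [coboundary, LinearMap.sum_apply, Finset.sum_apply, LinearMap.funLeft_apply]

theorem dependsOn_coboundary {n : ℕ} {η : (ℕ → Y) → R} (h : DependsOn η (Iio n)) :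
    DependsOn (coboundary n η) (Iio (n + 1)) := by
  intro w w' hw
  simp only [coboundary_apply]
  refine Finset.sum_congr rfl fun i _ => congrArg _ (h fun j (hj : j < n) => hw _ ?_)
  simp only [skip, mem_Iio]
  split_ifs <;> omega

theorem coboundary_zero (η : (ℕ → Y) → R) (w : ℕ → Y) :
    coboundary 0 η w = η fun k => w (k + 1) := by
  simp [coboundary_apply, skip]

theorem coboundary_succ (n : ℕ) (η : (ℕ → Y) → R) (w : ℕ → Y) :
    coboundary (n + 1) η w = (η fun k => w (k + 1)) -
      coboundary n (fun u => η (seqCons (w 0) u)) fun k => w (k + 1) := by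
  rw [coboundary_apply, Finset.sum_range_succ', coboundary_apply]
  simp only [comp_skip_succ, skip_zero, pow_succ, pow_zero, mul_neg_one, neg_mul, one_mul,
    Finset.sum_neg_distrib]
  ring

theorem coboundary_succ_seqCons (n : ℕ) (η : (ℕ → Y) → R) (y : Y) (w : ℕ → Y) :
    coboundary (n + 1) η (seqCons y w) = η w - coboundary n (fun u => η (seqCons y u)) w :=
  coboundary_succ n η (seqCons y w)

theorem coboundary_coboundary (n : ℕ) (η : (ℕ → Y) → R) :
    coboundary (n + 1) (coboundary n η) = 0 := by
  induction n generalizing η with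
  | zero =>
    funext w
    simp [coboundary_succ, coboundary_zero, seqCons]
  | succ n ih =>
    funext w
    have h : (fun u => coboundary (n + 1) η (seqCons (w 0) u)) =
        η - coboundary n fun u => η (seqCons (w 0) u) :=
      funext fun u => coboundary_succ_seqCons n η (w 0) u
    rw [coboundary_succ, h, map_sub, ih]
    simp

/-- The cup product of a cochain `a` with `p + 1` arguments and a cochain `b`. -/
def cup (p : ℕ) (a b : (ℕ → Y) → R) (w : ℕ → Y) : R := a w * b fun k => w (p + k)

theorem dependsOn_cup {p q : ℕ} {a b : (ℕ → Y) → R} (ha : DependsOn a (Iio (p + 1)))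
    (hb : DependsOn b (Iio q)) (hq : 0 < q) : DependsOn (cup p a b) (Iio (p + q)) := by
  intro w w' h
  refine congrArg₂ (· * ·) (ha fun i (hi : i < p + 1) => h i ?_)
    (hb fun i (hi : i < q) => h (p + i) ?_) <;> simp only [mem_Iio] <;> omega

theorem coboundary_cup {p : ℕ} {a : (ℕ → Y) → R} (ha : DependsOn a (Iio (p + 1))) (q : ℕ)
    (b : (ℕ → Y) → R) : coboundary (p + q) (cup p a b) =
      cup (p + 1) (coboundary (p + 1) a) b + (-1 : R) ^ p • cup p a (coboundary q b) := by
  induction p generalizing a with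
  | zero =>
    funext w
    have hskip (i : ℕ) : (a fun k => w (skip (i + 1) k)) = a w :=
      ha fun j (hj : j < 1) => congrArg w (skip_of_lt (by omega))
    simp only [cup, Pi.add_apply, Pi.smul_apply, smul_eq_mul, coboundary_apply, zero_add,
      add_comm 1, Finset.sum_range_succ', hskip, Finset.sum_range_zero, skip_zero, mul_add,
      Finset.mul_sum, pow_zero, pow_one, one_mul, mul_left_comm (a w)]
    ring
  | succ p ih =>
    funext w
    have hcup : (fun u => cup (p + 1) a b (seqCons (w 0) u)) =
        cup p (fun u => a (seqCons (w 0) u)) b := by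
      funext u
      simp only [cup, add_right_comm p 1, seqCons]
    rw [add_right_comm, coboundary_succ, hcup, ih (dependsOn_seqCons ha _)]
    simp only [cup, Pi.add_apply, Pi.smul_apply, smul_eq_mul, coboundary_succ (p + 1) a,
      add_right_comm _ 1, pow_succ, seqCons_head_tail]
    ring

/-- The cup product of the cochains `z i`, each with `d + 1` arguments. -/
def cupProd {K : ℕ} (d : ℕ) (z : Fin K → (ℕ → Y) → R) (w : ℕ → Y) : R :=
  ∏ i, z i fun n => w (i * d + n)

theorem cupProd_succ {K : ℕ} (d : ℕ) (z : Fin (K + 1) → (ℕ → Y) → R) :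
    cupProd d z = cup d (z 0) (cupProd d fun i => z i.succ) := by
  funext w
  simp [cupProd, cup, Fin.prod_univ_succ, add_mul, add_comm, add_left_comm]

theorem dependsOn_cupProd {K d : ℕ} {z : Fin K → (ℕ → Y) → R}
    (hz : ∀ i, DependsOn (z i) (Iio (d + 1))) : DependsOn (cupProd d z) (Iio (K * d + 1)) := by
  induction K with
  | zero => exact fun w w' _ => rfl
  | succ K ih =>
    rw [cupProd_succ, add_mul, one_mul, add_comm (K * d)]
    exact dependsOn_cup (hz 0) (ih fun i => hz i.succ) (Nat.succ_pos _)

section Closed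

variable {S : Set (ℕ → Y)}

theorem coboundary_cupProd (hS : ∀ w ∈ S, ∀ f : ℕ → ℕ, (fun k => w (f k)) ∈ S)
    {K d : ℕ} {z : Fin K → (ℕ → Y) → R}
    (hz : ∀ i, DependsOn (z i) (Iio (d + 1)))
    (hc : ∀ i, ∀ w ∈ S, coboundary (d + 1) (z i) w = 0) {w : ℕ → Y} (hw : w ∈ S) :
    coboundary (K * d + 1) (cupProd d z) w = 0 := by
  induction K generalizing w with
  | zero => simp [cupProd, coboundary_apply, Finset.sum_range_succ]
  | succ K ih =>
    rw [cupProd_succ, show (K + 1) * d + 1 = d + (K * d + 1) by ring, coboundary_cup (hz 0)]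
    simp only [cup, Pi.add_apply, Pi.smul_apply, hc 0 w hw, zero_mul, zero_add,
      ih (fun i => hz i.succ) (fun i => hc i.succ) (hS w hw (d + ·)), mul_zero, smul_zero]

theorem exists_cupProd_sub_cupProd_eq_coboundary
    (hS : ∀ w ∈ S, ∀ f : ℕ → ℕ, (fun k => w (f k)) ∈ S)
    {K d : ℕ} {z η : Fin (K + 1) → (ℕ → Y) → R}
    (hz : ∀ i, DependsOn (z i) (Iio (d + 2))) (hη : ∀ i, DependsOn (η i) (Iio (d + 1)))
    (hc : ∀ i, ∀ w ∈ S, coboundary (d + 2) (z i) w = 0) :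
    ∃ H : (ℕ → Y) → R, DependsOn H (Iio ((K + 1) * (d + 1))) ∧ ∀ w ∈ S,
      cupProd (d + 1) z w - cupProd (d + 1) (fun i => z i - coboundary (d + 1) (η i)) w =
        coboundary ((K + 1) * (d + 1)) H w := by
  induction K with
  | zero => exact ⟨η 0, by simpa using hη 0, fun w _ => by simp [cupProd]⟩
  | succ K ih =>
    obtain ⟨H, hH, hHS⟩ := ih (fun i => hz i.succ) (fun i => hη i.succ) fun i => hc i.succ
    set Z := cupProd (d + 1) fun i : Fin (K + 1) => z i.succ
    set z₀ := z 0 - coboundary (d + 1) (η 0)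
    have hz₀ : DependsOn z₀ (Iio (d + 2)) := fun w w' h =>
      congrArg₂ (· - ·) (hz 0 h) (dependsOn_coboundary (hη 0) h)
    have hz₀S (w) (hw : w ∈ S) : coboundary (d + 2) z₀ w = 0 := by
      simp [z₀, coboundary_coboundary, hc 0 w hw]
    have hZ : DependsOn Z (Iio ((K + 1) * (d + 1) + 1)) := dependsOn_cupProd fun i => hz i.succ
    have hd : (K + 1 + 1) * (d + 1) = d + ((K + 1) * (d + 1) + 1) := by ring
    have hd' : (K + 1 + 1) * (d + 1) = d + 1 + (K + 1) * (d + 1) := by ring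
    refine ⟨cup d (η 0) Z + (-1 : R) ^ (d + 1) • cup (d + 1) z₀ H, fun w w' h => ?_, fun w hw => ?_⟩
    · have h₁ := dependsOn_cup (hη 0) hZ (Nat.succ_pos _)
      have h₂ := dependsOn_cup hz₀ hH (by positivity)
      rw [← hd] at h₁
      rw [← hd'] at h₂
      simp [h₁ h, h₂ h]
    · have htail : (fun k => w (d + 1 + k)) ∈ S := hS w hw _
      have h₁ : coboundary ((K + 1 + 1) * (d + 1)) (cup d (η 0) Z) w =
          coboundary (d + 1) (η 0) w * Z fun k => w (d + 1 + k) := by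
        rw [hd, coboundary_cup (hη 0)]
        simp [cup, Z, coboundary_cupProd hS (fun i => hz i.succ) (fun i => hc i.succ)
          (hS w hw (d + ·))]
      have h₂ : coboundary ((K + 1 + 1) * (d + 1)) (cup (d + 1) z₀ H) w = (-1) ^ (d + 1) *
          (z₀ w * coboundary ((K + 1) * (d + 1)) H fun k => w (d + 1 + k)) := by
        rw [hd', coboundary_cup hz₀]
        simp [cup, hz₀S w hw]
      rw [map_add, map_smul, Pi.add_apply, Pi.smul_apply, h₁, h₂, ← hHS _ htail, cupProd_succ _ z,
        cupProd_succ _ fun i => z i - _, smul_eq_mul, ← mul_assoc, ← mul_pow]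
      simp only [cup, mul_neg, mul_one, neg_neg, one_pow, one_mul, z₀, Z, Pi.sub_apply]
      ring

end Closed

end Cochains

section Prism

variable {Y L R : Type*} [CommRing R]

/-- The prism operator of two maps `F, G : Y → L`, a cochain homotopy between the pullbacks along
`F` and `G`: it turns a cochain `ζ` of `L` with `n + 1` arguments into the cochain of `Y` with `n`
arguments which maps `w` to `∑ i, (-1) ^ i * ζ (F w₀, …, F wᵢ, G wᵢ, …, G wₙ₋₁)`. -/
def prism (F G : Y → L) : ℕ → ((ℕ → L) → R) → (ℕ → Y) → R
  | 0, _, _ => 0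
  | n + 1, ζ, w => ζ (seqCons (F (w 0)) fun k => G (w k)) -
      prism F G n (fun l => ζ (seqCons (F (w 0)) l)) fun k => w (k + 1)

variable (F G : Y → L)

theorem prism_sub (n : ℕ) (ζ ζ' : (ℕ → L) → R) (w : ℕ → Y) :
    prism F G n (fun l => ζ l - ζ' l) w = prism F G n ζ w - prism F G n ζ' w := by
  induction n generalizing ζ ζ' w with
  | zero => simp [prism]
  | succ n ih =>
    simp only [prism, ih]
    ring

theorem dependsOn_prism {n : ℕ} {ζ : (ℕ → L) → R} (hζ : DependsOn ζ (Iio (n + 1))) :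
    DependsOn (prism F G n ζ) (Iio n) := by
  induction n generalizing ζ with
  | zero => exact fun _ _ _ => rfl
  | succ n ih =>
    intro w w' h
    simp only [prism, h 0 n.succ_pos]
    refine congrArg₂ (· - ·) (dependsOn_seqCons hζ _ fun i hi => congrArg G (h i hi))
      (ih (dependsOn_seqCons hζ _) fun i hi => h (i + 1) (Nat.succ_lt_succ hi))

theorem prism_eq_zero {n : ℕ} {ζ : (ℕ → L) → R} {w : ℕ → Y}
    (h : ∀ l : ℕ → L, (∀ k, l k ∈ range (fun k => F (w k)) ∪ range fun k => G (w k)) → ζ l = 0) :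
    prism F G n ζ w = 0 := by
  induction n generalizing ζ w with
  | zero => rfl
  | succ n ih =>
    have hF (l : ℕ → L) (hl : ∀ k, l k ∈ range (fun k => F (w k)) ∪ range fun k => G (w k)) :
        ζ (seqCons (F (w 0)) l) = 0 :=
      h _ fun k => by cases k with
        | zero => exact Or.inl ⟨0, rfl⟩
        | succ k => exact hl k
    rw [prism, hF _ fun k => Or.inr ⟨k, rfl⟩, ih fun l hl => hF l fun k => ?_, sub_zero]
    exact (hl k).imp (fun ⟨j, hj⟩ => ⟨j + 1, hj⟩) fun ⟨j, hj⟩ => ⟨j + 1, hj⟩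

theorem coboundary_comp (n : ℕ) (ζ : (ℕ → L) → R) (w : ℕ → Y) :
    coboundary n (fun u => ζ fun k => G (u k)) w = coboundary n ζ fun k => G (w k) := by
  simp only [coboundary_apply]

theorem sub_eq_coboundary_prism_add_prism_coboundary {n : ℕ} {ζ : (ℕ → L) → R}
    (hζ : DependsOn ζ (Iio (n + 1))) (w : ℕ → Y) :
    (ζ fun k => G (w k)) - (ζ fun k => F (w k)) =
      coboundary n (prism F G n ζ) w + prism F G (n + 1) (coboundary (n + 1) ζ) w := by
  induction n generalizing ζ w with
  | zero =>
    have h : (ζ fun k => F (w k)) = ζ (seqCons (F (w 0)) fun k => G (w (k + 1))) :=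
      hζ fun i (hi : i < 1) => by rw [Nat.lt_one_iff.1 hi]; rfl
    simp [prism, coboundary_zero, coboundary_succ_seqCons, h]
  | succ n ih =>
    set ζ' : (ℕ → L) → R := fun l => ζ (seqCons (F (w 0)) l)
    set w' : ℕ → Y := fun k => w (k + 1)
    have hF : (ζ fun k => F (w k)) = ζ' fun k => F (w' k) :=
      congrArg ζ (seqCons_head_tail fun k => F (w k)).symm
    have hG : coboundary n (fun u => ζ' (seqCons (G (w 0)) u)) (fun k => G (w' k)) =
        coboundary n (fun u => ζ' fun k => G (seqCons (w 0) u k)) w' := by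
      rw [← coboundary_comp]
      congr! 4 with u k
      cases k <;> rfl
    have hδ : (fun l => coboundary (n + 1 + 1) ζ (seqCons (F (w 0)) l)) =
        fun l => ζ l - coboundary (n + 1) ζ' l :=
      funext fun l => coboundary_succ_seqCons _ _ _ _
    have hP : (fun u => prism F G (n + 1) ζ (seqCons (w 0) u)) =
        (fun u => ζ' fun k => G (seqCons (w 0) u k)) - prism F G n ζ' := rfl
    have hζ' := ih (dependsOn_seqCons hζ (F (w 0))) w'
    rw [prism, coboundary_succ n (prism F G (n + 1) ζ), hP, hδ, prism_sub,
      coboundary_succ_seqCons, coboundary_succ n ζ', hG, map_sub, Pi.sub_apply, hF]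
    linear_combination hζ'

end Prism

section Labels

variable {d : ℕ}

/-- The facets of the cube `[-1, 1]^(d + 1)`: a coordinate and a sign. -/
abbrev Label (d : ℕ) := Fin (d + 1) × Bool

/-- Opposite facets of the cube. -/
def Label.Antipodal (l l' : Label d) : Prop := l.1 = l'.1 ∧ l.2 ≠ l'.2

/-- The cochain on labels which represents the fundamental class of the sphere: the oriented count
of the simplices labelled with all the positive facets. -/
def degreeCochain (d : ℕ) (l : ℕ → Label d) : ℤ :=
  Matrix.det (.of fun i : Fin (d + 1) => if (l i).2 then Pi.single (l i).1 1 else 0)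

theorem dependsOn_degreeCochain (d : ℕ) : DependsOn (degreeCochain d) (Iio (d + 1)) := by
  intro l l' h
  simp only [degreeCochain, fun i : Fin (d + 1) => h i i.2]

theorem degreeCochain_eq_zero {l : ℕ → Label d} {i j : Fin (d + 1)} (hij : i ≠ j)
    (h : l i = l j) : degreeCochain d l = 0 :=
  Matrix.det_zero_of_row_eq hij (funext fun k => by simp [h])

theorem degreeCochain_eq_one {l : ℕ → Label d} (h : ∀ n : Fin (d + 1), l n = (n, true)) :
    degreeCochain d l = 1 := by
  have h1 : (.of fun i : Fin (d + 1) => if (l i).2 then Pi.single (l i).1 1 else 0) =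
      (1 : Matrix (Fin (d + 1)) (Fin (d + 1)) ℤ) := by
    ext i j
    simp [h, Matrix.one_apply, Pi.single_apply, eq_comm]
  rw [degreeCochain, h1, Matrix.det_one]

theorem snd_eq_true_of_degreeCochain_ne_zero {l : ℕ → Label d} (h : degreeCochain d l ≠ 0)
    (n : Fin (d + 1)) : (l n).2 = true := by
  by_contra hn
  exact h (Matrix.det_eq_zero_of_row_eq_zero n fun j => by simp [hn])

theorem surjective_fst_of_degreeCochain_ne_zero {l : ℕ → Label d} (h : degreeCochain d l ≠ 0) :
    Surjective fun n : Fin (d + 1) => (l n).1 := by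
  refine Finite.injective_iff_surjective.1 fun i j hij => by_contra fun hne => ?_
  have hpos := snd_eq_true_of_degreeCochain_ne_zero h
  exact h (degreeCochain_eq_zero hne (Prod.ext hij ((hpos i).trans (hpos j).symm)))

-- Adding a column of ones to the rows of the `d + 2` labels gives a matrix with two equal rows,
-- whose expansion along that column is the coboundary.
theorem coboundary_degreeCochain {l : ℕ → Label d} (h : ∀ i j, ¬(l i).Antipodal (l j)) :
    coboundary (d + 1) (degreeCochain d) l = 0 := by
  let A : Matrix (Fin (d + 2)) (Fin (d + 2)) ℤ :=
    .of fun i => Fin.cons 1 (if (l i).2 then Pi.single (l i).1 1 else 0)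
  have hdet : A.det = 0 := by
    obtain ⟨i, j, hij, he⟩ := Fintype.exists_ne_map_eq_of_card_lt
      (fun i : Fin (d + 2) => (l i).1) (by simp)
    have hl : l i = l j := Prod.ext he (by_contra fun h' => h i j ⟨he, h'⟩)
    exact Matrix.det_zero_of_row_eq hij (funext fun k => by simp [A, hl])
  rw [coboundary_apply, Finset.sum_range, ← hdet, Matrix.det_succ_column_zero]
  refine Finset.sum_congr rfl fun i _ => ?_
  have hskip (a : Fin (d + 1)) : skip i a = (i.succAbove a : ℕ) := by
    simp only [skip, Fin.succAbove, Fin.lt_def, Fin.val_castSucc]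
    split_ifs <;> simp
  simp [A, degreeCochain, hskip, Matrix.submatrix]

theorem nonempty_filter_abs_eq_norm (v : Fin (d + 1) → ℝ) :
    (Finset.univ.filter fun j => |v j| = ‖v‖).Nonempty := by
  obtain ⟨j, hj⟩ := Finite.exists_max fun j => |v j|
  have hv : ‖v‖ ≤ |v j| := (pi_norm_le_iff_of_nonneg (abs_nonneg _)).2 hj
  exact ⟨j, by simpa using le_antisymm (norm_le_pi_norm v j) hv⟩

/-- The facet hit by the ray through `v`: the last coordinate of largest absolute value, together
with its sign. -/
noncomputable def label (v : Fin (d + 1) → ℝ) : Label d :=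
  let j := (Finset.univ.filter fun j => |v j| = ‖v‖).max' (nonempty_filter_abs_eq_norm v)
  (j, 0 < v j)

theorem abs_apply_label (v : Fin (d + 1) → ℝ) : |v (label v).1| = ‖v‖ :=
  (Finset.mem_filter.1 (Finset.max'_mem _ (nonempty_filter_abs_eq_norm v))).2

theorem le_label {v : Fin (d + 1) → ℝ} {j : Fin (d + 1)} (hj : |v j| = ‖v‖) : j ≤ (label v).1 :=
  Finset.le_max' _ _ (by simp [hj])

theorem label_snd_iff (v : Fin (d + 1) → ℝ) : (label v).2 = true ↔ 0 < v (label v).1 :=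
  decide_eq_true_iff

theorem apply_label (v : Fin (d + 1) → ℝ) :
    v (label v).1 = if (label v).2 then ‖v‖ else -‖v‖ := by
  simp only [label_snd_iff, ← abs_apply_label v]
  split_ifs with h
  · exact (abs_of_pos h).symm
  · rw [abs_of_nonpos (not_lt.1 h), neg_neg]

theorem not_antipodal_label {v w : Fin (d + 1) → ℝ} (h : dist v w < ‖v‖ + ‖w‖) :
    ¬(label v).Antipodal (label w) := by
  rintro ⟨h₁, h₂⟩
  have hvw := (dist_le_pi_dist v w (label v).1).trans_lt h
  have hv := apply_label v
  have hw := apply_label w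
  rw [← h₁] at hw
  rw [Real.dist_eq, abs_lt, hv, hw] at hvw
  have := norm_nonneg v
  have := norm_nonneg w
  cases hb : (label v).2 <;> cases hb' : (label w).2 <;>
    simp_all only [Bool.false_eq_true, if_true, if_false, ne_eq, not_true_eq_false] <;> linarith

end Labels

section Vanishing

variable {d : ℕ} {X : Type*}

/-- The Alexander–Spanier cocycle of `X` which `f` pulls back from the fundamental class of the
`d`-sphere. -/
noncomputable def degreeCocycle (f : X → Punctured (Fin (d + 1) → ℝ)) (w : ℕ → X) : ℤ :=
  degreeCochain d fun n => label (f (w n)).1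

theorem dependsOn_degreeCocycle (f : X → Punctured (Fin (d + 1) → ℝ)) :
    DependsOn (degreeCocycle f) (Iio (d + 1)) :=
  fun _ _ h => dependsOn_degreeCochain d fun i hi => by rw [h i hi]

variable [PseudoMetricSpace X]

/-- The sequences of diameter less than `ε`. -/
def smallSequences (X : Type*) [PseudoMetricSpace X] (ε : ℝ) : Set (ℕ → X) :=
  {w | ∀ i j, dist (w i) (w j) < ε}

theorem eventually_smallSequences {P : (ℕ → X) → Prop} {ε : ℝ} (hε : 0 < ε)
    (h : ∀ w ∈ smallSequences X ε, P w) : ∀ᶠ ε in 𝓝[>] 0, ∀ w ∈ smallSequences X ε, P w := by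
  filter_upwards [Ioc_mem_nhdsGT hε] with δ hδ w hw
  exact h w fun i j => (hw i j).trans_le hδ.2

theorem exists_not_antipodal_label [CompactSpace X] (f : C(X, Punctured (Fin (d + 1) → ℝ))) :
    ∃ ε > 0, ∀ x y, dist x y < ε → ¬(label (f x).1).Antipodal (label (f y).1) := by
  have hU : {p : X × X | dist (f p.1).1 (f p.2).1 < ‖(f p.1).1‖ + ‖(f p.2).1‖} ∈ uniformity X := by
    rw [← nhdsSet_diagonal_eq_uniformity]
    refine (isOpen_lt (by fun_prop) (by fun_prop)).mem_nhdsSet.2 ?_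
    rintro ⟨x, _⟩ ⟨⟩
    have := norm_pos_iff.2 (f x).2
    simpa using this
  obtain ⟨ε, hε, h⟩ := Metric.mem_uniformity_dist.1 hU
  exact ⟨ε, hε, fun x y hxy => not_antipodal_label (h hxy)⟩

theorem exists_labelling_chain {K : Set X} (hK : IsCompact K)
    {f g : C(X, Punctured (Fin (d + 1) → ℝ))} (h : (f.restrict K).Homotopic (g.restrict K)) :
    ∃ (T : ℕ) (L : ℕ → X → Label d), (∀ x ∈ K, L 0 x = label (f x).1) ∧
      (∀ x ∈ K, L T x = label (g x).1) ∧ ∃ ε > 0, ∀ x ∈ K, ∀ y ∈ K, dist x y < ε →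
        ∀ s t, s ≤ t + 1 → t ≤ s + 1 → ¬(L s x).Antipodal (L t y) := by
  classical
  obtain ⟨H⟩ := h
  have := isCompact_iff_compactSpace.1 hK
  obtain ⟨ε, hε, hH⟩ := exists_not_antipodal_label H.toContinuousMap
  obtain ⟨T, hT⟩ := exists_nat_one_div_lt hε
  let time (s : ℕ) : I := projIcc 0 1 zero_le_one (s / (T + 1 : ℝ))
  have htime (s t : ℕ) (hst : s ≤ t + 1) (hts : t ≤ s + 1) : dist (time s) (time t) < ε := by
    have hst' : (s : ℝ) ≤ t + 1 := mod_cast hst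
    have hts' : (t : ℝ) ≤ s + 1 := mod_cast hts
    calc dist (time s) (time t) ≤ dist (s / (T + 1 : ℝ)) (t / (T + 1 : ℝ)) := by
          simpa using (LipschitzWith.projIcc (zero_le_one' ℝ)).dist_le_mul _ _
      _ = |(s : ℝ) - t| / (T + 1) := by
          rw [Real.dist_eq, ← sub_div, abs_div, abs_of_pos (by positivity : (0 : ℝ) < T + 1)]
      _ ≤ 1 / (T + 1) := by gcongr; rw [abs_le]; constructor <;> linarith
      _ < ε := hT
  refine ⟨T + 1, fun s x => if hx : x ∈ K then label (H (time s, ⟨x, hx⟩)).1 else default,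
    fun x hx => ?_, fun x hx => ?_, ε, hε, fun x hx y hy hxy s t hst hts => ?_⟩
  · simp [hx, time]
  · simp [hx, time, div_self (by positivity : (T + 1 : ℝ) ≠ 0)]
  · simp only [hx, hy, dite_true]
    exact hH _ _ (max_lt (htime s t hst hts) hxy)

theorem exists_degreeCocycle_sub_eq_coboundary {K : Set X} (hK : IsCompact K)
    {f g : C(X, Punctured (Fin (d + 1) → ℝ))} (h : (f.restrict K).Homotopic (g.restrict K)) :
    ∃ η : (ℕ → X) → ℤ, DependsOn η (Iio d) ∧ ∀ᶠ ε in 𝓝[>] 0, ∀ w ∈ smallSequences X ε,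
      (∀ k, w k ∈ K) → degreeCocycle g w - degreeCocycle f w = coboundary d η w := by
  obtain ⟨T, L, hL₀, hL₁, ε, hε, hL⟩ := exists_labelling_chain hK h
  refine ⟨∑ s ∈ Finset.range T, prism (L s) (L (s + 1)) d (degreeCochain d), fun w w' hw => ?_,
    eventually_smallSequences hε fun w hw hwK => ?_⟩
  · simp only [Finset.sum_apply]
    exact Finset.sum_congr rfl fun s _ => dependsOn_prism _ _ (dependsOn_degreeCochain d) hw
  · have hstep (s : ℕ) : coboundary d (prism (L s) (L (s + 1)) d (degreeCochain d)) w =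
        (degreeCochain d fun k => L (s + 1) (w k)) - degreeCochain d fun k => L s (w k) := by
      rw [sub_eq_coboundary_prism_add_prism_coboundary (L s) (L (s + 1))
        (dependsOn_degreeCochain d), prism_eq_zero, add_zero]
      refine fun l hl => coboundary_degreeCochain fun i j => ?_
      rcases hl i with ⟨i', hi⟩ | ⟨i', hi⟩ <;> rcases hl j with ⟨j', hj⟩ | ⟨j', hj⟩ <;>
        rw [← hi, ← hj] <;>
        exact hL _ (hwK i') _ (hwK j') (hw i' j') _ _ (by omega) (by omega)
    simp only [map_sum, Finset.sum_apply, hstep,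
      Finset.sum_range_sub fun s => degreeCochain d fun k => L s (w k), degreeCocycle,
      hL₀ _ (hwK _), hL₁ _ (hwK _)]

variable [CompactSpace X]

theorem eventually_coboundary_degreeCocycle (f : C(X, Punctured (Fin (d + 1) → ℝ))) :
    ∀ᶠ ε in 𝓝[>] 0, ∀ w ∈ smallSequences X ε, coboundary (d + 1) (degreeCocycle f) w = 0 := by
  obtain ⟨ε, hε, hf⟩ := exists_not_antipodal_label f
  refine eventually_smallSequences hε fun w hw => ?_
  exact (coboundary_comp (fun x => label (f x).1) _ _ w).trans
    (coboundary_degreeCochain fun i j => hf _ _ (hw i j))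

-- As in the cup-length bound for the category: the `i`-th factor is cohomologous to a cocycle which
-- vanishes on `U i`, and a small sequence lies in one of the `U i`.
theorem exists_cupProd_degreeCocycle_eq_coboundary {K : ℕ}
    {f g : Fin (K + 1) → C(X, Punctured (Fin (d + 2) → ℝ))} {U : Fin (K + 1) → Set X}
    (hU : ∀ i, IsOpen (U i)) (hcov : ⋃ i, U i = univ)
    (h : ∀ i, ((f i).restrict (U i)).Homotopic ((g i).restrict (U i))) :
    ∃ ε > 0, ∃ H : (ℕ → X) → ℤ, DependsOn H (Iio ((K + 1) * (d + 1))) ∧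
      ∀ w ∈ smallSequences X ε,
        cupProd (d + 1) (fun i => degreeCocycle (g i) - degreeCocycle (f i)) w =
          coboundary ((K + 1) * (d + 1)) H w := by
  obtain ⟨V, hVcov, hV, hVU⟩ := exists_iUnion_eq_closure_subset hU (fun _ => toFinite _) hcov
  have hVh (i) : ((f i).restrict (closure (V i))).Homotopic ((g i).restrict (closure (V i))) :=
    (h i).comp (Homotopic.refl (ContinuousMap.inclusion (hVU i)))
  choose η hη hηV using fun i =>
    exists_degreeCocycle_sub_eq_coboundary isClosed_closure.isCompact (hVh i)
  obtain ⟨δ, hδ, hδV⟩ := lebesgue_number_lemma_of_metric isCompact_univ hV hVcov.ge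
  have hsmall : ∀ᶠ ε in 𝓝[>] 0, ∀ w ∈ smallSequences X ε, ∃ i, ∀ k, w k ∈ closure (V i) :=
    eventually_smallSequences hδ fun w hw =>
      (hδV (w 0) trivial).imp fun i hi k => subset_closure (hi (hw k 0))
  obtain ⟨ε, hηε, hfε, hgε, hVε, hε⟩ := ((Filter.eventually_all.2 hηV).and
    ((Filter.eventually_all.2 fun i => eventually_coboundary_degreeCocycle (f i)).and
    ((Filter.eventually_all.2 fun i => eventually_coboundary_degreeCocycle (g i)).and
    (hsmall.and self_mem_nhdsWithin)))).exists
  have hS : ∀ w ∈ smallSequences X ε, ∀ j : ℕ → ℕ, (fun k => w (j k)) ∈ smallSequences X ε :=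
    fun w hw j k l => hw (j k) (j l)
  obtain ⟨H, hH, hHS⟩ := exists_cupProd_sub_cupProd_eq_coboundary hS (η := η)
    (z := fun i => degreeCocycle (g i) - degreeCocycle (f i))
    (fun i w w' hw => congrArg₂ (· - ·) (dependsOn_degreeCocycle (g i) hw)
      (dependsOn_degreeCocycle (f i) hw)) hη
    fun i w hw => by simp [map_sub, hfε i w hw, hgε i w hw]
  refine ⟨ε, hε, H, hH, fun w hw => ?_⟩
  obtain ⟨i, hi⟩ := hVε w hw
  rw [← hHS w hw, sub_eq_self.2]
  refine Finset.prod_eq_zero (Finset.mem_univ i) ?_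
  exact sub_eq_zero.2 (hηε i _ (hS w hw _) fun k => hi _)

end Vanishing

section TorusCycle

variable {A : Type*} [AddCommGroup A] {D : ℕ}

/-- The vertices of the simplex of the triangulated torus `Aᴰ` which starts at `g` and moves by the
step `u` in one coordinate at a time, in the order prescribed by `ρ`. The signed sum of these
simplices is the fundamental cycle. -/
def torusSimplex (u : A) (g : Fin D → A) (ρ : Equiv.Perm (Fin D)) (n : ℕ) (a : Fin D) : A :=
  g a + if (ρ a : ℕ) < n then u else 0

-- The two simplices which share an inner face differ by a transposition.
theorem sum_sign_mul_torusSimplex_skip_eq_zero (u : A) (η : (ℕ → Fin D → A) → ℤ) {i : ℕ}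
    (hi₀ : 0 < i) (hi : i < D) (g : Fin D → A) :
    ∑ ρ : Equiv.Perm (Fin D), (ρ.sign : ℤ) * η (fun n => torusSimplex u g ρ (skip i n)) = 0 := by
  set s : Equiv.Perm (Fin D) := Equiv.swap ⟨i - 1, by omega⟩ ⟨i, hi⟩
  have hs : s.sign = -1 := Equiv.Perm.sign_swap (by simp [Fin.ext_iff]; omega)
  have hlt (a : Fin D) (n : ℕ) : (s a : ℕ) < skip i n ↔ (a : ℕ) < skip i n := by
    have hne : skip i n ≠ i := by unfold skip; split_ifs <;> omega
    simp only [s, Equiv.swap_apply_def]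
    split_ifs with h h <;> simp only [h] <;> omega
  have hface (ρ : Equiv.Perm (Fin D)) : (fun n => torusSimplex u g (s * ρ) (skip i n)) =
      fun n => torusSimplex u g ρ (skip i n) := by
    funext n a
    simp only [torusSimplex, Equiv.Perm.mul_apply, hlt]
  have hsum := Equiv.sum_comp (Equiv.mulLeft s) fun ρ : Equiv.Perm (Fin D) =>
    (ρ.sign : ℤ) * η fun n => torusSimplex u g ρ (skip i n)
  simp only [Equiv.coe_mulLeft, hface, Equiv.Perm.sign_mul, hs, Units.val_neg, neg_mul, one_mul,
    Finset.sum_neg_distrib] at hsum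
  exact self_eq_neg.1 hsum.symm

theorem torusSimplex_zero_skip (u : A) (g : Fin (D + 1) → A) (ρ : Equiv.Perm (Fin (D + 1))) {n : ℕ}
    (hn : n ≤ D) : torusSimplex u g ρ (n + 1) =
      torusSimplex u (fun a => g a + if ρ a = 0 then u else 0) ((finRotate (D + 1))⁻¹ * ρ) n := by
  funext a
  obtain ⟨b, hb⟩ := (finRotate (D + 1)).surjective (ρ a)
  simp only [torusSimplex, Equiv.Perm.mul_apply, ← hb, Equiv.Perm.inv_def,
    Equiv.symm_apply_apply]
  induction b using Fin.lastCases with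
  | last => simp [hn.not_gt]
  | cast b => simp [Fin.ext_iff]

variable [Fintype A]

theorem sum_sign_mul_torusSimplex_skip_zero (u : A) {η : (ℕ → Fin (D + 1) → A) → ℤ}
    (hη : DependsOn η (Iio (D + 1))) :
    ∑ ρ : Equiv.Perm (Fin (D + 1)), ∑ g : Fin (D + 1) → A,
        (ρ.sign : ℤ) * η (fun n => torusSimplex u g ρ (skip 0 n)) =
      (-1) ^ D * ∑ ρ : Equiv.Perm (Fin (D + 1)), ∑ g : Fin (D + 1) → A,
        (ρ.sign : ℤ) * η (fun n => torusSimplex u g ρ (skip (D + 1) n)) := by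
  set r := finRotate (D + 1)
  rw [Finset.mul_sum, ← Equiv.sum_comp (Equiv.mulLeft r⁻¹) fun ρ => (-1) ^ D * _]
  refine Finset.sum_congr rfl fun ρ _ => ?_
  rw [Finset.mul_sum, ← Equiv.sum_comp (Equiv.addRight fun a => if ρ a = 0 then u else 0)
    fun g => (-1) ^ D * _]
  refine Finset.sum_congr rfl fun g _ => ?_
  have hface : η (fun n => torusSimplex u g ρ (skip 0 n)) = η fun n =>
      torusSimplex u (fun a => g a + if ρ a = 0 then u else 0) (r⁻¹ * ρ) (skip (D + 1) n) :=
    hη fun n (hn : n < D + 1) => by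
      rw [skip_of_lt hn, skip_zero, torusSimplex_zero_skip u g ρ (Nat.le_of_lt_succ hn)]
  rw [hface, ← mul_assoc]
  congr 1
  simp [r, ← mul_assoc, ← mul_pow]

theorem sum_sign_mul_coboundary_torusSimplex (u : A) (hD : 0 < D) {η : (ℕ → Fin D → A) → ℤ}
    (hη : DependsOn η (Iio D)) :
    ∑ ρ : Equiv.Perm (Fin D), ∑ g : Fin D → A,
      (ρ.sign : ℤ) * coboundary D η (torusSimplex u g ρ) = 0 := by
  obtain ⟨D, rfl⟩ := Nat.exists_eq_succ_of_ne_zero hD.ne'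
  let face (i : ℕ) : ℤ := ∑ ρ : Equiv.Perm (Fin (D + 1)), ∑ g : Fin (D + 1) → A,
    (ρ.sign : ℤ) * η (fun n => torusSimplex u g ρ (skip i n))
  have hinner : ∑ i ∈ Finset.range D, (-1 : ℤ) ^ (i + 1) * face (i + 1) = 0 := by
    refine Finset.sum_eq_zero fun i hi => mul_eq_zero_of_right _ ?_
    simp only [face]
    rw [Finset.sum_comm]
    exact Finset.sum_eq_zero fun g _ => sum_sign_mul_torusSimplex_skip_eq_zero u η i.succ_pos
      (Nat.succ_lt_succ (Finset.mem_range.1 hi)) g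
  have houter : face 0 = (-1) ^ D * face (D + 1) := sum_sign_mul_torusSimplex_skip_zero u hη
  calc ∑ ρ : Equiv.Perm (Fin (D + 1)), ∑ g : Fin (D + 1) → A,
        (ρ.sign : ℤ) * coboundary (D + 1) η (torusSimplex u g ρ)
    _ = ∑ i ∈ Finset.range (D + 2), (-1) ^ i * face i := by
      simp only [face, coboundary_apply, Finset.mul_sum, mul_left_comm ((-1 : ℤ) ^ _)]
      rw [Finset.sum_comm (s := Finset.range (D + 2))]
      exact Finset.sum_congr rfl fun ρ _ => Finset.sum_comm
    _ = 0 := by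
      rw [Finset.sum_range_succ, Finset.sum_range_succ', hinner, houter]
      ring

end TorusCycle

section CubeMap

instance : Fact ((0 : ℝ) < 8) := ⟨by norm_num⟩

theorem exists_coe_eq_abs_eq_norm (x : AddCircle (8 : ℝ)) : ∃ t : ℝ, ↑t = x ∧ |t| = ‖x‖ := by
  obtain ⟨t, rfl⟩ := QuotientAddGroup.mk_surjective x
  refine ⟨t - round (8⁻¹ * t) * 8, ?_, (AddCircle.norm_eq 8).symm⟩
  rw [← zsmul_eq_mul, AddCircle.coe_sub, AddCircle.coe_zsmul, AddCircle.coe_period, smul_zero,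
    sub_zero]

theorem three_le_norm_coe {t : ℝ} (ht : |t - 4| ≤ 1) : 3 ≤ ‖(t : AddCircle (8 : ℝ))‖ := by
  have h4 : ‖((4 : ℝ) : AddCircle (8 : ℝ))‖ = 4 := by
    rw [(AddCircle.norm_coe_eq_abs_iff 8 (by norm_num)).2] <;> norm_num
  have hle : ‖(t : AddCircle (8 : ℝ)) - (4 : ℝ)‖ ≤ 1 :=
      (QuotientAddGroup.norm_mk_le_norm (m := t - 4)).trans ht
  have htri := norm_sub_norm_le ((4 : ℝ) : AddCircle (8 : ℝ)) t
  rw [h4, norm_sub_rev] at htri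
  linarith

/-- The part of the circle `ℝ/8ℤ` where `cubeMap` has first coordinate `1` and no other coordinate
of absolute value `1`. -/
def IsLow (x : AddCircle (8 : ℝ)) : Prop := ‖x‖ ≤ 1 ∧ ‖x - (2 : ℝ)‖ ∈ Ioo 1 3

/-- The part of the circle `ℝ/8ℤ` where `cubeMap` has second coordinate `1`. -/
def IsHigh (x : AddCircle (8 : ℝ)) : Prop := ‖x - (2 : ℝ)‖ ≤ 1

theorem IsLow.not_isHigh {x : AddCircle (8 : ℝ)} (h : IsLow x) : ¬IsHigh x := h.2.1.not_ge

theorem isLow_or_three_le_norm {x : AddCircle (8 : ℝ)} (h : ‖x - (2 : ℝ)‖ ∈ Ioo 1 3) :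
    IsLow x ∨ 3 ≤ ‖x‖ := by
  obtain ⟨t, hx, ht⟩ := exists_coe_eq_abs_eq_norm (x - (2 : ℝ))
  obtain rfl : ((t + 2 : ℝ) : AddCircle (8 : ℝ)) = x := by
    rw [AddCircle.coe_add, hx, sub_add_cancel]
  obtain ⟨h₁, h₂⟩ : 1 < |t| ∧ |t| < 3 := ht ▸ h
  rcases lt_abs.1 h₁ with h₁ | h₁
  · exact .inr (three_le_norm_coe (abs_le.2 (by constructor <;> linarith [abs_lt.1 h₂])))
  · exact .inl ⟨(QuotientAddGroup.norm_mk_le_norm (m := t + 2)).trans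
      (abs_le.2 (by constructor <;> linarith [abs_lt.1 h₂])), h⟩

/-- The function which is `1` on `[0, 1]`, `-1` on `[3, ∞)` and linear in between. -/
def ramp (r : ℝ) : ℝ := max (-1) (min 1 (2 - r))

theorem continuous_ramp : Continuous ramp := by unfold ramp; fun_prop

theorem abs_ramp_le (r : ℝ) : |ramp r| ≤ 1 :=
  abs_le.2 ⟨le_max_left _ _, max_le (by norm_num) (min_le_left _ _)⟩

theorem ramp_eq_one_iff {r : ℝ} : ramp r = 1 ↔ r ≤ 1 := by
  unfold ramp
  grind

theorem ramp_eq_neg_one_iff {r : ℝ} : ramp r = -1 ↔ 3 ≤ r := by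
  unfold ramp
  grind

theorem abs_ramp_eq_one_iff {r : ℝ} : |ramp r| = 1 ↔ r ∉ Ioo 1 3 := by
  rw [abs_eq zero_le_one, ramp_eq_one_iff, ramp_eq_neg_one_iff, mem_Ioo]
  grind

variable {d : ℕ}

/-- The coordinates of `cubeMap`. -/
noncomputable def cubeFun (z : Fin d → AddCircle (8 : ℝ)) : Fin (d + 1) → ℝ :=
  Fin.cons (ramp ‖z‖) fun l => ramp ‖z l - (2 : ℝ)‖

theorem abs_cubeFun_succ_eq_one_iff {z : Fin d → AddCircle (8 : ℝ)} {l : Fin d} :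
    |cubeFun z l.succ| = 1 ↔ ‖z l - (2 : ℝ)‖ ∉ Ioo 1 3 :=
  abs_ramp_eq_one_iff

theorem norm_cubeFun (z : Fin d → AddCircle (8 : ℝ)) : ‖cubeFun z‖ = 1 := by
  have hle : ‖cubeFun z‖ ≤ 1 := by
    refine (pi_norm_le_iff_of_nonneg zero_le_one).2 fun j => ?_
    cases j using Fin.cases <;> exact abs_ramp_le _
  obtain ⟨j, hj⟩ : ∃ j, |cubeFun z j| = 1 := by
    by_contra! h
    have hmid (l : Fin d) : ‖z l - (2 : ℝ)‖ ∈ Ioo 1 3 :=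
      not_not.1 (mt abs_cubeFun_succ_eq_one_iff.2 (h l.succ))
    have h0 : ‖z‖ ∈ Ioo 1 3 := not_not.1 (mt abs_ramp_eq_one_iff.2 (h 0))
    refine h0.1.not_ge ((pi_norm_le_iff_of_nonneg zero_le_one).2 fun l => ?_)
    exact ((isLow_or_three_le_norm (hmid l)).resolve_right
      ((norm_le_pi_norm z l).trans_lt h0.2).not_ge).1
  exact hle.antisymm (hj ▸ norm_le_pi_norm (cubeFun z) j)

/-- A map of degree one from the torus of dimension `d` to the boundary of the cube of dimension
`d + 1`. -/
noncomputable def cubeMap : C(Fin d → AddCircle (8 : ℝ), Punctured (Fin (d + 1) → ℝ)) where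
  toFun z := ⟨cubeFun z, norm_ne_zero_iff.1 (by simp [norm_cubeFun])⟩
  continuous_toFun := by
    refine Continuous.subtype_mk (continuous_pi fun j => ?_) _
    cases j using Fin.cases <;> exact continuous_ramp.comp (by fun_prop)

section Label

variable {z : Fin d → AddCircle (8 : ℝ)}

theorem cubeFun_label : cubeFun z (label (cubeFun z)).1 =
    if (label (cubeFun z)).2 then 1 else -1 := by
  rw [apply_label (cubeFun z), norm_cubeFun]

theorem le_label_cubeFun {j : Fin (d + 1)} (h : |cubeFun z j| = 1) : j ≤ (label (cubeFun z)).1 :=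
  le_label (h.trans (norm_cubeFun z).symm)

theorem succ_le_label_cubeFun {l : Fin d} (h : IsHigh (z l)) : l.succ ≤ (label (cubeFun z)).1 :=
  le_label_cubeFun (abs_cubeFun_succ_eq_one_iff.2 fun h' => h'.1.not_ge h)

theorem isLow_of_label_cubeFun (h : (label (cubeFun z)).1 = 0) (h' : (label (cubeFun z)).2 = true)
    (l : Fin d) : IsLow (z l) := by
  have hval := cubeFun_label (z := z)
  rw [h, h', if_pos rfl] at hval
  refine ⟨(norm_le_pi_norm z l).trans (ramp_eq_one_iff.1 hval), not_not.1 fun hl => ?_⟩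
  have := le_label_cubeFun (abs_cubeFun_succ_eq_one_iff.2 hl)
  simp [h] at this

theorem isHigh_of_label_cubeFun {l : Fin d} (h : (label (cubeFun z)).1 = l.succ)
    (h' : (label (cubeFun z)).2 = true) : IsHigh (z l) := by
  have hval := cubeFun_label (z := z)
  rw [h, h', if_pos rfl] at hval
  exact ramp_eq_one_iff.1 hval

theorem label_cubeFun_snd (h : ∀ l, IsLow (z l) ∨ IsHigh (z l)) :
    (label (cubeFun z)).2 = true := by
  by_contra h'
  have hval := cubeFun_label (z := z)
  rw [if_neg h'] at hval
  rcases Fin.eq_zero_or_eq_succ (label (cubeFun z)).1 with h0 | ⟨l, hl⟩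
  · rw [h0] at hval
    refine absurd (ramp_eq_neg_one_iff.1 hval)
      (lt_of_le_of_lt ?_ (by norm_num : (1 : ℝ) < 3)).not_ge
    refine (pi_norm_le_iff_of_nonneg zero_le_one).2 fun l => ((h l).resolve_right fun hl => ?_).1
    exact (Fin.succ_pos l).not_ge (h0 ▸ succ_le_label_cubeFun hl)
  · rw [hl] at hval
    have h3 : 3 ≤ ‖z l - (2 : ℝ)‖ := ramp_eq_neg_one_iff.1 hval
    rcases h l with h | h
    · exact h3.not_gt h.2.2
    · exact absurd (h3.trans h) (by norm_num)

end Label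

section StepPath

/-- The path in the torus whose `l`-th coordinate jumps from `a l` to `b l` at time `s l`. -/
def stepPath {X : Type*} (a b : Fin d → X) (s : Fin d → ℕ) (n : ℕ) (l : Fin d) : X :=
  if s l < n then b l else a l

variable {a b : Fin d → AddCircle (8 : ℝ)} {s : Fin d → ℕ} {t : ℕ}

theorem isHigh_stepPath_iff (h : ∀ l, IsLow (a l) ∧ IsHigh (b l)) {n : ℕ} {l : Fin d} :
    IsHigh (stepPath a b s n l) ↔ s l < n := by
  unfold stepPath
  split_ifs with hl
  · simp [hl, (h l).2]
  · simp [hl, (h l).1.not_isHigh]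

theorem label_stepPath_snd (h : ∀ l, IsLow (a l) ∧ IsHigh (b l)) (n : ℕ) :
    (label (cubeFun (stepPath a b s n))).2 = true := by
  refine label_cubeFun_snd fun l => ?_
  unfold stepPath
  split_ifs
  exacts [.inr (h l).2, .inl (h l).1]

theorem degreeCocycle_stepPath_eq_one (h : ∀ l, IsLow (a l) ∧ IsHigh (b l))
    (hs : ∀ l, s l = t + l) :
    degreeCocycle cubeMap (fun n => stepPath a b s (t + n)) = 1 := by
  refine degreeCochain_eq_one fun n => Prod.ext (le_antisymm ?_ ?_) (label_stepPath_snd h _)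
  · rcases Fin.eq_zero_or_eq_succ (label (cubeFun (stepPath a b s (t + n)))).1 with h0 | ⟨l, hl⟩
    · exact h0.trans_le (Fin.zero_le _)
    · have := (isHigh_stepPath_iff h).1 (isHigh_of_label_cubeFun hl (label_stepPath_snd h _))
      exact hl.trans_le (Fin.le_def.2 (by rw [Fin.val_succ]; grind))
  · cases n using Fin.cases with
    | zero => exact Fin.zero_le _
    | succ l => exact succ_le_label_cubeFun ((isHigh_stepPath_iff h).2 (by simp [hs]))

theorem isLow_and_isHigh_of_degreeCocycle_ne_zero (hab : ∀ l, ¬(IsHigh (a l) ∧ IsLow (b l)))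
    (h : degreeCocycle cubeMap (fun n => stepPath a b s (t + n)) ≠ 0) (l : Fin d) :
    IsLow (a l) ∧ IsHigh (b l) := by
  have hpos := snd_eq_true_of_degreeCochain_ne_zero h
  have hsurj := surjective_fst_of_degreeCochain_ne_zero h
  obtain ⟨n, hn⟩ := hsurj 0
  obtain ⟨n', hn'⟩ := hsurj l.succ
  have hlow : IsLow (stepPath a b s (t + n) l) := isLow_of_label_cubeFun hn (hpos n) l
  have hhigh : IsHigh (stepPath a b s (t + n') l) := isHigh_of_label_cubeFun hn' (hpos n')
  unfold stepPath at hlow hhigh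
  split_ifs at hlow hhigh
  exacts [absurd hhigh hlow.not_isHigh, absurd ⟨hhigh, hlow⟩ (hab l), ⟨hlow, hhigh⟩,
    absurd hhigh hlow.not_isHigh]

-- The labels along the path are distinct, and increase with time, so that they are `0, …, d`.
theorem eq_add_of_degreeCocycle_ne_zero (hlh : ∀ l, IsLow (a l) ∧ IsHigh (b l))
    (h : degreeCocycle cubeMap (fun n => stepPath a b s (t + n)) ≠ 0) (l : Fin d) :
    s l = t + l := by
  let ℓ (n : Fin (d + 1)) : Fin (d + 1) := (label (cubeFun (stepPath a b s (t + n)))).1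
  have hmono : Monotone ℓ := by
    intro n n' hn
    rcases Fin.eq_zero_or_eq_succ (ℓ n) with h0 | ⟨l, hl⟩
    · exact h0.trans_le (Fin.zero_le _)
    · have := (isHigh_stepPath_iff hlh).1 (isHigh_of_label_cubeFun hl (label_stepPath_snd hlh _))
      exact hl.trans_le
        (succ_le_label_cubeFun ((isHigh_stepPath_iff hlh).2 (this.trans_le (by grind))))
  have hstrict : StrictMono ℓ := hmono.strictMono_of_injective
    (Finite.injective_iff_surjective.2 (surjective_fst_of_degreeCochain_ne_zero h))
  have hid (n : Fin (d + 1)) : ℓ n = n := hstrict.apply_le.antisymm hstrict.le_apply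
  have hlt := (isHigh_stepPath_iff hlh).1
    (isHigh_of_label_cubeFun (hid l.succ) (label_stepPath_snd hlh _))
  have hle : ¬s l < t + l := fun hl =>
    (hid l.castSucc).not_gt ((Fin.castSucc_lt_succ).trans_le
      (succ_le_label_cubeFun ((isHigh_stepPath_iff hlh).2 hl)))
  rw [Fin.val_succ] at hlt
  omega

end StepPath

end CubeMap

section Evaluation

/-- A point of the circle which moves from the low part to the high part when translated by `u`. -/
def Turns (u x : AddCircle (8 : ℝ)) : Prop := IsLow x ∧ IsHigh (x + u)

theorem IsHigh.not_isLow_add {x : AddCircle (8 : ℝ)} (h : IsHigh x) {u : ℝ} (hu : u ∈ Icc 0 1) :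
    ¬IsLow (x + u) := by
  rintro ⟨hle, hlt, -⟩
  obtain ⟨t, hx, ht⟩ := exists_coe_eq_abs_eq_norm (x - (2 : ℝ))
  obtain rfl : ((t + 2 : ℝ) : AddCircle (8 : ℝ)) = x := by
    rw [AddCircle.coe_add, hx, sub_add_cancel]
  have ht' := abs_le.1 (ht.trans_le h)
  have hlt' : 1 < |t + u| := by
    rw [← AddCircle.coe_add, ← AddCircle.coe_sub, show t + 2 + u - 2 = t + u by ring] at hlt
    exact hlt.trans_le (QuotientAddGroup.norm_mk_le_norm (m := t + u))
  have htu : 1 < t + u := (lt_abs.1 hlt').resolve_right (by linarith [hu.1])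
  rw [← AddCircle.coe_add] at hle
  have := three_le_norm_coe (t := t + 2 + u) (abs_le.2 (by constructor <;> linarith [hu.2]))
  linarith

theorem turns_one_sub {u : ℝ} (hu : u ∈ Ioc 0 1) : Turns u ((1 - u : ℝ) : AddCircle (8 : ℝ)) := by
  have hnorm : ‖((1 - u : ℝ) : AddCircle (8 : ℝ)) - (2 : ℝ)‖ = 1 + u := by
    have habs : |1 - u - 2| = 1 + u := by rw [abs_of_neg] <;> linarith [hu.1]
    rw [← AddCircle.coe_sub, (AddCircle.norm_coe_eq_abs_iff 8 (by norm_num)).2, habs]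
    rw [habs, Nat.abs_ofNat]
    linarith [hu.2]
  refine ⟨⟨(QuotientAddGroup.norm_mk_le_norm (m := 1 - u)).trans
    (abs_le.2 (by constructor <;> linarith [hu.1, hu.2])), ?_⟩, ?_⟩
  · rw [hnorm]
    constructor <;> linarith [hu.1, hu.2]
  · rw [IsHigh, ← AddCircle.coe_add, ← AddCircle.coe_sub]
    exact (QuotientAddGroup.norm_mk_le_norm (m := 1 - u + u - 2)).trans (by norm_num)

theorem exists_finite_grid {ε : ℝ} (hε : 0 < ε) : ∃ A : AddSubgroup (AddCircle (8 : ℝ)), Finite A ∧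
    ∃ u ∈ A, ‖u‖ < ε ∧ (∀ x, IsHigh x → ¬IsLow (x + u)) ∧ ∃ x ∈ A, Turns u x := by
  obtain ⟨N, hN⟩ := exists_nat_one_div_lt hε
  have hpos : (0 : ℝ) < N + 1 := by positivity
  have hle : 1 / (N + 1 : ℝ) ≤ 1 := (div_le_one hpos).2 (by simp)
  have horder : addOrderOf ((1 / (N + 1 : ℝ) : ℝ) : AddCircle (8 : ℝ)) = 8 * (N + 1) := by
    rw [← AddCircle.addOrderOf_period_div (p := (8 : ℝ)) (n := 8 * (N + 1)) (by omega)]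
    congr 2
    push_cast
    field_simp
  refine ⟨AddSubgroup.zmultiples ((1 / (N + 1 : ℝ) : ℝ) : AddCircle (8 : ℝ)), ?_, _,
    AddSubgroup.mem_zmultiples _, ?_, fun x hx => hx.not_isLow_add ⟨by positivity, hle⟩,
    _, ?_, turns_one_sub ⟨by positivity, hle⟩⟩
  · exact finite_zmultiples.2 (addOrderOf_pos_iff.1 (by omega))
  · refine QuotientAddGroup.norm_mk_le_norm.trans_lt ?_
    rwa [Real.norm_of_nonneg (by positivity)]
  · refine AddSubgroup.mem_zmultiples_iff.2 ⟨N, ?_⟩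
    rw [← AddCircle.coe_zsmul]
    congr 1
    rw [zsmul_eq_mul, Int.cast_natCast]
    field_simp
    ring

variable {ι : Type*} {K d : ℕ} (pos : ι ≃ Fin K)

/-- The enumeration, block by block, of the coordinates of the product of the `d`-dimensional tori
with index in `ι`. -/
def blockIndex (d : ℕ) : ι × Fin d ≃ Fin (K * d) :=
  (pos.prodCongr (.refl _)).trans finProdFinEquiv

theorem val_blockIndex (c : ι) (l : Fin d) : (blockIndex pos d (c, l) : ℕ) = pos c * d + l := by
  simp [blockIndex, add_comm, mul_comm]

/-- The permutation of the coordinates induced by a permutation of the blocks. -/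
def blockPerm (d : ℕ) (τ : Equiv.Perm ι) : Equiv.Perm (Fin (K * d)) :=
  (blockIndex pos d).permCongr (Equiv.prodCongrLeft fun _ => τ)

@[simp] theorem blockPerm_blockIndex (τ : Equiv.Perm ι) (c : ι) (l : Fin d) :
    blockPerm pos d τ (blockIndex pos d (c, l)) = blockIndex pos d (τ c, l) := by
  simp [blockPerm, Equiv.permCongr_apply]

theorem sign_blockPerm [Fintype ι] [DecidableEq ι] (τ : Equiv.Perm ι) :
    (blockPerm pos d τ).sign = τ.sign ^ d := by
  rw [blockPerm, Equiv.Perm.sign_permCongr, Equiv.Perm.sign_prodCongrLeft]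
  simp

theorem blockPerm_injective [NeZero d] : Injective (blockPerm pos d) := by
  intro τ τ' h
  ext c
  have := blockPerm_blockIndex pos τ c (0 : Fin d)
  rw [h, blockPerm_blockIndex] at this
  exact (congrArg Prod.fst ((blockIndex pos d).injective this)).symm

/-- `torusSimplex` in the product of the tori. -/
def blockSimplex (u : AddCircle (8 : ℝ)) (g : Fin (K * d) → AddCircle (8 : ℝ))
    (ρ : Equiv.Perm (Fin (K * d))) (n : ℕ) (c : ι) (l : Fin d) : AddCircle (8 : ℝ) :=
  torusSimplex u g ρ n (blockIndex pos d (c, l))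

theorem blockSimplex_mem_smallSequences [Fintype ι] {u : AddCircle (8 : ℝ)} {ε : ℝ}
    (hε : ‖u‖ < ε) (g : Fin (K * d) → AddCircle (8 : ℝ)) (ρ : Equiv.Perm (Fin (K * d))) :
    blockSimplex pos u g ρ ∈ smallSequences (ι → Fin d → AddCircle (8 : ℝ)) ε := by
  have hε₀ := (norm_nonneg u).trans_lt hε
  intro n n'
  simp only [dist_pi_lt_iff hε₀, blockSimplex, torusSimplex]
  intro c l
  split_ifs <;> simpa

theorem sum_sign_mul_coboundary_blockSimplex [NeZero d] {A : AddSubgroup (AddCircle (8 : ℝ))}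
    [Fintype A] (u : A) {H : (ℕ → ι → Fin d → AddCircle (8 : ℝ)) → ℤ}
    (hH : DependsOn H (Iio (K * d))) (hK : 0 < K) :
    ∑ ρ : Equiv.Perm (Fin (K * d)), ∑ g : Fin (K * d) → A,
      (ρ.sign : ℤ) * coboundary (K * d) H (blockSimplex pos u (fun a => g a) ρ) = 0 := by
  let incl (a : Fin (K * d) → A) (c : ι) (l : Fin d) : AddCircle (8 : ℝ) :=
    a (blockIndex pos d (c, l))
  have hincl (g : Fin (K * d) → A) (ρ : Equiv.Perm (Fin (K * d))) :
      blockSimplex pos (u : AddCircle (8 : ℝ)) (fun a => g a) ρ =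
        fun n => incl (torusSimplex u g ρ n) := by
    funext n c l
    simp only [incl, blockSimplex, torusSimplex]
    split_ifs <;> simp
  simp only [hincl, ← coboundary_comp]
  exact sum_sign_mul_coboundary_torusSimplex u (Nat.mul_pos hK (NeZero.pos d))
    fun w w' hw => hH fun n hn => congrArg incl (hw n hn)

/-- The cocycle pulled back from the sphere by `cubeMap` on the torus with index `c`. -/
noncomputable def blockCocycle (d : ℕ) (c : ι) : (ℕ → ι → Fin d → AddCircle (8 : ℝ)) → ℤ :=
  degreeCocycle fun z => cubeMap (z c)

open scoped Classical in
theorem blockCocycle_blockSimplex {u : AddCircle (8 : ℝ)} (hu : ∀ x, IsHigh x → ¬IsLow (x + u))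
    (g : Fin (K * d) → AddCircle (8 : ℝ)) (ρ : Equiv.Perm (Fin (K * d))) (i c : ι) :
    blockCocycle d c (fun n => blockSimplex pos u g ρ (pos i * d + n)) =
      if (∀ l, Turns u (g (blockIndex pos d (c, l)))) ∧
        ∀ l, ρ (blockIndex pos d (c, l)) = blockIndex pos d (i, l) then 1 else 0 := by
  set x : Fin d → AddCircle (8 : ℝ) := fun l => g (blockIndex pos d (c, l))
  set s : Fin d → ℕ := fun l => ρ (blockIndex pos d (c, l))
  have hpath : blockCocycle d c (fun n => blockSimplex pos u g ρ (pos i * d + n)) =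
      degreeCocycle cubeMap fun n => stepPath x (fun l => x l + u) s (pos i * d + n) := by
    refine congrArg (degreeCocycle cubeMap) (funext₂ fun n l => ?_)
    simp only [blockSimplex, torusSimplex, stepPath, s]
    split_ifs <;> simp [x]
  have hs : (∀ l, ρ (blockIndex pos d (c, l)) = blockIndex pos d (i, l)) ↔
      ∀ l, s l = pos i * d + l :=
    forall_congr' fun l => by rw [Fin.ext_iff, val_blockIndex]
  simp only [hpath, hs]
  split_ifs with h
  · exact degreeCocycle_stepPath_eq_one h.1 h.2
  · by_contra h'
    have hlh := isLow_and_isHigh_of_degreeCocycle_ne_zero (fun l hl => hu _ hl.1 hl.2) h'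
    exact h ⟨hlh, eq_add_of_degreeCocycle_ne_zero hlh h'⟩

variable [Fintype ι] [NeZero d] {u : AddCircle (8 : ℝ)}
  (g : Fin (K * d) → AddCircle (8 : ℝ)) (C : Matrix ι ι ℤ)

theorem prod_sum_mul_blockCocycle_eq_zero (hu : ∀ x, IsHigh x → ¬IsLow (x + u))
    {ρ : Equiv.Perm (Fin (K * d))}
    (hρ : ρ ∉ range (blockPerm pos d)) :
    ∏ i, ∑ c, C i c * blockCocycle d c (fun n => blockSimplex pos u g ρ (pos i * d + n)) = 0 := by
  classical
  by_contra h
  have hne (i : ι) : ∃ c, ∀ l, ρ (blockIndex pos d (c, l)) = blockIndex pos d (i, l) := by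
    obtain ⟨c, -, hc⟩ := Finset.exists_ne_zero_of_sum_ne_zero
      (Finset.prod_ne_zero_iff.1 h i (Finset.mem_univ i))
    rw [blockCocycle_blockSimplex pos hu] at hc
    exact ⟨c, (by_contra fun h' => hc (by rw [if_neg h', mul_zero]) : _ ∧ _).2⟩
  choose τ hτ using hne
  have hτ_inj : Injective τ := by
    intro i j hij
    have := (hτ i 0).symm.trans (hij ▸ hτ j 0)
    exact congrArg Prod.fst ((blockIndex pos d).injective this)
  refine hρ ⟨(Equiv.ofBijective τ hτ_inj.bijective_of_finite).symm, Equiv.ext fun a => ?_⟩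
  obtain ⟨⟨c, l⟩, rfl⟩ := (blockIndex pos d).surjective a
  obtain ⟨i, rfl⟩ := hτ_inj.bijective_of_finite.2 c
  rw [hτ, blockPerm_blockIndex]
  simp

open scoped Classical in
theorem prod_sum_mul_blockCocycle_blockPerm (hu : ∀ x, IsHigh x → ¬IsLow (x + u))
    (τ : Equiv.Perm ι) :
    ∏ i, ∑ c, C i c *
        blockCocycle d c (fun n => blockSimplex pos u g (blockPerm pos d τ) (pos i * d + n)) =
      (∏ c, C (τ c) c) * if ∀ a, Turns u (g a) then 1 else 0 := by
  have hrow (c : ι) : ∑ c', C (τ c) c' * blockCocycle d c'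
      (fun n => blockSimplex pos u g (blockPerm pos d τ) (pos (τ c) * d + n)) =
      C (τ c) c * if ∀ l, Turns u (g (blockIndex pos d (c, l))) then 1 else 0 := by
    simp only [blockCocycle_blockSimplex pos hu, blockPerm_blockIndex,
      EmbeddingLike.apply_eq_iff_eq, Prod.mk.injEq, and_true, forall_const]
    rw [Fintype.sum_eq_single c fun c' hc => by simp [hc]]
    simp
  rw [← Equiv.prod_comp τ]
  simp only [hrow, Finset.prod_mul_distrib, Finset.prod_boole, Finset.mem_univ, true_imp_iff,
    ← (blockIndex pos d).forall_congr_right (q := fun a => Turns u (g a)), Prod.forall]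

variable [DecidableEq ι]

open scoped Classical in
theorem sum_sign_mul_prod_sum_mul_blockCocycle (hu : ∀ x, IsHigh x → ¬IsLow (x + u)) :
    ∑ ρ : Equiv.Perm (Fin (K * d)), (ρ.sign : ℤ) * ∏ i, ∑ c, C i c *
        blockCocycle d c (fun n => blockSimplex pos u g ρ (pos i * d + n)) =
      (∑ τ : Equiv.Perm ι, (τ.sign : ℤ) ^ d * ∏ c, C (τ c) c) *
        if ∀ a, Turns u (g a) then 1 else 0 := by
  rw [Finset.sum_mul]
  refine (Fintype.sum_of_injective (blockPerm pos d) (blockPerm_injective pos) _ _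
    (fun ρ hρ => ?_) fun τ => ?_).symm
  · rw [prod_sum_mul_blockCocycle_eq_zero pos g C hu hρ, mul_zero]
  · rw [prod_sum_mul_blockCocycle_blockPerm pos g C hu, sign_blockPerm, Units.val_pow_eq_pow_val,
      mul_assoc]

theorem sum_sign_pow_mul_prod_eq_zero {d : ℕ} [Nonempty ι]
    {f g : ι → C(ι → Fin (d + 1) → AddCircle (8 : ℝ), Punctured (Fin (d + 2) → ℝ))}
    (hC : ∀ i, degreeCocycle (g i) - degreeCocycle (f i) = ∑ c, C i c • blockCocycle (d + 1) c)
    {U : ι → Set (ι → Fin (d + 1) → AddCircle (8 : ℝ))} (hU : ∀ i, IsOpen (U i))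
    (hcov : ⋃ i, U i = univ) (h : ∀ i, ((f i).restrict (U i)).Homotopic ((g i).restrict (U i))) :
    ∑ τ : Equiv.Perm ι, (τ.sign : ℤ) ^ (d + 1) * ∏ c, C (τ c) c = 0 := by
  classical
  obtain ⟨K, hK⟩ := Nat.exists_eq_succ_of_ne_zero (Fintype.card_ne_zero (α := ι))
  let pos : ι ≃ Fin (K + 1) := Fintype.equivFinOfCardEq hK
  obtain ⟨ε, hε, H, hH, hcup⟩ := exists_cupProd_degreeCocycle_eq_coboundary
    (f := f ∘ pos.symm) (g := g ∘ pos.symm) (U := U ∘ pos.symm) (fun i => hU _)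
    ((pos.symm.surjective.iUnion_comp U).trans hcov) (fun i => h _)
  obtain ⟨A, _, u, huA, hu, hback, x, hxA, hx⟩ := exists_finite_grid hε
  have : Fintype A := Fintype.ofFinite A
  have hcob (ρ : Equiv.Perm (Fin ((K + 1) * (d + 1)))) (a : Fin ((K + 1) * (d + 1)) → A) :
      coboundary ((K + 1) * (d + 1)) H (blockSimplex pos u (fun i => a i) ρ) =
      ∏ i, ∑ c, C i c * blockCocycle (d + 1) c
        (fun n => blockSimplex pos u (fun i => a i) ρ (pos i * (d + 1) + n)) := by
    rw [← hcup _ (blockSimplex_mem_smallSequences pos hu _ ρ), cupProd, ← pos.prod_comp]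
    simp only [comp_apply, Equiv.symm_apply_apply, hC, Finset.sum_apply, Pi.smul_apply, smul_eq_mul]
  have hsum := sum_sign_mul_coboundary_blockSimplex pos ⟨u, huA⟩ hH K.succ_pos
  rw [Finset.sum_comm] at hsum
  simp only [hcob, sum_sign_mul_prod_sum_mul_blockCocycle pos _ _ hback, ← Finset.mul_sum] at hsum
  refine (mul_eq_zero.1 hsum).resolve_right (Finset.sum_pos' (fun a _ => ?_) ?_).ne'
  · split_ifs <;> simp
  · exact ⟨fun _ => ⟨x, hxA⟩, Finset.mem_univ _, by simp [hx]⟩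

end Evaluation

section LowerBound

section RadialConf

variable {A E : Type*} [TopologicalSpace A] [NormedAddCommGroup E] [NormedSpace ℝ E]

theorem ne_zero_of_mem_segment_smul_sub_smul {u v w : E} (huv : ‖u‖ = ‖v‖) (hu : u ≠ 0) {s t : ℝ}
    (hs : 0 ≤ s) (hst : s < t) (hw : w ∈ segment ℝ (t • u - s • v) u) : w ≠ 0 := by
  obtain ⟨a, b, ha, hb, hab, rfl⟩ := hw
  rintro h
  have heq : (a * t + b) • u = (a * s) • v := by rw [← sub_eq_zero, ← h]; module
  have hnorm := congrArg norm heq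
  rw [norm_smul, norm_smul, ← huv, Real.norm_of_nonneg (by nlinarith),
    Real.norm_of_nonneg (by positivity)] at hnorm
  have hcoeff := mul_right_cancel₀ (norm_ne_zero_iff.2 hu) hnorm
  have hst' := mul_nonneg ha (sub_nonneg.2 hst.le)
  obtain rfl : a = 1 := by linarith
  linarith

variable {n : ℕ} {k : Fin n → ℕ} (hk : Injective k) (v : Fin n → C(A, Punctured E))
  (hv : ∀ j a, ‖(v j a).1‖ = 1)

/-- The family of configurations whose `j`-th point lies in the direction `v j` at distance `k j`
from the origin. -/
def radialConf : C(A, OrdConf n E) where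
  toFun a := ⟨fun j => (k j : ℝ) • (v j a).1, fun i j hij => hk <| by
    simpa [norm_smul, hv] using congrArg norm hij⟩

variable {i j : Fin n} (hij : i ≠ j)

theorem difference_radialConf_homotopic_of_lt (h : k i < k j) :
    ((difference E hij).comp (radialConf hk v hv)).Homotopic (v j) :=
  homotopic_of_segment _ _ fun a _ hw => ne_zero_of_mem_segment_smul_sub_smul
    ((hv j a).trans (hv i a).symm) (v j a).2 (Nat.cast_nonneg _) (Nat.cast_lt.2 h) hw

theorem difference_radialConf_homotopic_of_gt (h : k j < k i) {w : C(A, Punctured E)}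
    (hw : ∀ a, (w a).1 = -(v i a).1) :
    ((difference E hij).comp (radialConf hk v hv)).Homotopic w := by
  refine homotopic_of_segment _ _ fun a u hu => neg_ne_zero.1 ?_
  refine ne_zero_of_mem_segment_smul_sub_smul ((hv i a).trans (hv j a).symm) (v i a).2
    (Nat.cast_nonneg _) (Nat.cast_lt.2 h) ?_
  obtain ⟨s, t, hs, ht, hst, rfl⟩ := hu
  refine ⟨s, t, hs, ht, hst, ?_⟩
  rw [hw]
  change _ = -(s • ((k j : ℝ) • (v j a).1 - (k i : ℝ) • (v i a).1) + _)
  module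

end RadialConf

theorem degreeCocycle_const {X : Type*} {d : ℕ} (v : Punctured (Fin (d + 2) → ℝ)) :
    degreeCocycle (const X v) = 0 :=
  funext fun _ => degreeCochain_eq_zero (i := 0) (j := 1) (by simp) rfl

section Block

variable {ι : Type*} {d n : ℕ}

/-- The map `cubeMap` on the `c`-th torus factor. -/
noncomputable def blockMap (d : ℕ) (c : ι) :
    C(ι → Fin d → AddCircle (8 : ℝ), Punctured (Fin (d + 1) → ℝ)) :=
  cubeMap.comp ⟨fun z => z c, continuous_apply c⟩

theorem norm_blockMap (c : ι) (z : ι → Fin d → AddCircle (8 : ℝ)) : ‖(blockMap d c z).1‖ = 1 :=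
  norm_cubeFun _

theorem degreeCocycle_blockMap (c : ι) : degreeCocycle (blockMap d c) = blockCocycle d c := rfl

variable [Fintype ι] [DecidableEq ι] [Nonempty ι]

theorem not_hasMotionCover_ordConf_of_homotopic {C : Matrix ι ι ℤ}
    {x y : C(ι → Fin (d + 1) → AddCircle (8 : ℝ), OrdConf n (Fin (d + 2) → ℝ))}
    {f g : ι → C(ι → Fin (d + 1) → AddCircle (8 : ℝ), Punctured (Fin (d + 2) → ℝ))}
    {p q : ι → Fin n} (hpq : ∀ i, p i ≠ q i)
    (hf : ∀ i, ((difference _ (hpq i)).comp x).Homotopic (f i))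
    (hg : ∀ i, ((difference _ (hpq i)).comp y).Homotopic (g i))
    (hfg : ∀ i, degreeCocycle (g i) - degreeCocycle (f i) = ∑ c, C i c • blockCocycle (d + 1) c)
    (hC : ∑ τ : Equiv.Perm ι, (τ.sign : ℤ) ^ (d + 1) * ∏ c, C (τ c) c ≠ 0) :
    ¬HasMotionCover (OrdConf n (Fin (d + 2) → ℝ)) (Fintype.card ι) := by
  intro hcov
  obtain ⟨U, hU, hUcov, hxy⟩ := hcov.exists_cover_homotopic x y
  let e := Fintype.equivFin ι
  refine hC (sum_sign_pow_mul_prod_eq_zero C hfg (U := U ∘ e) (fun i => hU _)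
    ((e.surjective.iUnion_comp U).trans hUcov) fun i => ?_)
  have hrestrict {a b : C(ι → Fin (d + 1) → AddCircle (8 : ℝ), Punctured (Fin (d + 2) → ℝ))}
      (h : a.Homotopic b) : (a.restrict (U (e i))).Homotopic (b.restrict (U (e i))) :=
    h.comp (.refl ⟨_, continuous_subtype_val⟩)
  exact (hrestrict (hf i)).symm.trans
    (((Homotopic.refl (difference _ (hpq i))).comp (hxy (e i))).trans (hrestrict (hg i)))

end Block

section Matrix

variable {n : Type*} [Fintype n] [DecidableEq n]

theorem sum_sign_pow_mul_prod_eq_permanent (C : Matrix n n ℤ) {k : ℕ} (hk : Even k) :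
    ∑ τ : Equiv.Perm n, (τ.sign : ℤ) ^ k * ∏ c, C (τ c) c = C.permanent := by
  refine Fintype.sum_congr _ _ fun τ => ?_
  rw [← Units.val_pow_eq_pow_val, Int.units_pow_eq_pow_mod_two, Nat.even_iff.1 hk, pow_zero,
    Units.val_one, one_mul]

theorem sum_sign_pow_mul_prod_eq_det (C : Matrix n n ℤ) {k : ℕ} (hk : Odd k) :
    ∑ τ : Equiv.Perm n, (τ.sign : ℤ) ^ k * ∏ c, C (τ c) c = C.det := by
  rw [Matrix.det_apply']
  refine Fintype.sum_congr _ _ fun τ => ?_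
  rw [← Units.val_pow_eq_pow_val, Int.units_pow_eq_pow_mod_two, Nat.odd_iff.1 hk, pow_one]
  rfl

theorem permanent_fromBlocks_neg_one_one_ne_zero :
    (Matrix.fromBlocks (-1) 1 (-1) 1 : Matrix (n ⊕ n) (n ⊕ n) ℤ).permanent ≠ 0 := by
  let N : Matrix (n ⊕ n) (n ⊕ n) ℤ := Matrix.fromBlocks 1 1 1 1
  let w : n ⊕ n → ℤ := Sum.elim (-1) 1
  have hN (i c) : Matrix.fromBlocks (-1) 1 (-1) 1 i c = w c * N i c := by
    rcases i with i | i <;> rcases c with c | c <;> simp [N, w]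
  have hN0 (i c) : 0 ≤ N i c := by
    rcases i with i | i <;> rcases c with c | c <;>
      simp [N, Matrix.one_apply] <;> split_ifs <;> simp
  have hN1 (i) : N i i = 1 := by rcases i with i | i <;> simp [N]
  simp only [Matrix.permanent, hN, Finset.prod_mul_distrib, ← Finset.mul_sum]
  refine mul_ne_zero ?_ (Finset.sum_pos' (fun τ _ => Finset.prod_nonneg fun c _ => hN0 _ _)
    ⟨1, Finset.mem_univ _, by simp [hN1]⟩).ne'
  simp [w]

end Matrix

variable {ι : Type*} {d ν : ℕ}

/-- The family of configurations of the origin and, for each `j`, a point on the cube of radius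
`j + 1` moving by `blockMap (s j)`. -/
noncomputable def torusConf (d : ℕ) (s : Fin (ν + 1) → ι) :
    C(ι → Fin (d + 1) → AddCircle (8 : ℝ), OrdConf (ν + 2) (Fin (d + 2) → ℝ)) :=
  radialConf Fin.val_injective (Fin.cons (.const _ ⟨1, one_ne_zero⟩) (blockMap (d + 1) ∘ s))
    fun j z => by cases j using Fin.cases <;> simp [norm_blockMap]

theorem difference_torusConf_homotopic (s : Fin (ν + 1) → ι) {i : Fin (ν + 2)} {j : Fin (ν + 1)}
    (hij : i < j.succ) : ((difference _ hij.ne).comp (torusConf d s)).Homotopic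
      (blockMap (d + 1) (s j)) :=
  difference_radialConf_homotopic_of_lt _ _ _ _ hij

theorem not_hasMotionCover_ordConf_of_odd (hd : Odd (d + 2)) :
    ¬HasMotionCover (OrdConf (ν + 2) (Fin (d + 2) → ℝ)) (2 * ν + 2) := by
  let ι := Fin (ν + 1) ⊕ Fin (ν + 1)
  let row : ι → Fin (ν + 1) := Sum.elim id id
  have hpos (i : ι) : 0 < (row i).succ := Fin.succ_pos _
  rw [show 2 * ν + 2 = Fintype.card ι by simp [ι]; ring]
  refine not_hasMotionCover_ordConf_of_homotopic (C := Matrix.fromBlocks (-1) 1 (-1) 1)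
    (fun i => (hpos i).ne) (fun i => difference_torusConf_homotopic (Sum.inl : _ → ι) (hpos i))
    (fun i => difference_torusConf_homotopic (Sum.inr : _ → ι) (hpos i)) (fun i => ?_) ?_
  · rw [Fintype.sum_sum_type]
    rcases i with i | i <;>
      simp [row, degreeCocycle_blockMap, Matrix.one_apply, neg_add_eq_sub]
  · rw [sum_sign_pow_mul_prod_eq_permanent _ (by grind)]
    exact permanent_fromBlocks_neg_one_one_ne_zero

/-- The distances from the origin in `longPointConf`. -/
def longPointRadius (ν : ℕ) : Fin (ν + 2) → ℕ := Fin.cons 0 (Fin.cons (ν + 2) fun j => j + 2)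

theorem longPointRadius_injective : Injective (longPointRadius ν) := by
  simp only [longPointRadius, Fin.cons_injective_iff, mem_range, not_exists]
  refine ⟨fun j => by cases j using Fin.cases <;> simp, fun j h => by have := j.2; omega,
    fun i j h => ?_⟩
  simpa [Fin.ext_iff] using h

/-- The family of configurations of the origin, a point at rest and, for each `j`, a point on the
cube of radius `j + 2` moving by `blockMap (s j)`; the point at rest is the farthest from the
origin. -/
noncomputable def longPointConf (d : ℕ) (s : Fin ν → ι) :
    C(ι → Fin (d + 1) → AddCircle (8 : ℝ), OrdConf (ν + 2) (Fin (d + 2) → ℝ)) :=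
  radialConf longPointRadius_injective
    (Fin.cons (.const _ ⟨1, one_ne_zero⟩) (Fin.cons (.const _ ⟨1, one_ne_zero⟩)
      (blockMap (d + 1) ∘ s)))
    fun j z => by
      cases j using Fin.cases with
      | zero => simp
      | succ j => cases j using Fin.cases <;> simp [norm_blockMap]

theorem difference_zero_longPointConf_homotopic (s : Fin ν → ι) (j : Fin ν) (h : 0 ≠ j.succ.succ) :
    ((difference _ h).comp (longPointConf d s)).Homotopic (blockMap (d + 1) (s j)) :=
  difference_radialConf_homotopic_of_lt _ _ _ _ (Nat.succ_pos _)

theorem difference_zero_one_longPointConf_homotopic (s : Fin ν → ι) (h : (0 : Fin (ν + 2)) ≠ 1) :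
    ((difference _ h).comp (longPointConf d s)).Homotopic (.const _ ⟨1, one_ne_zero⟩) :=
  difference_radialConf_homotopic_of_lt _ _ _ _ (Nat.succ_pos _)

theorem difference_one_longPointConf_homotopic (s : Fin ν → ι) (j : Fin ν) (h : 1 ≠ j.succ.succ) :
    ((difference _ h).comp (longPointConf d s)).Homotopic
      (.const _ ⟨-1, neg_ne_zero.2 one_ne_zero⟩) :=
  difference_radialConf_homotopic_of_gt _ _ _ _ (Nat.add_lt_add_right j.2 2) fun _ => rfl

theorem not_hasMotionCover_ordConf_of_even (hd : Even (d + 2)) :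
    ¬HasMotionCover (OrdConf (ν + 2) (Fin (d + 2) → ℝ)) (2 * ν + 1) := by
  let ι := Fin (ν + 1) ⊕ Fin ν
  let source : ι → Fin (ν + 2) := Sum.elim (Fin.cons 0 fun _ => 1) fun _ => 0
  let row : ι → Fin (ν + 1) := Sum.elim id Fin.succ
  have hlt : ∀ i, source i < (row i).succ
    | .inl i => by cases i using Fin.cases <;> simp [source, row, Fin.lt_def]
    | .inr i => Fin.succ_pos _
  let direction : Fin (ν + 1) → Punctured (Fin (d + 2) → ℝ) :=
    Fin.cons ⟨1, one_ne_zero⟩ fun _ => ⟨-1, neg_ne_zero.2 one_ne_zero⟩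
  rw [show 2 * ν + 1 = Fintype.card ι by simp [ι]; ring]
  refine not_hasMotionCover_ordConf_of_homotopic
    (C := Matrix.fromBlocks (-1) 0 (-(1 : Matrix _ _ ℤ).submatrix Fin.succ id) 1)
    (fun i => (hlt i).ne) (fun i => difference_torusConf_homotopic (Sum.inl : _ → ι) (hlt i))
    (g := Sum.elim (fun i => .const _ (direction i)) fun i => blockMap _ (.inr i))
    (y := longPointConf d Sum.inr) (fun i => ?_) (fun i => ?_) ?_
  · rcases i with i | i
    · cases i using Fin.cases with
      | zero => exact difference_zero_one_longPointConf_homotopic _ _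
      | succ i => exact difference_one_longPointConf_homotopic _ i _
    · exact difference_zero_longPointConf_homotopic _ i _
  · rw [Fintype.sum_sum_type]
    rcases i with i | i <;>
      simp [row, degreeCocycle_blockMap, degreeCocycle_const, Matrix.one_apply, neg_add_eq_sub]
  · rw [sum_sign_pow_mul_prod_eq_det _ (by grind), Matrix.det_fromBlocks_zero₁₂]
    simp [Matrix.det_neg]

end LowerBound

section Conf

variable {m n : ℕ}

theorem hasMotionCover_conf (hm : 2 ≤ m) (hn : 1 ≤ n) : HasMotionCover (Conf m n) (2 * n - 1) :=
  hasMotionCover_ordConf (by rwa [finrank_euclideanSpace_fin]) hn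

theorem hasMotionCover_conf_of_even (hm : Even m) (hn : 2 ≤ n) :
    HasMotionCover (Conf m n) (2 * n - 2) :=
  hasMotionCover_ordConf_of_even (by rwa [finrank_euclideanSpace_fin]) hn

/-- Passes from the Euclidean norm to the sup norm of `ℝᵐ`, whose unit sphere is the boundary of a
cube. -/
def confHomeomorph (m n : ℕ) : Conf m n ≃ₜ OrdConf n (Fin m → ℝ) :=
  Homeomorph.subtype (Homeomorph.piCongrRight fun _ => PiLp.homeomorph 2 _) fun x =>
    ((PiLp.homeomorph 2 _).injective.of_comp_iff x).symm

theorem topologicalComplexity_conf_of_odd (hm : Odd m) (hm2 : 2 ≤ m) (hn : 2 ≤ n) :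
    topologicalComplexity (Conf m n) = (2 * n - 1 : ℕ) := by
  obtain ⟨d, rfl⟩ := Nat.exists_eq_add_of_le' hm2
  obtain ⟨ν, rfl⟩ := Nat.exists_eq_add_of_le' hn
  exact topologicalComplexity_eq_succ (K := 2 * ν + 2) (hasMotionCover_conf hm2 (by omega))
    fun h => not_hasMotionCover_ordConf_of_odd hm (h.of_homeomorph (confHomeomorph _ _))

theorem topologicalComplexity_conf_of_even (hm : Even m) (hm2 : 2 ≤ m) (hn : 2 ≤ n) :
    topologicalComplexity (Conf m n) = (2 * n - 2 : ℕ) := by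
  obtain ⟨d, rfl⟩ := Nat.exists_eq_add_of_le' hm2
  obtain ⟨ν, rfl⟩ := Nat.exists_eq_add_of_le' hn
  exact topologicalComplexity_eq_succ (K := 2 * ν + 1) (hasMotionCover_conf_of_even hm hn)
    fun h => not_hasMotionCover_ordConf_of_even hm (h.of_homeomorph (confHomeomorph _ _))

end Conf

/-- for all `n ≥ 2` and `m ≥ 2`, `TC(F(ℝᵐ, n)) = 2n - 1` for `m` odd and
`TC(F(ℝᵐ, n)) = 2n - 2` for `m` even. -/
theorem tc_conf (m n : ℕ) (hm : 2 ≤ m) (hn : 2 ≤ n) :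
    topologicalComplexity (Conf m n) = if Odd m then 2 * n - 1 else 2 * n - 2 := by
  split_ifs with hd
  · exact topologicalComplexity_conf_of_odd hd hm hn
  · exact topologicalComplexity_conf_of_even (Nat.not_odd_iff_even.1 hd) hm hn
end
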